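/- arXiv:2206.05611 — 2 statements merged into one kernel-verified Lean document; each statement's English description precedes it below -/
import Mathlib

section
/- Let k be a field of characteristic zero, and let C = ⟨K ∪ H⟩ be the subgroup of the group of k-algebra automorphisms of k[x1,x2,x3] generated by K and H. Then C satisfies the strong Tits alternative: every subgroup of C either contains a nonabelian free subgroup or contains a solvable subgroup of finite index. -/
open MvPolynomial

/-- A group contains a nonabelian free subgroup if it has a subgroup isomorphic to the
free group on two generators. -/
def ContainsNonabelianFree (G : Type*) [Group G] : Prop :=
  ∃ K : Subgroup G, Nonempty (↥K ≃* FreeGroup (Fin 2))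

/-- A group is virtually solvable if it contains a solvable subgroup of finite index. -/
def IsVirtuallySolvable (G : Type*) [Group G] : Prop :=
  ∃ K : Subgroup G, K.FiniteIndex ∧ IsSolvable ↥K

/-- A group satisfies the strong Tits alternative if every subgroup contains a nonabelian
free subgroup or is virtually solvable. -/
def StrongTitsAlternative (G : Type*) [Group G] : Prop :=
  ∀ H : Subgroup G, ContainsNonabelianFree ↥H ∨ IsVirtuallySolvable ↥H

/-- Membership in the subgroup `K`: automorphisms of the form
`(a x₁ + b x₂ + P₁(x₃), a' x₁ + b' x₂ + P₂(x₃), c x₃ + d)` with `ab' - a'b ≠ 0`, `c ≠ 0`. -/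
def IsK (k : Type*) [Field k]
    (f : MvPolynomial (Fin 3) k ≃ₐ[k] MvPolynomial (Fin 3) k) : Prop :=
  ∃ (a b a' b' c d : k) (P₁ P₂ : MvPolynomial (Fin 3) k),
    a * b' - a' * b ≠ 0 ∧ c ≠ 0 ∧
    P₁ ∈ supported k ({2} : Set (Fin 3)) ∧ P₂ ∈ supported k ({2} : Set (Fin 3)) ∧
    f (X 0) = C a * X 0 + C b * X 1 + P₁ ∧
    f (X 1) = C a' * X 0 + C b' * X 1 + P₂ ∧
    f (X 2) = C c * X 2 + C d

/-- Membership in the subgroup `H`: automorphisms of the form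
`(a x₁ + P₁(x₂,x₃), b x₂ + P₂(x₃), c x₃ + d)` with `a, b, c ≠ 0`. -/
def IsH (k : Type*) [Field k]
    (f : MvPolynomial (Fin 3) k ≃ₐ[k] MvPolynomial (Fin 3) k) : Prop :=
  ∃ (a b c d : k) (P₁ P₂ : MvPolynomial (Fin 3) k),
    a ≠ 0 ∧ b ≠ 0 ∧ c ≠ 0 ∧
    P₁ ∈ supported k ({1, 2} : Set (Fin 3)) ∧ P₂ ∈ supported k ({2} : Set (Fin 3)) ∧
    f (X 0) = C a * X 0 + P₁ ∧
    f (X 1) = C b * X 1 + P₂ ∧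
    f (X 2) = C c * X 2 + C d

/-- The subgroup `C = ⟨K ∪ H⟩`. -/
noncomputable def Cgroup (k : Type*) [Field k] :
    Subgroup (MvPolynomial (Fin 3) k ≃ₐ[k] MvPolynomial (Fin 3) k) :=
  Subgroup.closure {f | IsK k f ∨ IsH k f}

/-!
`C` is the amalgamated product of `K` and `H` over `K ∩ H`: the lexicographic leading monomials of
the components of an alternating product of elements of `K \ H` and `H \ K` show that it never lies
in `K ∩ H`. Hence `C` acts on the Bass–Serre tree of this product, with the conjugates of `K` and
`H` as vertex stabilizers. Consider a subgroup of `C`. If it has a hyperbolic element, then either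
some translate of its axis shares no end with the axis, and ping-pong gives a free subgroup, or a
subgroup of finite index fixes an end. In the latter case commutators fix subrays towards that end,
so they lie in an increasing union of edge stabilizers, which is solvable because the derived
lengths are bounded. If all elements are elliptic, each finitely generated subgroup fixes a vertex
by Serre's lemma; then the whole subgroup fixes a vertex, or again lies locally in edge stabilizers.

This leaves `K`, an extension of `GL₂(k)` by a solvable group, and so `SL₂` over an algebraically
closed field of characteristic zero. If some eigenvalue is not a root of unity, then a countable
subfield embeds into a normed field in which that eigenvalue does not have norm `1`, and ping-pong
on the projective line applies. If all eigenvalues are roots of unity, a trace identity for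
commutators leads to `|a - 1|² + |b - 1|² = |e - 1|²` between roots of unity and bounds their
orders, so that an irreducible group has finitely many traces and is finite.
-/

/-! ### The Tits dichotomy -/

section TitsDichotomy

variable {G Q : Type*} [Group G] [Group Q]

/-- The dichotomy which the strong Tits alternative for a group asks of each of its subgroups. -/
def TitsDichotomy (G : Type*) [Group G] : Prop :=
  ContainsNonabelianFree G ∨ IsVirtuallySolvable G

theorem containsNonabelianFree_iff :
    ContainsNonabelianFree G ↔ ∃ f : FreeGroup (Fin 2) →* G, Function.Injective f := by
  constructor
  · rintro ⟨K, ⟨e⟩⟩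
    exact ⟨K.subtype.comp e.symm.toMonoidHom, K.subtype_injective.comp e.symm.injective⟩
  · rintro ⟨f, hf⟩
    exact ⟨f.range, ⟨(MonoidHom.ofInjective hf).symm⟩⟩

theorem ContainsNonabelianFree.of_injective (f : G →* Q) (hf : Function.Injective f)
    (h : ContainsNonabelianFree G) : ContainsNonabelianFree Q := by
  obtain ⟨u, hu⟩ := containsNonabelianFree_iff.1 h
  exact containsNonabelianFree_iff.2 ⟨f.comp u, hf.comp hu⟩

theorem ContainsNonabelianFree.of_surjective (f : G →* Q) (hf : Function.Surjective f)
    (h : ContainsNonabelianFree Q) : ContainsNonabelianFree G := by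
  obtain ⟨u, hu⟩ := containsNonabelianFree_iff.1 h
  choose s hs using hf
  have hlift : f.comp (FreeGroup.lift fun i => s (u (FreeGroup.of i))) = u := by
    ext i
    simp [hs]
  refine containsNonabelianFree_iff.2 ⟨FreeGroup.lift fun i => s (u (FreeGroup.of i)), ?_⟩
  refine Function.Injective.of_comp (f := f) ?_
  rwa [← MonoidHom.coe_comp, hlift]

theorem isSolvable_of_ker (f : G →* Q) (hker : Group.IsSolvable f.ker)
    (hQ : Group.IsSolvable Q) : Group.IsSolvable G :=
  Group.isSolvable_of_ker_le_range f.ker.subtype f (by simp)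

theorem isSolvable_ker_of_injective {A B : Type*} [Group A] [Group B] {g : A →* B} {f : G →* Q}
    (u : A →* G) (hu : Function.Injective u) (h : ∀ x, g x = 1 → f (u x) = 1)
    (hf : Group.IsSolvable f.ker) : Group.IsSolvable g.ker := by
  have hmem : ∀ x, (u.comp g.ker.subtype) x ∈ f.ker := fun x => h x (g.mem_ker.1 x.2)
  exact Group.isSolvable_of_isSolvable_injective
    (f := (u.comp g.ker.subtype).codRestrict f.ker hmem)
    ((MonoidHom.injective_codRestrict _ _ hmem).2 (hu.comp g.ker.subtype_injective))

theorem IsVirtuallySolvable.of_surjective (f : G →* Q) (hf : Function.Surjective f)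
    (h : IsVirtuallySolvable G) : IsVirtuallySolvable Q := by
  obtain ⟨K, hK, hs⟩ := h
  refine ⟨K.map f, ⟨ne_zero_of_dvd_ne_zero hK.index_ne_zero (K.index_map_dvd hf)⟩, ?_⟩
  have : Group.IsSolvable K := hs
  exact Group.isSolvable_of_surjective (f.subgroupMap_surjective K)

theorem IsVirtuallySolvable.of_surjective_of_ker (f : G →* Q) (hf : Function.Surjective f)
    (hker : Group.IsSolvable f.ker) (h : IsVirtuallySolvable Q) : IsVirtuallySolvable G := by
  obtain ⟨K, hK, hs⟩ := h
  refine ⟨K.comap f, ⟨by rw [K.index_comap_of_surjective hf]; exact hK.index_ne_zero⟩, ?_⟩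
  refine isSolvable_of_ker (f.subgroupComap K) ?_ hs
  exact isSolvable_ker_of_injective (K.comap f).subtype (Subgroup.subtype_injective _)
    (fun x hx => congrArg Subtype.val hx) hker

theorem IsVirtuallySolvable.of_isSolvable [Group.IsSolvable G] : IsVirtuallySolvable G :=
  ⟨⊤, inferInstance, Group.isSolvable_of_isSolvable_injective (Subgroup.subtype_injective ⊤)⟩

theorem IsVirtuallySolvable.of_finite [Finite G] : IsVirtuallySolvable G :=
  ⟨⊥, inferInstance, (inferInstance : Group.IsSolvable (⊥ : Subgroup G))⟩

theorem TitsDichotomy.of_range (f : G →* Q) (hker : Group.IsSolvable f.ker)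
    (h : TitsDichotomy f.range) : TitsDichotomy G := by
  refine h.imp (.of_surjective _ f.rangeRestrict_surjective)
    (.of_surjective_of_ker _ f.rangeRestrict_surjective ?_)
  rwa [MonoidHom.ker_rangeRestrict]

theorem TitsDichotomy.of_mulEquiv (e : G ≃* Q) (h : TitsDichotomy G) : TitsDichotomy Q :=
  h.imp (.of_injective e.toMonoidHom e.injective) (.of_surjective e.toMonoidHom e.surjective)

theorem TitsDichotomy.of_map_conj {S : Subgroup G} (g : G)
    (h : TitsDichotomy (S.map (MulAut.conj g).toMonoidHom)) : TitsDichotomy S :=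
  h.of_mulEquiv (S.equivMapOfInjective _ (MulAut.conj g).injective).symm

theorem IsVirtuallySolvable.of_map_conj {S : Subgroup G} (g : G)
    (h : IsVirtuallySolvable (S.map (MulAut.conj g).toMonoidHom)) : IsVirtuallySolvable S :=
  h.of_surjective (S.equivMapOfInjective _ (MulAut.conj g).injective).symm.toMonoidHom
    (MulEquiv.surjective _)

theorem StrongTitsAlternative.titsDichotomy_of_le {A S : Subgroup G}
    (h : StrongTitsAlternative A) (hS : S ≤ A) : TitsDichotomy S :=
  TitsDichotomy.of_mulEquiv (Subgroup.subgroupOfEquivOfLe hS) (h (S.subgroupOf A))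

theorem StrongTitsAlternative.of_isSolvable [Group.IsSolvable G] : StrongTitsAlternative G :=
  fun _ => .inr .of_isSolvable

theorem StrongTitsAlternative.of_ker (f : G →* Q) (hker : Group.IsSolvable f.ker)
    (h : StrongTitsAlternative Q) : StrongTitsAlternative G := fun S =>
  TitsDichotomy.of_range (f.comp S.subtype)
    (isSolvable_ker_of_injective S.subtype S.subtype_injective (fun _ hx => hx) hker) (h _)

theorem StrongTitsAlternative.of_injective (f : G →* Q) (hf : Function.Injective f)
    (h : StrongTitsAlternative Q) : StrongTitsAlternative G := by
  refine h.of_ker f ?_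
  rw [(f.ker_eq_bot_iff).2 hf]
  infer_instance

theorem StrongTitsAlternative.of_surjective_of_torsion_ker (f : G →* Q)
    (hf : Function.Surjective f) (hker : ∀ x, f x = 1 → IsOfFinOrder x)
    (h : StrongTitsAlternative G) : StrongTitsAlternative Q := by
  intro S
  have hs : Function.Surjective (f.subgroupComap S) := fun y => by
    obtain ⟨x, hx⟩ := hf y
    exact ⟨⟨x, by simp [Subgroup.mem_comap, hx]⟩, Subtype.ext hx⟩
  refine (h (S.comap f)).imp (fun h => ?_) (.of_surjective _ hs)
  obtain ⟨u, hu⟩ := containsNonabelianFree_iff.1 h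
  refine containsNonabelianFree_iff.2 ⟨(f.subgroupComap S).comp u, ?_⟩
  rw [injective_iff_map_eq_one]
  intro w hw
  have hfin : IsOfFinOrder (u w : G) := hker _ (congrArg Subtype.val hw)
  rw [Submonoid.isOfFinOrder_coe, hu.isOfFinOrder_iff, isOfFinOrder_iff_pow_eq_one] at hfin
  obtain ⟨n, hn, hwn⟩ := hfin
  exact (pow_eq_one_iff_left hn.ne').1 hwn

open scoped Pointwise in
theorem ContainsNonabelianFree.of_pingPong {α : Type*} [MulAction G α]
    (a : Fin 2 → G) (X Y : Fin 2 → Set α) (hne : ∀ i, (X i).Nonempty)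
    (hXX : Pairwise (Function.onFun Disjoint X)) (hYY : Pairwise (Function.onFun Disjoint Y))
    (hXY : ∀ i j, Disjoint (X i) (Y j)) (hX : ∀ i, ∀ y ∉ Y i, a i • y ∈ X i)
    (hY : ∀ i, ∀ y ∉ X i, (a i)⁻¹ • y ∈ Y i) : ContainsNonabelianFree G := by
  -- `FreeGroup.injective_lift_of_ping_pong` wants the index type in the universe of `G`.
  have hinj := FreeGroup.injective_lift_of_ping_pong (fun i : ULift (Fin 2) => a i.down)
    (fun i => X i.down) (fun i => Y i.down) (fun i => hne _)
    (fun i j hij => hXX fun h => hij (ULift.ext _ _ h))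
    (fun i j hij => hYY fun h => hij (ULift.ext _ _ h)) (fun i j => hXY _ _)
    (by rintro i _ ⟨y, hy, rfl⟩; exact hX _ _ hy) (by rintro i _ ⟨y, hy, rfl⟩; exact hY _ _ hy)
  exact containsNonabelianFree_iff.2
    ⟨(FreeGroup.lift _).comp (FreeGroup.freeGroupCongr Equiv.ulift.symm).toMonoidHom,
      hinj.comp (MulEquiv.injective _)⟩

end TitsDichotomy

/-! ### Bounded derived length -/

section DerivedSeries

variable {G Q : Type*} [Group G] [Group Q]

theorem derivedSeries_eq_bot_of_injective {f : G →* Q} (hf : Function.Injective f) {n : ℕ}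
    (h : derivedSeries Q n = ⊥) : derivedSeries G n = ⊥ := by
  have := map_derivedSeries_le_derivedSeries f n
  rwa [h, le_bot_iff, (Subgroup.map_eq_bot_iff_of_injective _ hf)] at this

theorem derivedSeries_eq_bot_of_forall_mem {f : G →* Q} (hf : Function.Injective f)
    {S : Subgroup Q} (hS : ∀ g, f g ∈ S) {n : ℕ} (h : derivedSeries S n = ⊥) :
    derivedSeries G n = ⊥ :=
  derivedSeries_eq_bot_of_injective (f := f.codRestrict S hS)
    ((MonoidHom.injective_codRestrict _ _ hS).2 hf) h

theorem map_derivedSeries_mono {A B : Subgroup G} (h : A ≤ B) (n : ℕ) :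
    (derivedSeries A n).map A.subtype ≤ (derivedSeries B n).map B.subtype := by
  rw [← Subgroup.subtype_comp_inclusion h, ← Subgroup.map_map]
  exact Subgroup.map_mono (map_derivedSeries_le_derivedSeries (Subgroup.inclusion h) n)

open scoped commutatorElement in
theorem exists_finset_mem_map_derivedSeries (n : ℕ) {x : G} (hx : x ∈ derivedSeries G n) :
    ∃ F : Finset G, x ∈ (derivedSeries (Subgroup.closure (F : Set G)) n).map
      (Subgroup.closure (F : Set G)).subtype := by
  classical
  have mono : ∀ {F F' : Finset G} {n : ℕ}, F ⊆ F' →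
      (derivedSeries (Subgroup.closure (F : Set G)) n).map (Subgroup.subtype _) ≤
        (derivedSeries (Subgroup.closure (F' : Set G)) n).map (Subgroup.subtype _) :=
    fun h => map_derivedSeries_mono (Subgroup.closure_mono (by exact_mod_cast h)) _
  induction n generalizing x with
  | zero => exact ⟨{x}, ⟨⟨x, Subgroup.subset_closure (by simp)⟩, by simp, rfl⟩⟩
  | succ n ih =>
    rw [derivedSeries_succ, Subgroup.commutator_def] at hx
    induction hx using Subgroup.closure_induction with
    | mem x hx =>
      obtain ⟨a, ha, b, hb, rfl⟩ := hx
      obtain ⟨F, hF⟩ := ih ha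
      obtain ⟨F', hF'⟩ := ih hb
      refine ⟨F ∪ F', ?_⟩
      rw [derivedSeries_succ, Subgroup.map_commutator]
      exact Subgroup.commutator_mem_commutator (mono Finset.subset_union_left hF)
        (mono Finset.subset_union_right hF')
    | one => exact ⟨∅, one_mem _⟩
    | mul x y _ _ hx hy =>
      obtain ⟨F, hF⟩ := hx
      obtain ⟨F', hF'⟩ := hy
      exact ⟨F ∪ F', mul_mem (mono Finset.subset_union_left hF)
        (mono Finset.subset_union_right hF')⟩
    | inv x _ hx =>
      obtain ⟨F, hF⟩ := hx
      exact ⟨F, inv_mem hF⟩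

theorem derivedSeries_eq_bot_of_forall_finset {n : ℕ}
    (h : ∀ F : Finset G, derivedSeries (Subgroup.closure (F : Set G)) n = ⊥) :
    derivedSeries G n = ⊥ := by
  rw [eq_bot_iff]
  intro x hx
  obtain ⟨F, hF⟩ := exists_finset_mem_map_derivedSeries n hx
  simpa [h F] using hF

end DerivedSeries

/-! ### Distances in trees -/

section TreeDist

variable {V : Type*} {T : SimpleGraph V}

theorem exists_adj_dist_add_one_eq (hT : T.Connected) {x y : V} (hxy : x ≠ y) :
    ∃ z, T.Adj x z ∧ T.dist z y + 1 = T.dist x y := by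
  obtain ⟨p, hp⟩ := hT.exists_walk_length_eq_dist x y
  cases p with
  | nil => exact (hxy rfl).elim
  | @cons _ v _ h p =>
    refine ⟨v, h, ?_⟩
    have h1 := hT.dist_triangle (u := x) (v := v) (w := y)
    have h2 := SimpleGraph.dist_le p
    rw [SimpleGraph.dist_eq_one_iff_adj.2 h] at h1
    rw [SimpleGraph.Walk.length_cons] at hp
    omega

variable (hT : T.IsTree)

include hT

theorem tree_eq_of_adj_of_dist_add_one_eq {x y z w : V} (hz : T.Adj x z)
    (hzy : T.dist z y + 1 = T.dist x y) (hw : T.Adj x w) (hwy : T.dist w y + 1 = T.dist x y) :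
    z = w := by
  have hpath : ∀ z, T.Adj x z → T.dist z y + 1 = T.dist x y →
      ∃ p : T.Walk x y, p.IsPath ∧ p.snd = z := by
    intro z hz hzy
    obtain ⟨p, hp⟩ := hT.connected.exists_walk_length_eq_dist z y
    refine ⟨.cons hz p, SimpleGraph.Walk.isPath_of_length_eq_dist _ ?_, by simp⟩
    rw [SimpleGraph.Walk.length_cons, hp, hzy]
  obtain ⟨p, hp, rfl⟩ := hpath z hz hzy
  obtain ⟨q, hq, rfl⟩ := hpath w hw hwy
  rw [(hT.existsUnique_path x y).unique hp hq]

theorem tree_dist_eq_add_of_adj {x x' y z : V} (h : T.Adj x x')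
    (hy : T.dist x' y + 1 = T.dist x y) (hz : T.dist x' z = T.dist x z + 1) :
    T.dist y z = T.dist x y + T.dist x z := by
  obtain ⟨n, hn⟩ : ∃ n, T.dist x' y = n := ⟨_, rfl⟩
  induction n generalizing x x' with
  | zero =>
    obtain rfl := hT.connected.dist_eq_zero_iff.1 hn
    omega
  | succ n ih =>
    obtain ⟨x'', h', hy'⟩ := exists_adj_dist_add_one_eq hT.connected (x := x') (y := y)
      (by rintro rfl; simp at hn)
    have hz' : T.dist x'' z = T.dist x' z + 1 := by
      rcases hT.dist_eq_dist_add_one_of_adj z h' with e | e <;>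
        rw [T.dist_comm, T.dist_comm (u := z)] at e
      · obtain rfl := tree_eq_of_adj_of_dist_add_one_eq hT h.symm hz.symm h' e.symm
        omega
      · exact e
    have := ih h' hy' hz' (by omega)
    omega

theorem tree_dist_eq_add_of_ne {x y z w w' : V} (hw : T.Adj x w)
    (hwy : T.dist w y + 1 = T.dist x y) (hw' : T.Adj x w') (hwz : T.dist w' z + 1 = T.dist x z)
    (hne : w ≠ w') : T.dist y z = T.dist x y + T.dist x z := by
  refine tree_dist_eq_add_of_adj hT hw hwy ?_
  rcases hT.dist_eq_dist_add_one_of_adj z hw with e | e <;>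
    rw [T.dist_comm, T.dist_comm (u := z)] at e
  · exact (hne (tree_eq_of_adj_of_dist_add_one_eq hT hw e.symm hw' hwz)).elim
  · exact e

theorem tree_dist_four_point (x y z w : V) :
    T.dist x y + T.dist z w ≤
      max (T.dist x z + T.dist y w) (T.dist x w + T.dist y z) := by
  obtain ⟨n, hn⟩ : ∃ n, T.dist x y = n := ⟨_, rfl⟩
  induction n generalizing x with
  | zero =>
    obtain rfl := hT.connected.dist_eq_zero_iff.1 hn
    have := hT.connected.dist_triangle (u := z) (v := x) (w := w)
    rw [T.dist_comm (u := z) (v := x)] at this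
    omega
  | succ n ih =>
    obtain ⟨x', hx', hy⟩ := exists_adj_dist_add_one_eq hT.connected (x := x) (y := y)
      (by rintro rfl; simp at hn)
    have hx'y := ih x' (by omega)
    have htri := hT.connected.dist_triangle (u := z) (v := x) (w := w)
    have hz := hT.dist_eq_dist_add_one_of_adj z hx'
    have hw := hT.dist_eq_dist_add_one_of_adj w hx'
    rw [T.dist_comm (u := z), T.dist_comm (u := z)] at hz
    rw [T.dist_comm (u := w), T.dist_comm (u := w)] at hw
    rw [T.dist_comm (u := z) (v := x)] at htri
    rcases hz with hz | hz
    · rcases hw with hw | hw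
      · omega
      · have := tree_dist_eq_add_of_adj hT hx' hy hw
        omega
    · have := tree_dist_eq_add_of_adj hT hx' hy hz
      omega

theorem tree_dist_lt_dist_of_dist_le {x y p q : V} (hp : T.dist x p < T.dist p q)
    (hq : T.dist x q < T.dist p q) (hy : T.dist y p ≤ T.dist y x) : T.dist y x < T.dist y q := by
  have hfour := tree_dist_four_point hT p q y x
  rw [T.dist_comm (u := p) (v := y), T.dist_comm (u := q) (v := y), T.dist_comm (u := p) (v := x),
    T.dist_comm (u := q) (v := x)] at hfour
  omega

end TreeDist

/-! ### Rays in trees -/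

section Ray

variable {V : Type*} {T : SimpleGraph V}

/-- A sequence of vertices equally spaced along a geodesic ray of `T`, with `t` edges between
consecutive terms. Such sequences arise as orbits `n ↦ gⁿ • x` of a translation. -/
def IsRay (T : SimpleGraph V) (t : ℕ) (u : ℕ → V) : Prop :=
  ∀ i j, T.dist (u i) (u (i + j)) = j * t

/-- Two sequences of vertices are asymptotic if they stay at bounded distance; for rays of a tree
this says that they have the same end. -/
def Asymptotic (T : SimpleGraph V) (u v : ℕ → V) : Prop :=
  ∃ C, ∀ n, T.dist (u n) (v n) ≤ C

theorem IsRay.dist_zero {t : ℕ} {u : ℕ → V} (hu : IsRay T t u) (n : ℕ) :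
    T.dist (u 0) (u n) = n * t := by
  simpa using hu 0 n

theorem Asymptotic.refl (u : ℕ → V) : Asymptotic T u u :=
  ⟨0, by simp⟩

theorem Asymptotic.symm {u v : ℕ → V} (h : Asymptotic T u v) : Asymptotic T v u := by
  obtain ⟨C, hC⟩ := h
  exact ⟨C, fun n => by rw [T.dist_comm]; exact hC n⟩

theorem Asymptotic.trans (hT : T.Connected) {u v w : ℕ → V} (huv : Asymptotic T u v)
    (hvw : Asymptotic T v w) : Asymptotic T u w := by
  obtain ⟨C, hC⟩ := huv
  obtain ⟨D, hD⟩ := hvw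
  exact ⟨C + D, fun n => hT.dist_triangle.trans (add_le_add (hC n) (hD n))⟩

variable (hT : T.IsTree)

include hT

theorem isRay_of_dist_eq {t : ℕ} {u : ℕ → V} (h1 : ∀ n, T.dist (u n) (u (n + 1)) = t)
    (h2 : ∀ n, T.dist (u n) (u (n + 2)) = 2 * t) : IsRay T t u := by
  intro i j
  suffices H : T.dist (u i) (u (i + j)) = j * t ∧
      T.dist (u i) (u (i + j + 1)) = (j + 1) * t from H.1
  induction j with
  | zero => simp [h1]
  | succ j ih =>
    refine ⟨ih.2, ?_⟩
    have hfour := tree_dist_four_point hT (u i) (u (i + j + 1)) (u (i + j)) (u (i + j + 2))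
    have htri := hT.connected.dist_triangle (u := u i) (v := u (i + j + 1)) (w := u (i + j + 2))
    have hstep := h1 (i + j)
    rw [T.dist_comm] at hstep
    rw [ih.2, h2, ih.1, h1 (i + j + 1), T.dist_comm (u := u (i + j + 1)), h1] at hfour
    rw [ih.2, h1 (i + j + 1)] at htri
    change T.dist (u i) (u (i + j + 2)) = _
    rw [show (j + 1 + 1) * t = j * t + 2 * t by ring]
    rw [add_mul, one_mul] at hfour htri
    rcases Nat.eq_zero_or_pos t with rfl | ht <;> omega

theorem IsRay.dist_add_le_of_dist_lt {u v : ℕ → V} {t : ℕ} (hu : IsRay T t u) (hv : IsRay T t v)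
    {n : ℕ} (hn : T.dist (u 0) (v 0) < T.dist (u n) (v n)) (j : ℕ) :
    T.dist (u n) (v n) + 2 * (j * t) ≤ T.dist (u (n + j)) (v (n + j)) := by
  have hnj : (n + j) * t = n * t + j * t := add_mul n j t
  have u1 := hu.dist_zero n
  have u2 := hu n j
  have u3 := hu.dist_zero (n + j)
  have v1 := hv.dist_zero n
  have v2 := hv n j
  have v3 := hv.dist_zero (n + j)
  have htri1 := hT.connected.dist_triangle (u := u 0) (v := v 0) (w := v n)
  have htri2 := hT.connected.dist_triangle (u := u n) (v := u 0) (w := v 0)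
  have hfour1 := tree_dist_four_point hT (u n) (v n) (u 0) (u (n + j))
  have hfour2 := tree_dist_four_point hT (u n) (v n) (v 0) (v (n + j))
  have hfour3 := tree_dist_four_point hT (u (n + j)) (v n) (u n) (v (n + j))
  simp only [T.dist_comm (u := u n) (v := u 0), T.dist_comm (u := v n) (v := u 0),
    T.dist_comm (u := v n) (v := v 0), T.dist_comm (u := v n) (v := u (n + j)),
    T.dist_comm (u := u (n + j)) (v := u n), T.dist_comm (u := v n) (v := u n)] at *
  omega

theorem IsRay.exists_two_mul_le_dist_add {u v : ℕ → V} {t : ℕ} (hu : IsRay T t u)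
    (hv : IsRay T t v) (h : ¬ Asymptotic T u v) :
    ∃ D, ∀ n, 2 * (n * t) ≤ T.dist (u n) (v n) + D := by
  simp only [Asymptotic, not_exists, not_forall, not_le] at h
  obtain ⟨n, hn⟩ := h (T.dist (u 0) (v 0))
  refine ⟨2 * (n * t), fun m => ?_⟩
  rcases le_total m n with hm | hm
  · have := Nat.mul_le_mul_right t hm
    omega
  · obtain ⟨j, rfl⟩ := Nat.exists_eq_add_of_le hm
    have := hu.dist_add_le_of_dist_lt hT hv hn j
    rw [add_mul]
    omega

end Ray

/-! ### Groups acting on trees -/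

section TreeAction

variable {V : Type*} {T : SimpleGraph V} {Γ : Type*} [Group Γ] [MulAction Γ V]

theorem Asymptotic.smul (hd : ∀ (g : Γ) x y, T.dist (g • x) (g • y) = T.dist x y) {u v : ℕ → V}
    (h : Asymptotic T u v) (g : Γ) : Asymptotic T (g • u) (g • v) := by
  obtain ⟨C, hC⟩ := h
  exact ⟨C, fun n => (hd g _ _).trans_le (hC n)⟩

theorem IsRay.smul (hd : ∀ (g : Γ) x y, T.dist (g • x) (g • y) = T.dist x y) {t : ℕ} {u : ℕ → V}
    (hu : IsRay T t u) (g : Γ) : IsRay T t (g • u) :=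
  fun i j => (hd g _ _).trans (hu i j)

section Conj

variable (hd : ∀ (g : Γ) x y, T.dist (g • x) (g • y) = T.dist x y)

include hd

theorem dist_smul_smul_conj_smul (h g : Γ) (x : V) :
    T.dist (h • g • x) (h • g • h⁻¹ • x) = T.dist x (h • x) := by
  rw [hd, hd, ← hd h, smul_inv_smul, T.dist_comm]

theorem dist_smul_smul_le (hT : T.Connected) (h g : Γ) (x y : V) :
    T.dist y (h • g • x) ≤ T.dist y (h • g • h⁻¹ • x) + T.dist x (h • x) := by
  rw [← dist_smul_smul_conj_smul hd h g, T.dist_comm (u := h • g • x)]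
  exact hT.dist_triangle

theorem dist_conj_smul_le (hT : T.Connected) (h g : Γ) (x : V) :
    T.dist x (h • g • h⁻¹ • x) ≤ T.dist x (g • x) + 2 * T.dist x (h • x) := by
  have h1 := hT.dist_triangle (u := x) (v := h • x) (w := h • g • h⁻¹ • x)
  have h2 := hT.dist_triangle (u := h • x) (v := h • g • x) (w := h • g • h⁻¹ • x)
  rw [dist_smul_smul_conj_smul hd, hd h x (g • x)] at h2
  omega

theorem dist_smul_le_dist_conj_smul_add (hT : T.Connected) (h g g' : Γ) (x : V) :
    T.dist (g • x) (g' • x) ≤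
      T.dist (h • g • h⁻¹ • x) (h • g' • h⁻¹ • x) + 2 * T.dist x (h • x) := by
  have h1 := dist_smul_smul_le hd hT h g' x (h • g • x)
  have h2 := dist_smul_smul_le hd hT h g x (h • g' • h⁻¹ • x)
  rw [hd] at h1
  rw [T.dist_comm, T.dist_comm (u := h • g' • _)] at h2
  omega

end Conj

variable (hT : T.IsTree) (hd : ∀ (g : Γ) x y, T.dist (g • x) (g • y) = T.dist x y)

include hT hd

theorem containsNonabelianFree_of_pairwise_dist {a b : Γ} {x : V} {P : Fin 4 → V}
    (hP : P = ![a • x, a⁻¹ • x, b • x, b⁻¹ • x])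
    (h : Pairwise fun i j => T.dist x (P i) < T.dist (P i) (P j)) : ContainsNonabelianFree Γ := by
  -- Ping-pong with the sets of vertices lying closer to one of the four points than to `x`.
  have hdisj : ∀ i j, i ≠ j → ∀ y, T.dist y (P i) ≤ T.dist y x → ¬ T.dist y (P j) ≤ T.dist y x :=
    fun i j hij y hi => not_le.2
      (tree_dist_lt_dist_of_dist_le hT (h hij) ((h hij.symm).trans_eq (T.dist_comm ..)) hi)
  have hle : ∀ i j, i ≠ j → ∀ y, T.dist y (P i) ≤ T.dist y x → ¬ T.dist y (P j) < T.dist y x :=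
    fun i j hij y hi hj => hdisj i j hij y hi hj.le
  subst hP
  refine .of_pingPong ![a, b] (fun i => {y | T.dist y (![a, b] i • x) ≤ T.dist y x})
    (fun i => {y | T.dist y ((![a, b] i)⁻¹ • x) < T.dist y x}) ?_ ?_ ?_ ?_ ?_ ?_
  · exact fun i => ⟨![a, b] i • x, by simp⟩
  · refine fun i j hij => Set.disjoint_left.2 fun y hi hj => ?_
    fin_cases i <;> fin_cases j
    exacts [hij rfl, hdisj 0 2 (by decide) y hi hj, hdisj 2 0 (by decide) y hi hj, hij rfl]
  · refine fun i j hij => Set.disjoint_left.2 fun y hi hj => ?_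
    fin_cases i <;> fin_cases j
    exacts [hij rfl, hle 1 3 (by decide) y hi.le hj, hle 3 1 (by decide) y hi.le hj, hij rfl]
  · refine fun i j => Set.disjoint_left.2 fun y hi hj => ?_
    fin_cases i <;> fin_cases j
    exacts [hle 0 1 (by decide) y hi hj, hle 0 3 (by decide) y hi hj,
      hle 2 1 (by decide) y hi hj, hle 2 3 (by decide) y hi hj]
  · intro i y hy
    have hsmul := hd (![a, b] i) y ((![a, b] i)⁻¹ • x)
    rw [smul_inv_smul] at hsmul
    rw [Set.mem_ofPred_eq, not_lt] at hy
    rwa [Set.mem_ofPred_eq, hd, hsmul]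
  · intro i y hy
    have hsmul := hd (![a, b] i)⁻¹ y (![a, b] i • x)
    rw [inv_smul_smul] at hsmul
    rw [Set.mem_ofPred_eq, not_le] at hy
    rwa [Set.mem_ofPred_eq, hd, hsmul]

theorem containsNonabelianFree_of_conj {a h : Γ} {x : V} {L D : ℕ} (hL : T.dist x (a • x) = L)
    (hLL : T.dist (a • x) (a⁻¹ • x) = 2 * L) (hD : D + 4 * T.dist x (h • x) < L)
    (hfar : ∀ i j, 2 * L ≤ T.dist (![a, a⁻¹] i • x) (h • ![a, a⁻¹] j • x) + D) :
    ContainsNonabelianFree Γ := by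
  have hL' : T.dist x (a⁻¹ • x) = L := by rw [← hd a, smul_inv_smul, T.dist_comm, hL]
  have hnear := dist_conj_smul_le hd hT.connected h a x
  have hnear' := dist_conj_smul_le hd hT.connected h a⁻¹ x
  have hopp := dist_smul_le_dist_conj_smul_add hd hT.connected h a a⁻¹ x
  have hfar' : ∀ i j, 2 * L ≤ T.dist (![a, a⁻¹] i • x) (h • ![a, a⁻¹] j • h⁻¹ • x) + D +
      T.dist x (h • x) := fun i j => by
    have := dist_smul_smul_le hd hT.connected h (![a, a⁻¹] j) x (![a, a⁻¹] i • x)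
    have := hfar i j
    omega
  obtain ⟨⟨h00, h01⟩, h10, h11⟩ := by simpa [Fin.forall_fin_two] using hfar'
  refine containsNonabelianFree_of_pairwise_dist hT hd (a := a) (b := h * a * h⁻¹) (x := x) rfl ?_
  have hinv : (h * a * h⁻¹)⁻¹ • x = h • a⁻¹ • h⁻¹ • x := by simp [mul_smul]
  rw [hinv, mul_smul, mul_smul]
  intro i j hij
  fin_cases i <;> fin_cases j <;> first
    | exact (hij rfl).elim
    | change T.dist x (_ • _) < T.dist (_ • _) (_ • _); omega
    | change T.dist x (_ • _) < T.dist (_ • _) (_ • _); rw [T.dist_comm (u := _ • _)]; omega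

theorem isRay_pow_smul {g : Γ} {x : V} {t : ℕ} (h1 : T.dist x (g • x) = t)
    (h2 : T.dist x (g • g • x) = 2 * t) : IsRay T t fun n => g ^ n • x := by
  refine isRay_of_dist_eq hT (fun n => ?_) fun n => ?_
  · simp only [pow_add, pow_one, mul_smul, hd, h1]
  · simp only [pow_add, pow_two, mul_smul, hd, h2]

theorem exists_dist_smul_eq [Nonempty V] {g : Γ} (hg : ∀ x : V, g • x ≠ x)
    (hinv : ∀ x : V, T.Adj x (g • x) → g • g • x ≠ x) :
    ∃ (x : V) (t : ℕ), 0 < t ∧ T.dist x (g • x) = t ∧ T.dist x (g • g • x) = 2 * t := by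
  obtain ⟨_, ⟨x, rfl⟩, hmin⟩ := WellFounded.has_min (wellFounded_lt (α := ℕ))
    (Set.range fun x : V => T.dist x (g • x)) (Set.range_nonempty _)
  refine ⟨x, _, hT.connected.pos_dist_of_ne (hg x).symm, rfl, ?_⟩
  obtain ⟨z, hz, hzx⟩ := exists_adj_dist_add_one_eq hT.connected (hg x).symm
  have hgz : T.Adj (g • x) (g • z) := by
    rw [← SimpleGraph.dist_eq_one_iff_adj, hd, SimpleGraph.dist_eq_one_iff_adj.2 hz]
  rcases hT.dist_eq_dist_add_one_of_adj x hgz with h | h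
  · have hzz : T.dist x (g • x) ≤ T.dist z (g • z) := not_lt.1 (hmin _ ⟨z, rfl⟩)
    have hfour := tree_dist_four_point hT z (g • z) x (g • x)
    have hxz := SimpleGraph.dist_eq_one_iff_adj.2 hz
    have hgzx := SimpleGraph.dist_eq_one_iff_adj.2 hgz.symm
    rw [T.dist_comm (u := z) (v := x), T.dist_comm (u := g • z) (v := x)] at hfour
    have := hT.connected.pos_dist_of_ne (hg x).symm
    obtain rfl : z = g • x := hT.connected.dist_eq_zero_iff.1 (by omega)
    exact (hinv x hz (hT.connected.dist_eq_zero_iff.1 (by omega)).symm).elim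
  · have hsum := tree_dist_eq_add_of_adj hT hgz (y := g • g • x) (z := x)
      (by rw [hd, hd, hzx]) (by rw [T.dist_comm, h, T.dist_comm])
    rw [hd, T.dist_comm (v := x), T.dist_comm (v := x)] at hsum
    omega

theorem smul_ne_of_dist_smul_eq {g : Γ} {x : V} {t : ℕ} (ht : 0 < t) (h1 : T.dist x (g • x) = t)
    (h2 : T.dist x (g • g • x) = 2 * t) (q : V) : g • q ≠ q := by
  intro hq
  have hfour := tree_dist_four_point hT x (g • g • x) q (g • x)
  have hqx := hd g q x
  have hqgx := hd g q (g • x)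
  rw [hq] at hqx hqgx
  rw [h1, h2, hqx, T.dist_comm (v := q), T.dist_comm (u := g • g • x) (v := g • x), hd, h1,
    T.dist_comm (v := q), hqgx, hqx] at hfour
  omega

end TreeAction

section EndStabilizer

open Filter
open scoped Pointwise commutatorElement

variable {V : Type*} {T : SimpleGraph V} {Γ : Type*} [Group Γ] [MulAction Γ V]

/-- The subgroup of the elements fixing all but finitely many terms of a sequence. -/
def eventualStabilizer (Γ : Type*) [Group Γ] {V : Type*} [MulAction Γ V] (u : ℕ → V) :
    Subgroup Γ where
  carrier := {g | ∀ᶠ n in atTop, g • u n = u n}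
  one_mem' := by simp
  mul_mem' {a b} ha hb := by
    filter_upwards [ha, hb] with n han hbn
    rw [mul_smul, hbn, han]
  inv_mem' {a} ha := by
    filter_upwards [ha] with n han
    rw [inv_smul_eq_iff, han]

/-- The subgroup of the elements moving a sequence to an asymptotic one; for a ray `u` of a tree
this is the stabilizer of the end of `u`. -/
def endStabilizer (hT : T.Connected) (hd : ∀ (g : Γ) x y, T.dist (g • x) (g • y) = T.dist x y)
    (u : ℕ → V) : Subgroup Γ where
  carrier := {g | Asymptotic T (g • u) u}
  one_mem' := by simpa using Asymptotic.refl u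
  mul_mem' {a b} ha hb := by
    rw [Set.mem_ofPred_eq, mul_smul]
    exact (hb.smul hd a).trans hT ha
  inv_mem' {a} ha := by simpa using (ha.smul hd a⁻¹).symm

theorem endStabilizer_finiteIndex_of_forall_asymptotic (hT : T.Connected)
    (hd : ∀ (g : Γ) x y, T.dist (g • x) (g • y) = T.dist x y) {ι : Type*} [Finite ι]
    (u : ι → ℕ → V) (h : ∀ g : Γ, ∃ i j, Asymptotic T (g • u j) (u i)) :
    ∃ j, (endStabilizer hT hd (u j)).FiniteIndex := by
  have := Fintype.ofFinite ι
  have hcoset : ∀ i j, ∃ g₀ : Γ, ∀ g : Γ, Asymptotic T (g • u j) (u i) →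
      g ∈ g₀ • (endStabilizer hT hd (u j) : Set Γ) := by
    intro i j
    by_cases hne : ∃ g : Γ, Asymptotic T (g • u j) (u i)
    · obtain ⟨g₀, hg₀⟩ := hne
      refine ⟨g₀, fun g hg => ?_⟩
      have hmem := (hg.trans hT hg₀.symm).smul hd g₀⁻¹
      rw [inv_smul_smul, smul_smul] at hmem
      rw [Set.mem_smul_set_iff_inv_smul_mem]
      exact hmem
    · exact ⟨1, fun g hg => (hne ⟨g, hg⟩).elim⟩
  choose g₀ hg₀ using hcoset
  obtain ⟨⟨_, j⟩, -, hfin⟩ := Subgroup.exists_finiteIndex_of_leftCoset_cover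
    (s := (Finset.univ : Finset (ι × ι))) (g := fun p => g₀ p.1 p.2)
    (H := fun p => endStabilizer hT hd (u p.2)) (by
      refine Set.eq_univ_of_forall fun g => ?_
      obtain ⟨i, j, hij⟩ := h g
      exact Set.mem_biUnion (Finset.mem_coe.2 (Finset.mem_univ (i, j))) (hg₀ i j g hij))
  exact ⟨j, hfin⟩

variable (hT : T.IsTree) (hd : ∀ (g : Γ) x y, T.dist (g • x) (g • y) = T.dist x y)

include hT hd

section EdgeStabilizers

variable {ℓ : ℕ} (hℓ : ∀ x y, T.Adj x y →
  derivedSeries (MulAction.stabilizer Γ x ⊓ MulAction.stabilizer Γ y : Subgroup Γ) ℓ = ⊥)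

include hℓ

theorem derivedSeries_stabilizer_inf_stabilizer_eq_bot {x y : V} (hxy : x ≠ y) :
    derivedSeries (MulAction.stabilizer Γ x ⊓ MulAction.stabilizer Γ y : Subgroup Γ) ℓ = ⊥ := by
  obtain ⟨z, hz, hzy⟩ := exists_adj_dist_add_one_eq hT.connected hxy
  refine derivedSeries_eq_bot_of_injective (Subgroup.inclusion_injective ?_) (hℓ x z hz)
  refine fun g hg => ⟨hg.1, ?_⟩
  have hgx : g • x = x := hg.1
  have hgy : g • y = y := hg.2
  have hxz := hd g x z
  have hzy' := hd g z y
  rw [hgx, SimpleGraph.dist_eq_one_iff_adj.2 hz] at hxz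
  rw [hgy] at hzy'
  exact tree_eq_of_adj_of_dist_add_one_eq hT (SimpleGraph.dist_eq_one_iff_adj.1 hxz)
    (by rw [hzy', hzy]) hz hzy

theorem derivedSeries_closure_eq_bot {G : Type*} [Group G] {f : G →* Γ}
    (hf : Function.Injective f) {S : Set G} {x y : V} (hxy : x ≠ y) (hx : ∀ s ∈ S, f s • x = x)
    (hy : ∀ s ∈ S, f s • y = y) : derivedSeries (Subgroup.closure S) ℓ = ⊥ := by
  have hle : Subgroup.closure S ≤
      (MulAction.stabilizer Γ x ⊓ MulAction.stabilizer Γ y).comap f :=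
    (Subgroup.closure_le _).2 fun s hs => ⟨hx s hs, hy s hs⟩
  exact derivedSeries_eq_bot_of_forall_mem (f := f.comp (Subgroup.closure S).subtype)
    (hf.comp (Subgroup.subtype_injective _)) (fun s => hle s.2)
    (derivedSeries_stabilizer_inf_stabilizer_eq_bot hT hd hℓ hxy)

theorem derivedSeries_eventualStabilizer_eq_bot {u : ℕ → V} (hu : ∀ n, u n ≠ u (n + 1)) :
    derivedSeries (eventualStabilizer Γ u) ℓ = ⊥ := by
  refine derivedSeries_eq_bot_of_forall_finset fun F => ?_
  have hfix : ∀ᶠ n in atTop, ∀ s ∈ F, (s : Γ) • u n = u n :=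
    (eventually_all_finset F).2 fun s _ => s.2
  obtain ⟨n, hn, hn'⟩ := (hfix.and ((tendsto_add_atTop_nat 1).eventually hfix)).exists
  exact derivedSeries_closure_eq_bot hT hd hℓ (Subgroup.subtype_injective _) (hu n) hn hn'

end EdgeStabilizers

theorem eventually_dist_smul_add_dist_eq {u : ℕ → V} {t : ℕ} (ht : 0 < t) (hu : IsRay T t u)
    {g : Γ} (hg : g ∈ endStabilizer hT.connected hd u) (y z : V) :
    ∀ᶠ n in atTop, T.dist (g • y) (u n) + T.dist z (u n) =
      T.dist (g • z) (u n) + T.dist y (u n) := by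
  obtain ⟨C, hC⟩ := hg
  filter_upwards [eventually_ge_atTop (C + T.dist (g • y) (g • z) + T.dist (u 0) (g • y) +
    T.dist (u 0) (g • z) + T.dist (u 0) y + T.dist (u 0) z + 1)] with n hn
  have hnt : n ≤ n * t := Nat.le_mul_of_pos_right n ht
  have h0 := hu.dist_zero n
  have hCn : T.dist (g • u n) (u n) ≤ C := hC n
  have hfour1 := tree_dist_four_point hT (g • y) (u n) (g • z) (g • u n)
  have hfour2 := tree_dist_four_point hT (g • y) (g • u n) (g • z) (u n)
  have htri := fun p => hT.connected.dist_triangle (u := u 0) (v := p) (w := u n)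
  have h1 := htri y
  have h2 := htri z
  have h3 := htri (g • y)
  have h4 := htri (g • z)
  have hgy := hd g y (u n)
  have hgz := hd g z (u n)
  rw [T.dist_comm (u := u n) (v := g • u n), T.dist_comm (u := u n) (v := g • z)] at hfour1
  rw [T.dist_comm (u := g • u n) (v := g • z)] at hfour2
  omega

-- The Busemann function of the end of `u` changes by a constant under each `g`, and commutators
-- preserve it; this forces them to fix a subray of `u`.
theorem commutatorElement_mem_eventualStabilizer {u : ℕ → V} {t : ℕ} (ht : 0 < t)
    (hu : IsRay T t u) {g h : Γ} (hg : g ∈ endStabilizer hT.connected hd u)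
    (hh : h ∈ endStabilizer hT.connected hd u) : ⁅g, h⁆ ∈ eventualStabilizer Γ u := by
  have hbusemann : ∀ y, ∀ᶠ n in atTop, T.dist (⁅g, h⁆ • y) (u n) = T.dist y (u n) := by
    intro y
    filter_upwards [eventually_dist_smul_add_dist_eq hT hd ht hu hg (h • g⁻¹ • h⁻¹ • y)
      (g⁻¹ • h⁻¹ • y), eventually_dist_smul_add_dist_eq hT hd ht hu hh (g⁻¹ • h⁻¹ • y)
      (h⁻¹ • y)] with n h1 h2
    rw [smul_inv_smul] at h1 h2
    rw [commutatorElement_def, mul_smul, mul_smul, mul_smul]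
    omega
  change ∀ᶠ n in atTop, ⁅g, h⁆ • u n = u n
  filter_upwards [hbusemann (⁅g, h⁆⁻¹ • u 0)] with n hn
  rw [smul_inv_smul] at hn
  obtain ⟨_, hnj, hle⟩ := ((hbusemann (u n)).and (eventually_ge_atTop n)).exists
  obtain ⟨j, rfl⟩ := Nat.exists_eq_add_of_le hle
  have hsmul := hd ⁅g, h⁆ (⁅g, h⁆⁻¹ • u 0) (u n)
  rw [smul_inv_smul] at hsmul
  have hfour := tree_dist_four_point hT (⁅g, h⁆ • u n) (u n) (u 0) (u (n + j))
  rw [hu] at hnj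
  rw [hu, hnj, T.dist_comm (v := u 0), T.dist_comm (u := u n) (v := u 0), hu.dist_zero (n + j),
    hsmul, ← hn, hu.dist_zero, add_mul] at hfour
  exact hT.connected.dist_eq_zero_iff.1 (by omega)

theorem isSolvable_endStabilizer {u : ℕ → V} {t : ℕ} (ht : 0 < t) (hu : IsRay T t u)
    (hsol : Group.IsSolvable (eventualStabilizer Γ u)) :
    Group.IsSolvable (endStabilizer hT.connected hd u) := by
  refine isSolvable_of_ker Abelianization.of ?_ (Group.isSolvable_of_comm mul_comm)
  rw [Abelianization.ker_of]
  have hle : commutator (endStabilizer hT.connected hd u) ≤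
      (eventualStabilizer Γ u).comap (Subgroup.subtype _) := by
    rw [commutator_def, Subgroup.commutator_le]
    exact fun g _ h _ => commutatorElement_mem_eventualStabilizer hT hd ht hu g.2 h.2
  let f := (endStabilizer hT.connected hd u).subtype.comp (Subgroup.subtype (commutator _))
  exact Group.isSolvable_of_isSolvable_injective
    (f := f.codRestrict (eventualStabilizer Γ u) fun g => hle g.2)
    ((MonoidHom.injective_codRestrict _ _ _).2
      ((Subgroup.subtype_injective _).comp (Subgroup.subtype_injective _)))

theorem isVirtuallySolvable_of_forall_asymptotic {ℓ : ℕ} (hℓ : ∀ x y, T.Adj x y →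
      derivedSeries (MulAction.stabilizer Γ x ⊓ MulAction.stabilizer Γ y : Subgroup Γ) ℓ = ⊥)
    {ι : Type*} [Finite ι] {u : ι → ℕ → V} {t : ℕ} (ht : 0 < t) (hu : ∀ i, IsRay T t (u i))
    (h : ∀ g : Γ, ∃ i j, Asymptotic T (g • u j) (u i)) : IsVirtuallySolvable Γ := by
  obtain ⟨j, hj⟩ := endStabilizer_finiteIndex_of_forall_asymptotic hT.connected hd u h
  have hne : ∀ n, u j n ≠ u j (n + 1) := fun n hn => by
    have := hu j n 1
    rw [← hn, T.dist_self] at this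
    omega
  exact ⟨_, hj, isSolvable_endStabilizer hT hd ht (hu j)
    ⟨ℓ, derivedSeries_eventualStabilizer_eq_bot hT hd hℓ hne⟩⟩

theorem containsNonabelianFree_of_forall_not_asymptotic {g h : Γ} {x : V} {t : ℕ} (ht : 0 < t)
    {u : Fin 2 → ℕ → V} (hu : u = fun i n => ![g, g⁻¹] i ^ n • x) (hray : ∀ i, IsRay T t (u i))
    (hh : ∀ i j, ¬ Asymptotic T (h • u j) (u i)) : ContainsNonabelianFree Γ := by
  choose D hD using fun i j => ((hray j).smul hd h).exists_two_mul_le_dist_add hT (hray i) (hh i j)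
  subst hu
  obtain ⟨D', hD'⟩ : ∃ D', ∀ i j, D i j ≤ D' :=
    ⟨∑ i, ∑ j, D i j, fun i j => (Finset.single_le_sum (f := D i) (by simp) (by simp)).trans
      (Finset.single_le_sum (f := fun i => ∑ j, D i j) (by simp) (by simp))⟩
  obtain ⟨N, hN⟩ : ∃ N, N = D' + 4 * T.dist x (h • x) + 1 := ⟨_, rfl⟩
  refine containsNonabelianFree_of_conj hT hd (a := g ^ N) (h := h) (x := x) (L := N * t) (D := D')
    ?_ ?_ ?_ fun i j => ?_
  · simpa using (hray 0).dist_zero N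
  · rw [← hd (g ^ N), smul_inv_smul, smul_smul, ← pow_add, T.dist_comm]
    have := (hray 0).dist_zero (N + N)
    simp only [Matrix.cons_val_zero, pow_zero, one_smul] at this
    rw [this]
    ring
  · have := Nat.le_mul_of_pos_right N ht
    omega
  · have hpow : ∀ i, ![g ^ N, (g ^ N)⁻¹] i = ![g, g⁻¹] i ^ N := by simp [Fin.forall_fin_two]
    have h1 := hD i j N
    have h2 := hD' i j
    rw [hpow, hpow, T.dist_comm]
    exact h1.trans (Nat.add_le_add_left h2 _)

theorem titsDichotomy_of_forall_smul_ne [Nonempty V]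
    (hinv : ∀ (g : Γ) x, T.Adj x (g • x) → g • g • x ≠ x) {ℓ : ℕ} (hℓ : ∀ x y, T.Adj x y →
      derivedSeries (MulAction.stabilizer Γ x ⊓ MulAction.stabilizer Γ y : Subgroup Γ) ℓ = ⊥)
    {g : Γ} (hg : ∀ x : V, g • x ≠ x) : TitsDichotomy Γ := by
  obtain ⟨x, t, ht, h1, h2⟩ := exists_dist_smul_eq hT hd hg (hinv g)
  have hray : ∀ i, IsRay T t fun n => ![g, g⁻¹] i ^ n • x := by
    refine Fin.forall_fin_two.2 ⟨isRay_pow_smul hT hd h1 h2, isRay_pow_smul hT hd ?_ ?_⟩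
    · rw [← hd g, T.dist_comm]
      simpa using h1
    · rw [← hd g, ← hd g, T.dist_comm]
      simpa using h2
  by_cases h : ∃ h : Γ, ∀ i j, ¬ Asymptotic T (h • fun n => ![g, g⁻¹] j ^ n • x)
      fun n => ![g, g⁻¹] i ^ n • x
  · obtain ⟨h, hh⟩ := h
    exact .inl (containsNonabelianFree_of_forall_not_asymptotic hT hd ht rfl hray hh)
  · push Not at h
    exact .inr (isVirtuallySolvable_of_forall_asymptotic hT hd hℓ ht hray h)

end EndStabilizer

section FixedPoints

variable {V : Type*} {T : SimpleGraph V} (hT : T.IsTree) {Γ : Type*} [Group Γ] [MulAction Γ V]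
  (hd : ∀ (g : Γ) x y, T.dist (g • x) (g • y) = T.dist x y)

include hT hd

/-- The product of elements with disjoint fixed subtrees is hyperbolic: if the segment from `x` to
`y` leaves `Fix s` at `x` and enters `Fix g` at `y`, then `s * g` translates `x` by twice its
length. -/
theorem mul_smul_ne_of_smul_ne {s g : Γ} {x y z w : V} (hxy : x ≠ y) (hx : s • x = x)
    (hy : g • y = y) (hz : T.Adj x z) (hzy : T.dist z y + 1 = T.dist x y) (hsz : s • z ≠ z)
    (hw : T.Adj y w) (hwx : T.dist w x + 1 = T.dist y x) (hgw : g • w ≠ w) (q : V) :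
    (s * g) • q ≠ q := by
  have := hT.connected.pos_dist_of_ne hxy
  have hadj : ∀ (g : Γ) {a b : V}, T.Adj a b → T.Adj (g • a) (g • b) := fun g a b h => by
    rwa [← SimpleGraph.dist_eq_one_iff_adj, hd, SimpleGraph.dist_eq_one_iff_adj]
  have hygx : T.dist y (g • x) = T.dist x y := by
    conv_lhs => rw [← hy, hd, T.dist_comm]
  have hyg'x : T.dist y (g⁻¹ • x) = T.dist x y := by
    rw [← hd g, hy, smul_inv_smul, T.dist_comm]
  have hgx : T.dist x (g • x) = 2 * T.dist x y := by
    have h := tree_dist_eq_add_of_ne hT hw hwx (z := g • x) (w' := g • w)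
      (by simpa [hy] using hadj g hw) (by rw [hd, hwx, hygx, T.dist_comm]) hgw.symm
    rw [h, hygx, T.dist_comm (u := y), two_mul]
  have hg'x : T.dist x (g⁻¹ • x) = 2 * T.dist x y := by
    rw [← hd g, smul_inv_smul, T.dist_comm, hgx]
  have hcloser : ∀ p, T.dist y p = T.dist x y → T.dist x p = 2 * T.dist x y →
      T.dist z p + 1 = T.dist x p := by
    intro p hyp hxp
    have h1 := hT.connected.dist_triangle (u := z) (v := y) (w := p)
    have h2 := hT.connected.dist_triangle (u := x) (v := z) (w := p)
    rw [SimpleGraph.dist_eq_one_iff_adj.2 hz] at h2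
    omega
  have hsgx : ∀ p, T.dist x (s • p) = T.dist x p := fun p => by
    conv_lhs => rw [← hx, hd]
  have hfar : T.dist (g⁻¹ • x) (s • g • x) = T.dist x (g⁻¹ • x) + T.dist x (s • g • x) :=
    tree_dist_eq_add_of_ne hT hz (hcloser _ hyg'x hg'x) (by simpa [hx] using hadj s hz)
      (by rw [hd, hsgx, hcloser _ hygx hgx]) hsz.symm
  refine smul_ne_of_dist_smul_eq hT hd (x := x) (t := 2 * T.dist x y) (by omega) ?_ ?_ q
  · rw [mul_smul, hsgx, hgx]
  · rw [mul_smul, mul_smul, hsgx, ← hd g⁻¹, inv_smul_smul, hfar, hsgx, hgx, hg'x]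
    ring

/-- Serre's lemma on groups generated by finitely many elliptic elements whose products are
elliptic. -/
theorem exists_forall_mem_finset_smul_eq [Nonempty V] (hell : ∀ g : Γ, ∃ x : V, g • x = x)
    (S : Finset Γ) : ∃ x : V, ∀ g ∈ S, g • x = x := by
  classical
  induction S using Finset.induction_on with
  | empty => exact ⟨Classical.arbitrary V, by simp⟩
  | insert g S _ ih =>
    by_contra! hno
    obtain ⟨p, hp⟩ := ih
    obtain ⟨q, hq⟩ := hell g
    obtain ⟨_, ⟨x, y, hx, hy, rfl⟩, hmin⟩ := WellFounded.has_min (wellFounded_lt (α := ℕ))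
      {r | ∃ x y : V, (∀ s ∈ S, s • x = x) ∧ g • y = y ∧ T.dist x y = r} ⟨_, p, q, hp, hq, rfl⟩
    have hxy : x ≠ y := by
      rintro rfl
      obtain ⟨s, hs, hsx⟩ := hno x
      exact hsx ((Finset.mem_insert.1 hs).elim (fun h => h ▸ hy) (hx s))
    obtain ⟨z, hz, hzy⟩ := exists_adj_dist_add_one_eq hT.connected hxy
    obtain ⟨w, hw, hwx⟩ := exists_adj_dist_add_one_eq hT.connected hxy.symm
    obtain ⟨s, hs, hsz⟩ : ∃ s ∈ S, s • z ≠ z := by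
      by_contra! hcon
      exact hmin _ ⟨z, y, hcon, hy, rfl⟩ (by omega)
    have hgw : g • w ≠ w := fun hcon =>
      hmin _ ⟨x, w, hx, hcon, rfl⟩ (by rw [T.dist_comm, T.dist_comm (u := x)]; omega)
    obtain ⟨q, hq⟩ := hell (s * g)
    exact mul_smul_ne_of_smul_ne hT hd hxy (hx s hs) hy hz hzy hsz hw hwx hgw q hq

theorem titsDichotomy_or_exists_forall_smul_eq [Nonempty V]
    (hinv : ∀ (g : Γ) x, T.Adj x (g • x) → g • g • x ≠ x) {ℓ : ℕ} (hℓ : ∀ x y, T.Adj x y →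
      derivedSeries (MulAction.stabilizer Γ x ⊓ MulAction.stabilizer Γ y : Subgroup Γ) ℓ = ⊥) :
    TitsDichotomy Γ ∨ ∃ x : V, ∀ g : Γ, g • x = x := by
  classical
  by_cases hell : ∀ g : Γ, ∃ x : V, g • x = x
  · by_cases hsol : ∀ F : Finset Γ, derivedSeries (Subgroup.closure (F : Set Γ)) ℓ = ⊥
    · have : Group.IsSolvable Γ := ⟨ℓ, derivedSeries_eq_bot_of_forall_finset hsol⟩
      exact .inl (.inr .of_isSolvable)
    · push Not at hsol
      obtain ⟨F, hF⟩ := hsol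
      have hunique : ∀ x y : V, (∀ g ∈ F, g • x = x) → (∀ g ∈ F, g • y = y) → x = y := by
        intro x y hx hy
        by_contra hne
        exact hF (derivedSeries_closure_eq_bot hT hd hℓ (f := .id Γ) Function.injective_id hne
          hx hy)
      obtain ⟨x, hx⟩ := exists_forall_mem_finset_smul_eq hT hd hell F
      refine .inr ⟨x, fun g => ?_⟩
      obtain ⟨y, hy⟩ := exists_forall_mem_finset_smul_eq hT hd hell (insert g F)
      obtain rfl := hunique x y hx fun s hs => hy s (Finset.mem_insert_of_mem hs)
      exact hy g (Finset.mem_insert_self _ _)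
  · push Not at hell
    obtain ⟨g, hg⟩ := hell
    exact .inl (titsDichotomy_of_forall_smul_ne hT hd hinv hℓ hg)

end FixedPoints

/-! ### The coset graph of two subgroups -/

section CosetGraph

variable {G : Type*} [Group G] {A B : Subgroup G}

/-- The graph with the left cosets of `A` and of `B` as vertices, in which `gA` and `gB` are
joined. If `G` is the amalgamated product of `A` and `B`, it is the Bass–Serre tree. -/
def cosetGraph (A B : Subgroup G) : SimpleGraph ((G ⧸ A) ⊕ (G ⧸ B)) where
  Adj x y := ∃ g : G, (x = .inl g ∧ y = .inr g) ∨ (x = .inr g ∧ y = .inl g)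
  symm := ⟨fun _ _ ⟨g, h⟩ => ⟨g, h.symm.imp And.symm And.symm⟩⟩
  loopless := ⟨fun x ⟨g, h⟩ => by rcases h with ⟨rfl, h⟩ | ⟨rfl, h⟩ <;> simp at h⟩

/-- The products `b₀ a₁ b₁ ⋯ aₙ bₙ` with `aᵢ ∈ A \ B` and `bᵢ ∈ B \ A`. -/
inductive IsAlternatingProduct (A B : Subgroup G) : G → Prop
  | of {b : G} (hb : b ∈ B) (hbA : b ∉ A) : IsAlternatingProduct A B b
  | mul_mul {w a b : G} (hw : IsAlternatingProduct A B w) (ha : a ∈ A) (haB : a ∉ B) (hb : b ∈ B)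
      (hbA : b ∉ A) : IsAlternatingProduct A B (w * a * b)

theorem cosetGraph_adj_smul (g : G) {x y : (G ⧸ A) ⊕ (G ⧸ B)} (hxy : (cosetGraph A B).Adj x y) :
    (cosetGraph A B).Adj (g • x) (g • y) := by
  obtain ⟨k, ⟨rfl, rfl⟩ | ⟨rfl, rfl⟩⟩ := hxy
  · exact ⟨g * k, .inl ⟨rfl, rfl⟩⟩
  · exact ⟨g * k, .inr ⟨rfl, rfl⟩⟩

theorem cosetGraph_reachable_smul (g : G) {x y : (G ⧸ A) ⊕ (G ⧸ B)}
    (hxy : (cosetGraph A B).Reachable x y) : (cosetGraph A B).Reachable (g • x) (g • y) :=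
  hxy.map ⟨fun x => g • x, cosetGraph_adj_smul g⟩

theorem cosetGraph_dist_smul (hc : (cosetGraph A B).Connected) (g : G)
    (x y : (G ⧸ A) ⊕ (G ⧸ B)) :
    (cosetGraph A B).dist (g • x) (g • y) = (cosetGraph A B).dist x y := by
  have hle : ∀ (g : G) (x y : (G ⧸ A) ⊕ (G ⧸ B)),
      (cosetGraph A B).dist (g • x) (g • y) ≤ (cosetGraph A B).dist x y := by
    intro g x y
    obtain ⟨p, hp⟩ := hc.exists_walk_length_eq_dist x y
    rw [← hp, ← SimpleGraph.Walk.length_map ⟨fun x => g • x, cosetGraph_adj_smul g⟩ p]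
    exact SimpleGraph.dist_le _
  refine le_antisymm (hle g x y) ?_
  simpa using hle g⁻¹ (g • x) (g • y)

theorem cosetGraph_connected (hAB : A ⊔ B = ⊤) : (cosetGraph A B).Connected := by
  have hedge : ∀ g : G, (cosetGraph A B).Reachable (.inl g) (.inr g) := fun g =>
    SimpleGraph.Adj.reachable ⟨g, .inl ⟨rfl, rfl⟩⟩
  have hbase : ∀ g ∈ (A : Set G) ∪ B, (cosetGraph A B).Reachable (.inl (1 : G)) (.inl g) := by
    rintro g (h | h)
    · rw [show ((g : G) : G ⧸ A) = (1 : G) from (QuotientGroup.eq.2 (by simpa using h)).symm]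
    · refine (hedge 1).trans ?_
      rw [show ((1 : G) : G ⧸ B) = g from QuotientGroup.eq.2 (by simpa using h)]
      exact (hedge g).symm
  have hsmul : ∀ g h k : G, (cosetGraph A B).Reachable (.inl h) (.inl k) →
      (cosetGraph A B).Reachable (.inl (g * h : G)) (.inl (g * k : G)) := fun g _ _ h =>
    cosetGraph_reachable_smul g h
  have hinl : ∀ g : G, (cosetGraph A B).Reachable (.inl (1 : G)) (.inl g) := by
    intro g
    have hg : g ∈ Subgroup.closure ((A : Set G) ∪ B) := by
      rw [← Subgroup.sup_eq_closure, hAB]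
      exact Subgroup.mem_top g
    induction hg using Subgroup.closure_induction with
    | mem g hg => exact hbase g hg
    | one => exact .refl _
    | mul g h _ _ ihg ihh => exact ihg.trans (by simpa using hsmul g _ _ ihh)
    | inv g _ ih => exact (by simpa using hsmul g⁻¹ _ _ ih : (cosetGraph A B).Reachable _ _).symm
  have hall : ∀ x, (cosetGraph A B).Reachable (.inl (1 : G)) x := by
    rintro (x | x) <;> obtain ⟨g, rfl⟩ := QuotientGroup.mk_surjective x
    exacts [hinl g, (hinl g).trans (hedge g)]
  exact { preconnected := fun x y => (hall x).symm.trans (hall y), nonempty := ⟨.inl (1 : G)⟩ }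

theorem exists_isAlternatingProduct_of_isTrail {x y : G ⧸ A}
    (p : (cosetGraph A B).Walk (.inl x) (.inl y)) (hp : p.IsTrail) (hnil : ¬ p.Nil) :
    ∃ g w : G, IsAlternatingProduct A B w ∧ y = g ∧ x = (g * w : G) ∧
      p.snd = .inr (g * w : G) := by
  obtain ⟨n, hn⟩ : ∃ n, p.length = n := ⟨_, rfl⟩
  induction n using Nat.strong_induction_on generalizing x with
  | _ n ih =>
    obtain _ | ⟨hadj, q⟩ := p
    · simp at hnil
    obtain ⟨k, ⟨hxk, rfl⟩ | ⟨hxk, -⟩⟩ := id hadj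
    swap
    · cases hxk
    obtain rfl := Sum.inl.inj hxk
    obtain _ | ⟨hadj', q⟩ := q
    obtain ⟨l, ⟨hkl, -⟩ | ⟨hkl, rfl⟩⟩ := id hadj'
    · cases hkl
    have hkl := QuotientGroup.eq.1 (Sum.inr.inj hkl).symm
    simp only [SimpleGraph.Walk.isTrail_cons, SimpleGraph.Walk.edges_cons, List.mem_cons,
      not_or] at hp
    have hbA : l⁻¹ * k ∉ A := fun h => hp.2.1 (by rw [QuotientGroup.eq.2 h, Sym2.eq_swap])
    by_cases hq : q.Nil
    · obtain rfl := Sum.inl.inj hq.eq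
      exact ⟨l, l⁻¹ * k, .of hkl hbA, rfl, by simp, by simp⟩
    · obtain ⟨g, w, hw, rfl, hlw, hsnd⟩ := ih q.length (by simp [← hn]) q hp.1.1 hq rfl
      have haB : (g * w)⁻¹ * l ∉ B := fun h => hp.1.2 (by
        rw [← QuotientGroup.eq.2 hkl, ← QuotientGroup.eq.2 h, ← hsnd, Sym2.eq_swap]
        exact q.mk_start_snd_mem_edges hq)
      refine ⟨g, w * ((g * w)⁻¹ * l) * (l⁻¹ * k),
        hw.mul_mul (QuotientGroup.eq.1 hlw.symm) haB hkl hbA, rfl, ?_, ?_⟩ <;> simp [mul_assoc]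

theorem cosetGraph_isAcyclic (h : ∀ w, IsAlternatingProduct A B w → w ∉ A) :
    (cosetGraph A B).IsAcyclic := by
  have hclosed : ∀ (x : G ⧸ A) (p : (cosetGraph A B).Walk (.inl x) (.inl x)), p.IsTrail →
      p.Nil := by
    intro x p hp
    by_contra hnil
    obtain ⟨g, w, hw, rfl, hgw, -⟩ := exists_isAlternatingProduct_of_isTrail p hp hnil
    exact h w hw (by simpa using QuotientGroup.eq.1 hgw)
  rintro (x | x) c hc
  · exact hc.ne_nil (SimpleGraph.Walk.eq_nil_iff_nil.2 (hclosed x c hc.isTrail))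
  · obtain _ | ⟨hadj, p⟩ := c
    · exact hc.ne_nil rfl
    obtain ⟨_, ⟨hx, -⟩ | ⟨-, rfl⟩⟩ := id hadj
    · cases hx
    · have ht := hc.isTrail
      rw [SimpleGraph.Walk.isTrail_cons, SimpleGraph.Walk.isTrail_def] at ht
      have hnil := hclosed _ (p.concat hadj) (by
        rw [SimpleGraph.Walk.isTrail_def, SimpleGraph.Walk.edges_concat, List.nodup_concat]
        exact ⟨ht.2, ht.1⟩)
      rw [← SimpleGraph.Walk.length_eq_zero_iff, SimpleGraph.Walk.length_concat] at hnil
      omega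

theorem conj_mem_of_smul_mk_eq {C : Subgroup G} {s g : G} (h : s • (g : G ⧸ C) = g) :
    MulAut.conj g⁻¹ s ∈ C := by
  have hmk : ((g : G) : G ⧸ C) = (s * g : G) := h.symm
  simpa [mul_assoc] using QuotientGroup.eq.1 hmk

theorem StrongTitsAlternative.titsDichotomy_of_smul_mk_eq {C S : Subgroup G}
    (hC : StrongTitsAlternative C) {x : G ⧸ C} (h : ∀ s ∈ S, s • x = x) : TitsDichotomy S := by
  obtain ⟨g, rfl⟩ := QuotientGroup.mk_surjective x
  refine TitsDichotomy.of_map_conj g⁻¹ (hC.titsDichotomy_of_le ?_)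
  rintro _ ⟨s, hs, rfl⟩
  exact conj_mem_of_smul_mk_eq (h s hs)

-- `hAB` and `halt` say that `G` is the amalgamated product of `A` and `B` over `A ⊓ B`.
theorem StrongTitsAlternative.of_forall_isAlternatingProduct_notMem (hAB : A ⊔ B = ⊤)
    (halt : ∀ w, IsAlternatingProduct A B w → w ∉ A) (hA : StrongTitsAlternative A)
    (hB : StrongTitsAlternative B) (hinf : Group.IsSolvable (A ⊓ B : Subgroup G)) :
    StrongTitsAlternative G := by
  intro S
  obtain ⟨ℓ, hℓ⟩ := hinf
  have hc := cosetGraph_connected hAB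
  have := hc.nonempty
  have hstab : ∀ x y, (cosetGraph A B).Adj x y →
      derivedSeries (MulAction.stabilizer S x ⊓ MulAction.stabilizer S y : Subgroup S) ℓ = ⊥ := by
    intro x y hxy
    obtain ⟨g, hg⟩ : ∃ g : G, ∀ s ∈ MulAction.stabilizer S x ⊓ MulAction.stabilizer S y,
        MulAut.conj g⁻¹ (s : G) ∈ A ⊓ B := by
      obtain ⟨g, ⟨rfl, rfl⟩ | ⟨rfl, rfl⟩⟩ := hxy
      · exact ⟨g, fun s hs => ⟨conj_mem_of_smul_mk_eq (Sum.inl.inj hs.1),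
          conj_mem_of_smul_mk_eq (Sum.inr.inj hs.2)⟩⟩
      · exact ⟨g, fun s hs => ⟨conj_mem_of_smul_mk_eq (Sum.inl.inj hs.2),
          conj_mem_of_smul_mk_eq (Sum.inr.inj hs.1)⟩⟩
    exact derivedSeries_eq_bot_of_forall_mem
      (f := (MulAut.conj g⁻¹).toMonoidHom.comp (S.subtype.comp (Subgroup.subtype _)))
      ((MulAut.conj g⁻¹).injective.comp (S.subtype_injective.comp (Subgroup.subtype_injective _)))
      (fun s => hg s s.2) hℓ
  obtain h | ⟨x | x, hx⟩ := titsDichotomy_or_exists_forall_smul_eq ⟨hc, cosetGraph_isAcyclic halt⟩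
    (fun s : S => cosetGraph_dist_smul hc (s : G))
    (by rintro s (x | x) ⟨g, ⟨h, h'⟩ | ⟨h, h'⟩⟩ <;> cases h <;> cases h') hstab
  · exact h
  · exact hA.titsDichotomy_of_smul_mk_eq fun s hs => Sum.inl.inj (hx ⟨s, hs⟩)
  · exact hB.titsDichotomy_of_smul_mk_eq fun s hs => Sum.inr.inj (hx ⟨s, hs⟩)

end CosetGraph

/-! ### The subgroups `K` and `H` -/

section CommutatorSMul

open scoped commutatorElement

variable {k V Γ : Type*} [Field k] [AddCommGroup V] [Module k V] [Group Γ] [DistribMulAction Γ V]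
  {S : Subgroup Γ} {x : V}

theorem commutator_smul_smul_smul (f g : Γ) (x : V) : ⁅f, g⁆ • g • f • x = f • g • x := by
  simp only [commutatorElement_def, smul_smul]
  group

theorem smul_smul_sub_of_mem_commutator [SMulCommClass Γ k V]
    (h : ∀ f ∈ S, ∃ (a : k) (p : V), a ≠ 0 ∧ f • x = a • x + p ∧ ∀ g ∈ S, g • p = p) {f : Γ}
    (hf : f ∈ ⁅S, S⁆) : ∀ g ∈ S, g • (f • x - x) = f • x - x := by
  rw [Subgroup.commutator_def] at hf
  have hle : ⁅S, S⁆ ≤ S := Subgroup.commutator_le_self S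
  induction hf using Subgroup.closure_induction with
  | one => simp
  | mem _ hf =>
    obtain ⟨f₁, hf₁, f₂, hf₂, rfl⟩ := hf
    have hmem := hle (Subgroup.commutator_mem_commutator hf₁ hf₂)
    obtain ⟨a, p, ha, hp, hp'⟩ := h f₁ hf₁
    obtain ⟨b, q, hb, hq, hq'⟩ := h f₂ hf₂
    have hr : (b * a) • (⁅f₁, f₂⁆ • x - x) = b • p + q - a • q - p := by
      have := commutator_smul_smul_smul f₁ f₂ x
      simp only [hp, hq, smul_add, smul_comm f₁ b, smul_comm f₂ a, smul_comm ⁅f₁, f₂⁆ a,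
        smul_comm ⁅f₁, f₂⁆ b, hp' f₂ hf₂, hp' _ hmem, hq' _ hmem, hq' f₁ hf₁] at this
      rw [← sub_eq_zero] at this ⊢
      rw [← this]
      generalize ⁅f₁, f₂⁆ • x = y
      module
    intro g hg
    refine smul_right_injective V (mul_ne_zero hb ha) ?_
    simp only [← smul_comm g, hr]
    simp only [smul_sub, smul_add, smul_comm g, hp' g hg, hq' g hg]
  | mul f₁ f₂ hf₁ _ ih₁ ih₂ =>
    have : (f₁ * f₂) • x - x = f₂ • x - x + (f₁ • x - x) := by
      rw [← ih₂ f₁ (hle hf₁), mul_smul, smul_sub, sub_add_sub_cancel]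
    intro g hg
    rw [this, smul_add, ih₁ g hg, ih₂ g hg]
  | inv f hf ih =>
    have : f⁻¹ • x - x = -(f • x - x) := by
      rw [← ih f⁻¹ (inv_mem (hle hf)), smul_sub, inv_smul_smul, neg_sub]
    intro g hg
    rw [this, smul_neg, ih g hg]

theorem smul_eq_of_mem_commutator_commutator [SMulCommClass Γ k V]
    (h : ∀ f ∈ S, ∃ (a : k) (p : V), a ≠ 0 ∧ f • x = a • x + p ∧ ∀ g ∈ S, g • p = p) {f : Γ}
    (hf : f ∈ ⁅⁅S, S⁆, ⁅S, S⁆⁆) : f • x = x := by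
  have hle : ⁅S, S⁆ ≤ S := Subgroup.commutator_le_self S
  suffices ⁅⁅S, S⁆, ⁅S, S⁆⁆ ≤ MulAction.stabilizer Γ x from this hf
  refine Subgroup.commutator_le.2 fun f hf g hg => ?_
  have hfix := smul_smul_sub_of_mem_commutator h hf
  have hgix := smul_smul_sub_of_mem_commutator h hg
  have hmem := hle (Subgroup.commutator_mem_commutator (hle hf) (hle hg))
  have hgf : g • f • x = f • x - x + g • x := by
    rw [← hfix g (hle hg), smul_sub, sub_add_cancel]
  have hfg : f • g • x = f • x - x + (g • x - x) + x := by
    have := hgix f (hle hf)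
    rw [smul_sub, sub_eq_iff_eq_add] at this
    rw [this]
    abel
  have := commutator_smul_smul_smul f g x
  rw [hfg, hgf, ← sub_add_cancel (g • x) x, ← add_assoc, smul_add, smul_add, hfix _ hmem,
    hgix _ hmem] at this
  rwa [add_sub_cancel_right, add_left_cancel_iff] at this

end CommutatorSMul

section PolynomialAutomorphisms

/-- The group of automorphisms of the affine space with coordinates indexed by `σ`, each identified
with the automorphism of the polynomial ring it induces. -/
abbrev PolynomialAut (σ k : Type*) [Field k] := MvPolynomial σ k ≃ₐ[k] MvPolynomial σ k

variable {σ k : Type*} [Field k]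

theorem algEquiv_apply_mem_supported (f : PolynomialAut σ k) {s t : Set σ}
    (hf : ∀ i ∈ s, f (X i) ∈ supported k t) {p : MvPolynomial σ k} (hp : p ∈ supported k s) :
    f p ∈ supported k t := by
  suffices supported k s ≤ (supported k t).comap f.toAlgHom from this hp
  rw [supported_eq_adjoin_X]
  refine Algebra.adjoin_le ?_
  rintro _ ⟨i, hi, rfl⟩
  exact hf i hi

theorem algEquiv_apply_eq_of_mem_supported (f : PolynomialAut σ k) {s : Set σ}
    (hf : ∀ i ∈ s, f (X i) = X i) {p : MvPolynomial σ k} (hp : p ∈ supported k s) : f p = p := by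
  suffices supported k s ≤ AlgHom.equalizer f.toAlgHom (AlgHom.id k _) from this hp
  rw [supported_eq_adjoin_X]
  refine Algebra.adjoin_le ?_
  rintro _ ⟨i, hi, rfl⟩
  exact hf i hi

theorem algEquiv_apply_C (f : PolynomialAut σ k) (a : k) : f (C a) = C a :=
  f.commutes a

theorem C_mul_mem_supported {s : Set σ} (a : k) {p : MvPolynomial σ k} (hp : p ∈ supported k s) :
    C a * p ∈ supported k s :=
  mul_mem ((supported k s).algebraMap_mem a) hp

theorem coeff_eq_zero_of_mem_supported {s : Set σ} {p : MvPolynomial σ k} (hp : p ∈ supported k s)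
    {c : σ →₀ ℕ} {i : σ} (hc : c i ≠ 0) (hi : i ∉ s) : coeff c p = 0 := by
  by_contra h
  exact hi (mem_supported.1 hp ((mem_vars_iff_mem_support i).2
    ⟨c, mem_support_iff.2 h, Finsupp.mem_support_iff.2 hc⟩))

/-- The automorphism acts on the third coordinate by an invertible affine map, as all elements of
`K` and of `H` do. -/
def ActsAffinelyOnX₂ (f : PolynomialAut (Fin 3) k) : Prop :=
  ∃ c d : k, c ≠ 0 ∧ f (X 2) = C c * X 2 + C d

variable {f h : PolynomialAut (Fin 3) k} {p q : MvPolynomial (Fin 3) k}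

theorem isK_iff : IsK k f ↔ ActsAffinelyOnX₂ f ∧
    ∃ (a b a' b' : k) (P Q : MvPolynomial (Fin 3) k), a * b' - a' * b ≠ 0 ∧
      P ∈ supported k {2} ∧ Q ∈ supported k {2} ∧
      f (X 0) = C a * X 0 + C b * X 1 + P ∧ f (X 1) = C a' * X 0 + C b' * X 1 + Q :=
  ⟨fun ⟨a, b, a', b', c, d, P, Q, hD, hc, hP, hQ, h₀, h₁, h₂⟩ =>
      ⟨⟨c, d, hc, h₂⟩, a, b, a', b', P, Q, hD, hP, hQ, h₀, h₁⟩,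
    fun ⟨⟨c, d, hc, h₂⟩, a, b, a', b', P, Q, hD, hP, hQ, h₀, h₁⟩ =>
      ⟨a, b, a', b', c, d, P, Q, hD, hc, hP, hQ, h₀, h₁, h₂⟩⟩

theorem isH_iff : IsH k f ↔ ActsAffinelyOnX₂ f ∧
    ∃ (a b : k) (P Q : MvPolynomial (Fin 3) k), a ≠ 0 ∧ b ≠ 0 ∧
      P ∈ supported k {1, 2} ∧ Q ∈ supported k {2} ∧
      f (X 0) = C a * X 0 + P ∧ f (X 1) = C b * X 1 + Q :=
  ⟨fun ⟨a, b, c, d, P, Q, ha, hb, hc, hP, hQ, h₀, h₁, h₂⟩ =>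
      ⟨⟨c, d, hc, h₂⟩, a, b, P, Q, ha, hb, hP, hQ, h₀, h₁⟩,
    fun ⟨⟨c, d, hc, h₂⟩, a, b, P, Q, ha, hb, hP, hQ, h₀, h₁⟩ =>
      ⟨a, b, c, d, P, Q, ha, hb, hc, hP, hQ, h₀, h₁, h₂⟩⟩

theorem ActsAffinelyOnX₂.one : ActsAffinelyOnX₂ (1 : PolynomialAut (Fin 3) k) :=
  ⟨1, 0, one_ne_zero, by simp⟩

theorem ActsAffinelyOnX₂.mul (hf : ActsAffinelyOnX₂ f) (hh : ActsAffinelyOnX₂ h) :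
    ActsAffinelyOnX₂ (f * h) := by
  obtain ⟨c, d, hc, hf⟩ := hf
  obtain ⟨γ, δ, hγ, hh⟩ := hh
  refine ⟨γ * c, γ * d + δ, mul_ne_zero hγ hc, ?_⟩
  simp only [AlgEquiv.mul_apply, hh, map_add, map_mul, algEquiv_apply_C, hf]
  ring

theorem ActsAffinelyOnX₂.inv (hf : ActsAffinelyOnX₂ f) : ActsAffinelyOnX₂ f⁻¹ := by
  obtain ⟨c, d, hc, hf⟩ := hf
  refine ⟨c⁻¹, -(c⁻¹ * d), inv_ne_zero hc, ?_⟩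
  change f.symm (X 2) = _
  rw [AlgEquiv.symm_apply_eq, map_add, map_mul, algEquiv_apply_C, algEquiv_apply_C, hf, mul_add,
    ← mul_assoc, ← C_mul, ← C_mul, inv_mul_cancel₀ hc, add_assoc, ← C_add]
  simp

theorem ActsAffinelyOnX₂.apply_mem_supported (hf : ActsAffinelyOnX₂ f)
    (hp : p ∈ supported k {2}) : f p ∈ supported k {2} := by
  obtain ⟨c, d, -, hf⟩ := hf
  refine algEquiv_apply_mem_supported f ?_ hp
  rintro _ rfl
  rw [hf]
  exact add_mem (C_mul_mem_supported c (X_mem_supported.2 rfl)) (Subalgebra.algebraMap_mem _ d)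

theorem ActsAffinelyOnX₂.apply_mem_supported_one_two (hf : ActsAffinelyOnX₂ f)
    (h₁ : f (X 1) ∈ supported k {1, 2}) (hp : p ∈ supported k {1, 2}) :
    f p ∈ supported k {1, 2} := by
  refine algEquiv_apply_mem_supported f ?_ hp
  rintro _ (rfl | rfl)
  · exact h₁
  · exact supported_mono (by simp) (hf.apply_mem_supported (X_mem_supported.2 rfl))

theorem C_mul_X_add_mem_supported (b : k) (hp : p ∈ supported k ({2} : Set (Fin 3))) :
    C b * X 1 + p ∈ supported k {1, 2} :=
  add_mem (C_mul_mem_supported b (X_mem_supported.2 (by simp))) (supported_mono (by simp) hp)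

theorem IsK.one : IsK k (1 : PolynomialAut (Fin 3) k) :=
  isK_iff.2 ⟨.one, 1, 0, 0, 1, 0, 0, by simp, zero_mem _, zero_mem _, by simp, by simp⟩

theorem IsK.mul (hf : IsK k f) (hh : IsK k h) : IsK k (f * h) := by
  obtain ⟨h₂, a, b, a', b', P, Q, hD, hP, hQ, h₀, h₁⟩ := isK_iff.1 hf
  obtain ⟨e₂, α, β, α', β', R, S, hE, hR, hS, e₀, e₁⟩ := isK_iff.1 hh
  refine isK_iff.2 ⟨h₂.mul e₂, α * a + β * a', α * b + β * b', α' * a + β' * a', α' * b + β' * b',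
    C α * P + C β * Q + f R, C α' * P + C β' * Q + f S, ?_, ?_, ?_, ?_, ?_⟩
  · convert mul_ne_zero hD hE using 1
    ring
  · exact add_mem (add_mem (C_mul_mem_supported α hP) (C_mul_mem_supported β hQ))
      (h₂.apply_mem_supported hR)
  · exact add_mem (add_mem (C_mul_mem_supported α' hP) (C_mul_mem_supported β' hQ))
      (h₂.apply_mem_supported hS)
  all_goals
    simp only [AlgEquiv.mul_apply, e₀, e₁, map_add, map_mul, algEquiv_apply_C, h₀, h₁]
    ring

theorem IsK.inv (hf : IsK k f) : IsK k f⁻¹ := by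
  obtain ⟨h₂, a, b, a', b', P, Q, hD, hP, hQ, h₀, h₁⟩ := isK_iff.1 hf
  have g₂ := h₂.inv
  set D := a * b' - a' * b
  have hCD : C D⁻¹ * (C a * C b' - C a' * C b) = (1 : MvPolynomial (Fin 3) k) := by
    rw [← C_mul, ← C_mul, ← C_sub, ← C_mul, inv_mul_cancel₀ hD, C_1]
  refine isK_iff.2 ⟨g₂, D⁻¹ * b', -(D⁻¹ * b), -(D⁻¹ * a'), D⁻¹ * a,
    C D⁻¹ * (C b * f⁻¹ Q - C b' * f⁻¹ P), C D⁻¹ * (C a' * f⁻¹ P - C a * f⁻¹ Q), ?_, ?_, ?_, ?_, ?_⟩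
  · convert inv_ne_zero hD using 1
    linear_combination D⁻¹ * inv_mul_cancel₀ hD
  · exact C_mul_mem_supported _ (sub_mem (C_mul_mem_supported _ (g₂.apply_mem_supported hQ))
      (C_mul_mem_supported _ (g₂.apply_mem_supported hP)))
  · exact C_mul_mem_supported _ (sub_mem (C_mul_mem_supported _ (g₂.apply_mem_supported hP))
      (C_mul_mem_supported _ (g₂.apply_mem_supported hQ)))
  all_goals
    refine f.symm_apply_eq.2 ?_
    simp only [map_add, map_mul, map_sub, map_neg, algEquiv_apply_C, AlgEquiv.aut_inv,
      AlgEquiv.apply_symm_apply, h₀, h₁]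
  · linear_combination -(X 0) * hCD
  · linear_combination -(X 1) * hCD

theorem IsH.one : IsH k (1 : PolynomialAut (Fin 3) k) :=
  isH_iff.2 ⟨.one, 1, 1, 0, 0, by simp, by simp, zero_mem _, zero_mem _, by simp, by simp⟩

theorem IsH.mul (hf : IsH k f) (hh : IsH k h) : IsH k (f * h) := by
  obtain ⟨h₂, a, b, P, Q, ha, hb, hP, hQ, h₀, h₁⟩ := isH_iff.1 hf
  obtain ⟨e₂, α, β, R, S, hα, hβ, hR, hS, e₀, e₁⟩ := isH_iff.1 hh
  refine isH_iff.2 ⟨h₂.mul e₂, α * a, β * b, C α * P + f R, C β * Q + f S, mul_ne_zero hα ha,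
    mul_ne_zero hβ hb, ?_, ?_, ?_, ?_⟩
  · exact add_mem (C_mul_mem_supported α hP) (h₂.apply_mem_supported_one_two
      (h₁ ▸ C_mul_X_add_mem_supported b hQ) hR)
  · exact add_mem (C_mul_mem_supported β hQ) (h₂.apply_mem_supported hS)
  all_goals
    simp only [AlgEquiv.mul_apply, e₀, e₁, map_add, map_mul, algEquiv_apply_C, h₀, h₁]
    ring

theorem inv_apply_X_eq (f : PolynomialAut σ k) {i : σ} {a : k} (ha : a ≠ 0) {p : MvPolynomial σ k}
    (h : f (X i) = C a * X i + p) : f⁻¹ (X i) = C a⁻¹ * X i + -(C a⁻¹ * f⁻¹ p) := by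
  have hinv : C a⁻¹ * C a = (1 : MvPolynomial σ k) := by rw [← C_mul, inv_mul_cancel₀ ha, C_1]
  refine f.symm_apply_eq.2 ?_
  simp only [map_add, map_mul, map_neg, algEquiv_apply_C, AlgEquiv.aut_inv,
    AlgEquiv.apply_symm_apply, h]
  linear_combination -(X i) * hinv

theorem IsH.inv (hf : IsH k f) : IsH k f⁻¹ := by
  obtain ⟨h₂, a, b, P, Q, ha, hb, hP, hQ, h₀, h₁⟩ := isH_iff.1 hf
  have g₂ := h₂.inv
  have g₁ := inv_apply_X_eq f hb h₁
  have hQ' : -(C b⁻¹ * f⁻¹ Q) ∈ supported k {2} :=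
    neg_mem (C_mul_mem_supported _ (g₂.apply_mem_supported hQ))
  exact isH_iff.2 ⟨g₂, a⁻¹, b⁻¹, _, _, inv_ne_zero ha, inv_ne_zero hb,
    neg_mem (C_mul_mem_supported _ (g₂.apply_mem_supported_one_two
      (g₁ ▸ C_mul_X_add_mem_supported _ hQ') hP)), hQ', inv_apply_X_eq f ha h₀, g₁⟩

variable (k) in
/-- The group `K` of the statement, bundled as a subgroup. -/
def subgroupK : Subgroup (PolynomialAut (Fin 3) k) where
  carrier := {f | IsK k f}
  one_mem' := .one
  mul_mem' := .mul
  inv_mem' := .inv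

variable (k) in
/-- The group `H` of the statement, bundled as a subgroup. -/
def subgroupH : Subgroup (PolynomialAut (Fin 3) k) where
  carrier := {f | IsH k f}
  one_mem' := .one
  mul_mem' := .mul
  inv_mem' := .inv

variable (k) in
theorem Cgroup_eq_sup : Cgroup k = subgroupK k ⊔ subgroupH k :=
  (Subgroup.closure_union {f : PolynomialAut (Fin 3) k | IsK k f} {f | IsH k f}).trans
    (congrArg₂ _ (Subgroup.closure_eq (subgroupK k)) (Subgroup.closure_eq (subgroupH k)))

variable (k) in
-- Two derived steps make the triangular group act trivially on each successive coordinate.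
theorem derivedSeries_subgroupH : derivedSeries (subgroupH k) 6 = ⊥ := by
  have h₂ : ∀ f ∈ derivedSeries (subgroupH k) 2, f • (X 2 : MvPolynomial (Fin 3) k) = X 2 := by
    refine fun f => smul_eq_of_mem_commutator_commutator (k := k) fun f _ => ?_
    obtain ⟨⟨c, d, hc, h₂⟩, -⟩ := isH_iff.1 f.2
    exact ⟨c, C d, hc, h₂.trans (by rw [smul_eq_C_mul]), fun g _ => algEquiv_apply_C _ _⟩
  have h₁ : ∀ f ∈ derivedSeries (subgroupH k) 4, f • (X 1 : MvPolynomial (Fin 3) k) = X 1 := by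
    refine fun f => smul_eq_of_mem_commutator_commutator (k := k) fun f _ => ?_
    obtain ⟨-, a, b, P, Q, -, hb, -, hQ, -, h₁⟩ := isH_iff.1 f.2
    refine ⟨b, Q, hb, h₁.trans (by rw [smul_eq_C_mul]),
      fun g hg => algEquiv_apply_eq_of_mem_supported _ ?_ hQ⟩
    rintro _ rfl
    exact h₂ g hg
  have h₀ : ∀ f ∈ derivedSeries (subgroupH k) 6, f • (X 0 : MvPolynomial (Fin 3) k) = X 0 := by
    refine fun f => smul_eq_of_mem_commutator_commutator (k := k) fun f _ => ?_
    obtain ⟨-, a, b, P, Q, ha, -, hP, -, h₀, -⟩ := isH_iff.1 f.2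
    refine ⟨a, P, ha, h₀.trans (by rw [smul_eq_C_mul]),
      fun g hg => algEquiv_apply_eq_of_mem_supported _ ?_ hP⟩
    rintro _ (rfl | rfl)
    exacts [h₁ g hg, h₂ g (derivedSeries_antitone _ (by norm_num) hg)]
  refine eq_bot_iff.2 fun f hf => Subgroup.mem_bot.2 ?_
  refine (subgroupH k).subtype_injective (AlgEquiv.coe_toAlgHom_injective (algHom_ext fun i => ?_))
  fin_cases i
  exacts [h₀ f hf, h₁ f (derivedSeries_antitone _ (by norm_num) hf),
    h₂ f (derivedSeries_antitone _ (by norm_num) hf)]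

theorem coeff_single_linear_add (a b : k) (hp : p ∈ supported k ({2} : Set (Fin 3))) :
    coeff (Finsupp.single 0 1) (C a * X 0 + C b * X 1 + p) = a ∧
      coeff (Finsupp.single 1 1) (C a * X 0 + C b * X 1 + p) = b := by
  simp [coeff_C_mul, coeff_X, Finsupp.single_left_inj,
    coeff_eq_zero_of_mem_supported hp (i := 0), coeff_eq_zero_of_mem_supported hp (i := 1)]

theorem ActsAffinelyOnX₂.coeff_single_apply (hf : ActsAffinelyOnX₂ f) (a b : k)
    (hp : p ∈ supported k {2}) (i : Fin 2) :
    coeff (Finsupp.single i.castSucc 1) (f (C a * X 0 + C b * X 1 + p)) =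
      coeff (Finsupp.single i.castSucc 1) (f (X 0)) * a +
        coeff (Finsupp.single i.castSucc 1) (f (X 1)) * b := by
  have := coeff_eq_zero_of_mem_supported (hf.apply_mem_supported hp)
    (c := Finsupp.single i.castSucc 1) (i := i.castSucc) (by simp) (by simp [Fin.ext_iff]; omega)
  simp [algEquiv_apply_C, coeff_C_mul, this, mul_comm]

/-- The action of an element of `K` on the span of `x₁` and `x₂` modulo `k[x₃]`, as a matrix in this
basis, which is the transpose of the matrix with rows `a, b` and `a', b'`. -/
noncomputable def linearPart (f : PolynomialAut (Fin 3) k) : Matrix (Fin 2) (Fin 2) k :=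
  .of fun i j => coeff (Finsupp.single i.castSucc 1) (f (X j.castSucc))

theorem linearPart_eq {a b a' b' : k} (hp : p ∈ supported k {2}) (hq : q ∈ supported k {2})
    (h₀ : f (X 0) = C a * X 0 + C b * X 1 + p) (h₁ : f (X 1) = C a' * X 0 + C b' * X 1 + q) :
    linearPart f = !![a, a'; b, b'] := by
  ext i j
  fin_cases i <;> fin_cases j <;>
    simp [linearPart, h₀, h₁, coeff_single_linear_add a b hp, coeff_single_linear_add a' b' hq]

theorem linearPart_mul (hf : IsK k f) (hh : IsK k h) :
    linearPart (f * h) = linearPart f * linearPart h := by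
  obtain ⟨-, a, b, a', b', P, Q, -, hP, hQ, h₀, h₁⟩ := isK_iff.1 hh
  have h₂ := (isK_iff.1 hf).1
  rw [linearPart_eq hP hQ h₀ h₁]
  ext i j
  rw [Matrix.mul_apply, Fin.sum_univ_two]
  fin_cases j
  · exact (congrArg _ (congrArg f h₀)).trans (h₂.coeff_single_apply a b hP i)
  · exact (congrArg _ (congrArg f h₁)).trans (h₂.coeff_single_apply a' b' hQ i)

variable (k) in
/-- `linearPart` as a homomorphism from `K` to `GL₂(k)`. -/
noncomputable def linearPartHom : subgroupK k →* (Matrix (Fin 2) (Fin 2) k)ˣ :=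
  MonoidHom.toHomUnits
    { toFun f := linearPart f.1
      map_one' := by
        ext i j
        fin_cases i <;> fin_cases j <;> simp [linearPart, Finsupp.single_left_inj, coeff_X]
      map_mul' f h := linearPart_mul f.2 h.2 }

theorem isH_of_linearPart_eq_one (hf : IsK k f) (h : linearPart f = 1) : IsH k f := by
  obtain ⟨h₂, a, b, a', b', P, Q, -, hP, hQ, h₀, h₁⟩ := isK_iff.1 hf
  rw [linearPart_eq hP hQ h₀ h₁, Matrix.one_fin_two] at h
  obtain ⟨⟨rfl, rfl⟩, rfl, rfl⟩ : (a = 1 ∧ a' = 0) ∧ b = 0 ∧ b' = 1 := by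
    simpa [← Matrix.ext_iff, Fin.forall_fin_two] using h
  exact isH_iff.2 ⟨h₂, 1, 1, P, Q, one_ne_zero, one_ne_zero, supported_mono (by simp) hP, hQ,
    by simpa using h₀, by simpa using h₁⟩

variable (k) in
theorem isSolvable_ker_linearPartHom : Group.IsSolvable (linearPartHom k).ker := by
  have hmem : ∀ f : (linearPartHom k).ker, f.1.1 ∈ subgroupH k := fun f =>
    isH_of_linearPart_eq_one f.1.2 (congrArg Units.val ((MonoidHom.mem_ker).1 f.2))
  exact ⟨6, derivedSeries_eq_bot_of_forall_mem
    (f := (subgroupK k).subtype.comp (linearPartHom k).ker.subtype)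
    ((subgroupK k).subtype_injective.comp (Subgroup.subtype_injective _)) hmem
    (derivedSeries_subgroupH k)⟩

theorem strongTitsAlternative_subgroupK
    (h : StrongTitsAlternative (Matrix (Fin 2) (Fin 2) k)ˣ) :
    StrongTitsAlternative (subgroupK k) :=
  h.of_ker (linearPartHom k) (isSolvable_ker_linearPartHom k)

end PolynomialAutomorphisms

/-! ### Lexicographic degrees and the action of `K` and `H` -/

section LexDegree

open scoped MonomialOrder
open MonomialOrder (lex)

variable {σ k : Type*} [Field k]

theorem lex_lt_iff_fin_three {c d : Fin 3 →₀ ℕ} : c ≺[lex] d ↔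
    c 0 < d 0 ∨ (c 0 = d 0 ∧ (c 1 < d 1 ∨ (c 1 = d 1 ∧ c 2 < d 2))) := by
  rw [MonomialOrder.lex_lt_iff, Finsupp.Lex.lt_iff]
  simp only [Fin.exists_fin_succ, Fin.forall_fin_succ]
  simp
  omega

theorem lex_le_iff_fin_three {c d : Fin 3 →₀ ℕ} : c ≼[lex] d ↔
    c 0 < d 0 ∨ (c 0 = d 0 ∧ (c 1 < d 1 ∨ (c 1 = d 1 ∧ c 2 ≤ d 2))) := by
  rw [← not_lt, lex_lt_iff_fin_three]
  omega

theorem degree_C_mul_le (m : MonomialOrder σ) (a : k) (p : MvPolynomial σ k) :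
    m.degree (C a * p) ≼[m] m.degree p := by
  simpa using m.degree_mul_le (f := C a) (g := p)

theorem degree_C_mul_of_ne_zero (m : MonomialOrder σ) {a : k} (ha : a ≠ 0)
    (p : MvPolynomial σ k) : m.degree (C a * p) = m.degree p := by
  rcases eq_or_ne p 0 with rfl | hp
  · simp
  · rw [m.degree_mul (C_ne_zero.2 ha) hp, m.degree_C, zero_add]

theorem degree_add_le_of_le {m : MonomialOrder σ} {p q : MvPolynomial σ k} {d : σ →₀ ℕ}
    (hp : m.degree p ≼[m] d) (hq : m.degree q ≼[m] d) : m.degree (p + q) ≼[m] d :=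
  m.degree_add_le.trans (sup_le hp hq)

theorem degree_add_lt_of_lt {m : MonomialOrder σ} {p q : MvPolynomial σ k} {d : σ →₀ ℕ}
    (hp : m.degree p ≺[m] d) (hq : m.degree q ≺[m] d) : m.degree (p + q) ≺[m] d :=
  m.degree_add_le.trans_lt (sup_lt_iff.2 ⟨hp, hq⟩)

variable {f h : PolynomialAut (Fin 3) k} {p : MvPolynomial (Fin 3) k} {d : Fin 3 →₀ ℕ}

theorem apply_zero_eq_zero_of_mem_supported_one_two (hp : p ∈ supported k {1, 2})
    (hd : d ∈ p.support) : d 0 = 0 := by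
  by_contra h
  exact mem_support_iff.1 hd (coeff_eq_zero_of_mem_supported hp h (by simp))

theorem degree_lt_of_mem_supported_two (hp : p ∈ supported k {2}) (hd : 1 ≤ d 0) :
    lex.degree p ≺[lex] d := by
  refine (MonomialOrder.degree_lt_iff (lex_lt_iff_fin_three.2 (Or.inl hd))).2 fun c hc => ?_
  refine lex_lt_iff_fin_three.2 (Or.inl ?_)
  rwa [apply_zero_eq_zero_of_mem_supported_one_two (supported_mono (by simp) hp) hc]

theorem algEquiv_apply_monomial (f : PolynomialAut (Fin 3) k) (hd : d 0 = 0) (a : k) :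
    f (monomial d a) = C a * (f (X 1) ^ d 1 * f (X 2) ^ d 2) := by
  rw [monomial_eq, map_mul, algEquiv_apply_C, Finsupp.prod_fintype _ _ (by simp),
    Fin.prod_univ_three, hd, pow_zero, one_mul, map_mul, map_pow, map_pow]

theorem ActsAffinelyOnX₂.degree_apply_X_two (hf : ActsAffinelyOnX₂ f) :
    lex.degree (f (X 2)) = Finsupp.single 2 1 := by
  obtain ⟨c, d, hc, hf⟩ := hf
  have hX : lex.degree (C c * X 2 : MvPolynomial (Fin 3) k) = Finsupp.single 2 1 := by
    rw [degree_C_mul_of_ne_zero _ hc, MonomialOrder.degree_X]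
  rw [hf, MonomialOrder.degree_add_of_lt, hX]
  rw [hX, MonomialOrder.degree_C, lex_lt_iff_fin_three]
  simp

theorem ActsAffinelyOnX₂.degree_apply_pow_mul_pow (hf : ActsAffinelyOnX₂ f) (i j : ℕ) :
    lex.degree (f (X 1) ^ i * f (X 2) ^ j) =
      i • lex.degree (f (X 1)) + j • Finsupp.single 2 1 := by
  have hne : ∀ i, f (X i) ≠ 0 := fun i => (map_ne_zero_iff f f.injective).2 (X_ne_zero i)
  rw [MonomialOrder.degree_mul (pow_ne_zero _ (hne 1)) (pow_ne_zero _ (hne 2)),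
    MonomialOrder.degree_pow, MonomialOrder.degree_pow, hf.degree_apply_X_two]

-- A polynomial in `x₂` and `x₃` keeps its leading monomial when `x₂` is replaced by a polynomial
-- whose leading monomial involves `x₁`.
theorem le_degree_apply_of_mem_supported (hf : ActsAffinelyOnX₂ f)
    (hf₁ : 1 ≤ lex.degree (f (X 1)) 0) (hp : p ∈ supported k {1, 2}) (hp0 : p ≠ 0) :
    lex.degree p 1 • lex.degree (f (X 1)) + lex.degree p 2 • Finsupp.single 2 1
      ≼[lex] lex.degree (f p) := by
  set e := lex.degree p with he
  have hzero : ∀ c ∈ p.support, c 0 = 0 := fun c =>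
    apply_zero_eq_zero_of_mem_supported_one_two hp
  have hmem : e ∈ p.support := MonomialOrder.degree_mem_support hp0
  have hlt : ∀ c ∈ p.support, c ≠ e → c 1 < e 1 ∨ c 1 = e 1 ∧ c 2 < e 2 := by
    intro c hc hce
    have hle := MonomialOrder.le_degree (m := lex) hc
    rw [← he, le_iff_lt_or_eq, lex_lt_iff_fin_three, hzero c hc, hzero e hmem] at hle
    simpa [hce] using hle
  refine MonomialOrder.le_degree (mem_support_iff.2 ?_)
  conv_lhs => rw [p.as_sum, map_sum, coeff_sum]
  rw [Finset.sum_eq_single_of_mem e hmem, algEquiv_apply_monomial f (hzero e hmem), coeff_C_mul,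
    ← hf.degree_apply_pow_mul_pow]
  · have hne : ∀ i, f (X i) ≠ 0 := fun i => (map_ne_zero_iff f f.injective).2 (X_ne_zero i)
    exact mul_ne_zero (mem_support_iff.1 hmem) (MonomialOrder.coeff_degree_ne_zero_iff.2
      (mul_ne_zero (pow_ne_zero _ (hne 1)) (pow_ne_zero _ (hne 2))))
  · intro c hc hce
    rw [algEquiv_apply_monomial f (hzero c hc), coeff_C_mul]
    refine mul_eq_zero_of_right _ (MonomialOrder.coeff_eq_zero_of_lt (m := lex) ?_)
    rw [hf.degree_apply_pow_mul_pow, lex_lt_iff_fin_three]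
    rcases hlt c hc hce with hlt | ⟨heq, hlt⟩
    · left
      simpa using Nat.mul_lt_mul_of_pos_right hlt hf₁
    · right
      simp [heq, hlt]

theorem degree_apply_one_of_forall_ne (hp : p ∈ supported k {1, 2})
    (hlin : ∀ (b : k), ∀ q ∈ supported k {2}, p ≠ C b * X 1 + q) :
    2 ≤ lex.degree p 1 ∨ (lex.degree p 1 = 1 ∧ 1 ≤ lex.degree p 2) := by
  by_contra hcon
  set b := coeff (Finsupp.single 1 1) p
  refine hlin b (p - C b * X 1) (mem_supported.2 fun i hi => ?_) (by ring)
  obtain ⟨c, hc, hci⟩ := (mem_vars_iff_mem_support i).1 hi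
  have hne : Finsupp.single 1 1 ≠ c := by
    rintro rfl
    simp [b] at hc
  have hcp : c ∈ p.support := by simpa [coeff_C_mul, coeff_X, hne] using hc
  have hle := lex_le_iff_fin_three.1 (MonomialOrder.le_degree (m := lex) hcp)
  have hp0 : p ≠ 0 := by
    rintro rfl
    simp at hcp
  rw [apply_zero_eq_zero_of_mem_supported_one_two hp hcp,
    apply_zero_eq_zero_of_mem_supported_one_two hp (MonomialOrder.degree_mem_support hp0)] at hle
  have h0 := apply_zero_eq_zero_of_mem_supported_one_two hp hcp
  fin_cases i
  · simp [h0] at hci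
  · refine absurd (Finsupp.ext fun i => ?_) hne
    fin_cases i <;> simp at hci ⊢ <;> omega
  · rfl

theorem degree_lt_degree_apply_of_forall_ne (hf : ActsAffinelyOnX₂ f)
    (hf₁ : 1 ≤ lex.degree (f (X 1)) 0) (hp : p ∈ supported k {1, 2})
    (hlin : ∀ (b : k), ∀ q ∈ supported k {2}, p ≠ C b * X 1 + q) :
    lex.degree (f (X 1)) ≺[lex] lex.degree (f p) := by
  have hp0 : p ≠ 0 := fun h => hlin 0 0 (zero_mem _) (by simp [h])
  refine lt_of_lt_of_le (lex_lt_iff_fin_three.2 ?_) (le_degree_apply_of_mem_supported hf hf₁ hp hp0)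
  rcases degree_apply_one_of_forall_ne hp hlin with h | ⟨h, h'⟩
  · left
    simp only [Finsupp.add_apply, Finsupp.smul_apply, smul_eq_mul]
    nlinarith
  · right
    simp [h]
    omega

/-- The condition `deg f₁ ≤ deg f₂` on an automorphism `(f₁, f₂, f₃)` whose leading monomial of `f₂`
involves `x₁`, for lexicographic degrees. Right multiplication by `H \ K` leads from it to
`HasLexDegreeGT`, and right multiplication by `K \ H` leads back. -/
structure HasLexDegreeLE (f : PolynomialAut (Fin 3) k) : Prop where
  actsAffinelyOnX₂ : ActsAffinelyOnX₂ f
  one_le_degree : 1 ≤ lex.degree (f (X 1)) 0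
  degree_le : lex.degree (f (X 0)) ≼[lex] lex.degree (f (X 1))

/-- The condition `deg f₂ < deg f₁` on an automorphism `(f₁, f₂, f₃)` whose leading monomial of `f₂`
involves `x₁`, for lexicographic degrees. -/
structure HasLexDegreeGT (f : PolynomialAut (Fin 3) k) : Prop where
  actsAffinelyOnX₂ : ActsAffinelyOnX₂ f
  one_le_degree : 1 ≤ lex.degree (f (X 1)) 0
  degree_lt : lex.degree (f (X 1)) ≺[lex] lex.degree (f (X 0))

theorem HasLexDegreeLE.mul (hf : HasLexDegreeLE f) (hH : IsH k h) (hK : ¬ IsK k h) :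
    HasLexDegreeGT (f * h) := by
  obtain ⟨hf₂, hv, hle⟩ := hf
  obtain ⟨h₂, a, b, P, Q, ha, hb, hP, hQ, h₀, h₁⟩ := isH_iff.1 hH
  have hlin : ∀ (b : k), ∀ q ∈ supported k {2}, P ≠ C b * X 1 + q := by
    rintro β q hq rfl
    exact hK (isK_iff.2 ⟨h₂, a, β, 0, b, q, Q, by simp [ha, hb], hq, hQ, by rw [h₀, add_assoc],
      by simp [h₁]⟩)
  have hlt := degree_lt_degree_apply_of_forall_ne hf₂ hv hP hlin
  have hdeg₁ : lex.degree ((f * h) (X 1)) = lex.degree (f (X 1)) := by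
    rw [AlgEquiv.mul_apply, h₁, map_add, map_mul, algEquiv_apply_C, MonomialOrder.degree_add_of_lt,
      degree_C_mul_of_ne_zero _ hb]
    rw [degree_C_mul_of_ne_zero _ hb]
    exact degree_lt_of_mem_supported_two (hf₂.apply_mem_supported hQ) hv
  have hdeg₀ : lex.degree ((f * h) (X 0)) = lex.degree (f P) := by
    rw [AlgEquiv.mul_apply, h₀, map_add, map_mul, algEquiv_apply_C,
      MonomialOrder.degree_add_eq_right_of_lt]
    rw [degree_C_mul_of_ne_zero _ ha]
    exact hle.trans_lt hlt
  exact ⟨hf₂.mul h₂, by rwa [hdeg₁], by rwa [hdeg₀, hdeg₁]⟩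

theorem HasLexDegreeGT.one_le_degree_apply_X_zero (hf : HasLexDegreeGT f) :
    1 ≤ lex.degree (f (X 0)) 0 := by
  have := lex_lt_iff_fin_three.1 hf.degree_lt
  have := hf.one_le_degree
  omega

theorem HasLexDegreeGT.mul (hf : HasLexDegreeGT f) (hK : IsK k h) (hH : ¬ IsH k h) :
    HasLexDegreeLE (f * h) := by
  have hu := hf.one_le_degree_apply_X_zero
  obtain ⟨hf₂, -, hlt⟩ := hf
  obtain ⟨h₂, a, b, a', b', P, Q, hD, hP, hQ, h₀, h₁⟩ := isK_iff.1 hK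
  have ha' : a' ≠ 0 := by
    rintro rfl
    simp only [zero_mul, sub_zero, mul_ne_zero_iff] at hD
    exact hH (isH_iff.2 ⟨h₂, a, b', C b * X 1 + P, Q, hD.1, hD.2, C_mul_X_add_mem_supported b hP,
      hQ, by rw [h₀, add_assoc], by simp [h₁]⟩)
  have hdeg₁ : lex.degree ((f * h) (X 1)) = lex.degree (f (X 0)) := by
    rw [AlgEquiv.mul_apply, h₁, map_add, map_add, map_mul, map_mul, algEquiv_apply_C,
      algEquiv_apply_C, add_assoc, MonomialOrder.degree_add_of_lt, degree_C_mul_of_ne_zero _ ha']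
    rw [degree_C_mul_of_ne_zero _ ha']
    exact degree_add_lt_of_lt ((degree_C_mul_le _ _ _).trans_lt hlt)
      (degree_lt_of_mem_supported_two (hf₂.apply_mem_supported hQ) hu)
  refine ⟨hf₂.mul h₂, by rwa [hdeg₁], ?_⟩
  rw [hdeg₁, AlgEquiv.mul_apply, h₀, map_add, map_add, map_mul, map_mul, algEquiv_apply_C,
    algEquiv_apply_C]
  exact degree_add_le_of_le (degree_add_le_of_le (degree_C_mul_le _ _ _)
    ((degree_C_mul_le _ _ _).trans hlt.le))
    (degree_lt_of_mem_supported_two (hf₂.apply_mem_supported hP) hu).le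

theorem HasLexDegreeGT.not_isK (hf : HasLexDegreeGT f) : ¬ IsK k f := by
  intro hK
  obtain ⟨-, a, b, -, -, P, -, -, hP, -, h₀, -⟩ := isK_iff.1 hK
  have hX : Finsupp.single 0 1 ≼[lex] lex.degree (f (X 1)) := by
    have := hf.one_le_degree
    rw [lex_le_iff_fin_three]
    simp
    omega
  refine hf.degree_lt.not_ge (le_trans ?_ hX)
  rw [h₀]
  refine degree_add_le_of_le (degree_add_le_of_le ((degree_C_mul_le _ _ _).trans ?_)
    ((degree_C_mul_le _ _ _).trans ?_)) (degree_lt_of_mem_supported_two hP (by simp)).le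
  · rw [MonomialOrder.degree_X]
  · rw [MonomialOrder.degree_X, lex_le_iff_fin_three]
    simp

theorem isK_swap : IsK k (renameEquiv k (Equiv.swap 0 1)) :=
  isK_iff.2 ⟨⟨1, 0, one_ne_zero, by simp [Equiv.swap_apply_of_ne_of_ne]⟩, 0, 1, 1, 0, 0, 0,
    by simp, zero_mem _, zero_mem _, by simp, by simp⟩

theorem hasLexDegreeLE_swap : HasLexDegreeLE (renameEquiv k (Equiv.swap (0 : Fin 3) 1)) where
  actsAffinelyOnX₂ := (isK_iff.1 isK_swap).1
  one_le_degree := by simp [MonomialOrder.degree_X]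
  degree_le := by simp [MonomialOrder.degree_X, lex_le_iff_fin_three]

theorem notMem_subgroupK_of_isAlternatingProduct {C : Subgroup (PolynomialAut (Fin 3) k)} {w : C}
    (hw : IsAlternatingProduct ((subgroupK k).subgroupOf C) ((subgroupH k).subgroupOf C) w) :
    w ∉ (subgroupK k).subgroupOf C := by
  suffices HasLexDegreeGT (renameEquiv k (Equiv.swap (0 : Fin 3) 1) * w.1) from
    fun h => this.not_isK (isK_swap.mul h)
  induction hw with
  | of hb hbA => exact hasLexDegreeLE_swap.mul hb hbA
  | mul_mul _ ha haB hb hbA ih => exact (ih.mul ha haB).mul hb hbA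

variable (k) in
theorem Cgroup_strongTitsAlternative_of_units_matrix
    (h : StrongTitsAlternative (Matrix (Fin 2) (Fin 2) k)ˣ) : StrongTitsAlternative (Cgroup k) := by
  have hK : subgroupK k ≤ Cgroup k := (Cgroup_eq_sup k).symm ▸ le_sup_left
  have hH : subgroupH k ≤ Cgroup k := (Cgroup_eq_sup k).symm ▸ le_sup_right
  have : Group.IsSolvable (subgroupH k) := ⟨6, derivedSeries_subgroupH k⟩
  have : Group.IsSolvable ((subgroupH k).subgroupOf (Cgroup k)) :=
    Group.isSolvable_of_isSolvable_injective (Subgroup.subgroupOfEquivOfLe hH).injective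
      (f := (Subgroup.subgroupOfEquivOfLe hH).toMonoidHom)
  refine .of_forall_isAlternatingProduct_notMem ?_
    (fun w => notMem_subgroupK_of_isAlternatingProduct)
    (.of_injective (Subgroup.subgroupOfEquivOfLe hK).toMonoidHom
      (Subgroup.subgroupOfEquivOfLe hK).injective (strongTitsAlternative_subgroupK h))
    .of_isSolvable
    (Group.isSolvable_of_isSolvable_injective (Subgroup.inclusion_injective inf_le_right))
  rw [← Subgroup.subgroupOf_sup hK hH, ← Cgroup_eq_sup, Subgroup.subgroupOf_self]

end LexDegree

/-! ### Embeddings of countable fields into normed fields -/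

section Embeddings

theorem isIntegral_of_isOfFinOrder {R A : Type*} [CommRing R] [CommRing A] [Algebra R A] {x : A}
    (hx : IsOfFinOrder x) : IsIntegral R x := by
  obtain ⟨n, hn, hx⟩ := isOfFinOrder_iff_pow_eq_one.1 hx
  exact .of_pow hn (hx ▸ isIntegral_one)

theorem infinite_of_isTranscendenceBasis {R L ι : Type*} [CommRing R] [Countable R] [Field L]
    [Algebra R L] [IsAlgClosed L] [Uncountable L] {b : ι → L} (hb : IsTranscendenceBasis R b) :
    Infinite ι := by
  by_contra h
  have : Finite ι := not_infinite_iff_finite.1 h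
  have hle := (IsAlgClosed.cardinal_le_max_transcendence_basis b hb).trans
    (max_le (max_le (Cardinal.lift_le_aleph0.2 Cardinal.mk_le_aleph0)
      (Cardinal.lift_le_aleph0.2 Cardinal.mk_le_aleph0)) le_rfl)
  rw [Cardinal.lift_le_aleph0, Cardinal.mk_le_aleph0_iff] at hle
  exact not_countable (α := L) hle

theorem nonempty_algHom_of_countable {R F L : Type*} [CommRing R] [Field F] [Field L]
    [Algebra R F] [Algebra R L] [FaithfulSMul R F] [FaithfulSMul R L] [Countable F]
    [Uncountable L] [IsAlgClosed L] : Nonempty (F →ₐ[R] L) := by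
  have : Nontrivial R := (algebraMap R F).domain_nontrivial
  have : Countable R := (FaithfulSMul.algebraMap_injective R F).countable
  obtain ⟨s, hs⟩ := exists_isTranscendenceBasis R F
  obtain ⟨t, ht⟩ := exists_isTranscendenceBasis R L
  have := infinite_of_isTranscendenceBasis ht
  obtain ⟨e, he⟩ := exists_injective_nat s
  have hind := ht.1.comp (fun i => Infinite.natEmbedding t (e i))
    ((Infinite.natEmbedding t).injective.comp he)
  let A := Algebra.adjoin R (Set.range ((↑) : s → F))
  let ψ : A →ₐ[R] L := (MvPolynomial.aeval (fun i => (Infinite.natEmbedding t (e i) : L))).comp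
    hs.1.aevalEquiv.symm.toAlgHom
  have hψ : Function.Injective ψ :=
    Function.Injective.comp (g := MvPolynomial.aeval _) hind hs.1.aevalEquiv.symm.injective
  let _ : Algebra A L := ψ.toRingHom.toAlgebra
  have : FaithfulSMul A L := (faithfulSMul_iff_algebraMap_injective A L).2 hψ
  have : Algebra.IsAlgebraic A F := hs.isAlgebraic
  let f : F →ₐ[A] L := IsAlgClosed.lift
  exact ⟨{ f.toRingHom with
    commutes' := fun r => (f.commutes (algebraMap R A r)).trans (ψ.commutes r) }⟩

section

variable {F L : Type*} [Field F] [CharZero F] [Field L] [CharZero L] [Countable F]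
  [Uncountable L] [IsAlgClosed L] {x : F} {y : L}

theorem exists_ringHom_of_transcendental (hx : Transcendental ℚ x) (hy : Transcendental ℚ y) :
    ∃ φ : F →+* L, φ x = y := by
  let _ : Algebra (Polynomial ℚ) F := (Polynomial.aeval x).toRingHom.toAlgebra
  let _ : Algebra (Polynomial ℚ) L := (Polynomial.aeval y).toRingHom.toAlgebra
  have : FaithfulSMul (Polynomial ℚ) F :=
    (faithfulSMul_iff_algebraMap_injective _ _).2 (transcendental_iff_injective.1 hx)
  have : FaithfulSMul (Polynomial ℚ) L :=
    (faithfulSMul_iff_algebraMap_injective _ _).2 (transcendental_iff_injective.1 hy)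
  obtain ⟨φ⟩ := nonempty_algHom_of_countable (R := Polynomial ℚ) (F := F) (L := L)
  have hX : algebraMap (Polynomial ℚ) F .X = x := Polynomial.aeval_X x
  have hY : algebraMap (Polynomial ℚ) L .X = y := Polynomial.aeval_X y
  exact ⟨φ, (congrArg φ hX.symm).trans ((φ.commutes _).trans hY)⟩

theorem exists_ringHom_of_aeval_minpoly_eq_zero (hx : IsAlgebraic ℚ x)
    (hy : Polynomial.aeval y (minpoly ℚ x) = 0) : ∃ φ : F →+* L, φ x = y := by
  have : Fact (Irreducible (minpoly ℚ x)) := ⟨minpoly.irreducible hx.isIntegral⟩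
  let _ : Algebra (AdjoinRoot (minpoly ℚ x)) F :=
    (AdjoinRoot.lift (algebraMap ℚ F) x (minpoly.aeval ℚ x)).toAlgebra
  let _ : Algebra (AdjoinRoot (minpoly ℚ x)) L :=
    (AdjoinRoot.lift (algebraMap ℚ L) y hy).toAlgebra
  obtain ⟨φ⟩ := nonempty_algHom_of_countable (R := AdjoinRoot (minpoly ℚ x)) (F := F) (L := L)
  have hX : algebraMap (AdjoinRoot (minpoly ℚ x)) F (AdjoinRoot.root _) = x :=
    AdjoinRoot.lift_root _
  have hY : algebraMap (AdjoinRoot (minpoly ℚ x)) L (AdjoinRoot.root _) = y :=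
    AdjoinRoot.lift_root _
  exact ⟨φ, (congrArg φ hX.symm).trans ((φ.commutes _).trans hY)⟩

end

theorem exists_root_one_lt_norm {L : Type*} [NormedField L] [IsUltrametricDist L] [IsAlgClosed L]
    {q : Polynomial L} (hq : q.Monic) {n : ℕ} (hn : 1 < ‖q.coeff n‖) :
    ∃ r, q.IsRoot r ∧ 1 < ‖r‖ := by
  by_contra! h
  let O := (NormedField.valuation (K := L)).integer
  have hroots (r) (hr : r ∈ q.roots) : r ∈ O := h r (Polynomial.isRoot_of_mem_roots hr)
  have hlift : q ∈ Polynomial.liftsRing O.subtype := by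
    rw [(IsAlgClosed.splits q).eq_prod_roots_of_monic hq]
    refine Subring.multiset_prod_mem _ _ fun p hp => ?_
    obtain ⟨r, hr, rfl⟩ := Multiset.mem_map.1 hp
    refine sub_mem ?_ ?_ <;> rw [← Polynomial.lifts_iff_liftsRing]
    · exact Polynomial.X_mem_lifts _
    · exact Polynomial.C'_mem_lifts ⟨⟨r, hroots r hr⟩, rfl⟩
  obtain ⟨c, hc⟩ := (Polynomial.lifts_iff_coeff_lifts _).1
    ((Polynomial.lifts_iff_liftsRing _ _).2 hlift) n
  exact hn.not_ge (hc ▸ c.2)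

theorem uncountable_of_algebra {K L : Type*} [NontriviallyNormedField K] [CompleteSpace K]
    [Field L] [Algebra K L] : Uncountable L := by
  have : Uncountable K := Cardinal.aleph0_lt_mk_iff.1
    (Cardinal.aleph0_lt_continuum.trans_le (continuum_le_cardinal_of_nontriviallyNormedField K))
  exact (algebraMap K L).injective.uncountable

theorem exists_prime_one_lt_norm_padic {q : ℚ} (hq : q.den ≠ 1) :
    ∃ (p : ℕ) (_ : Fact p.Prime), 1 < ‖(q : ℚ_[p])‖ := by
  obtain ⟨p, hp, hpd⟩ := Nat.exists_prime_and_dvd hq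
  have : Fact p.Prime := ⟨hp⟩
  refine ⟨p, this, not_le.1 fun h => ?_⟩
  have hnorm : ‖((q.den : ℤ_[p]) : ℚ_[p])‖ = 1 := PadicInt.isUnit_iff.1 (PadicInt.isUnit_den q h)
  exact (Padic.norm_natCast_lt_one_iff.2 hpd).ne (by simpa using hnorm)

theorem isIntegral_int_of_den_coeff_minpoly {F : Type*} [Field F] [CharZero F] {x : F}
    (hx : IsIntegral ℚ x) (h : ∀ n, ((minpoly ℚ x).coeff n).den = 1) : IsIntegral ℤ x := by
  have hlift : minpoly ℚ x ∈ Polynomial.lifts (algebraMap ℤ ℚ) :=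
    (Polynomial.lifts_iff_coeff_lifts _).2 fun n => ⟨_, (Rat.den_eq_one_iff _).1 (h n)⟩
  obtain ⟨r, hr, -, hmonic⟩ := Polynomial.lifts_and_degree_eq_and_monic hlift (minpoly.monic hx)
  refine ⟨r, hmonic, ?_⟩
  rw [← Polynomial.aeval_def, ← Polynomial.aeval_map_algebraMap ℚ, hr, minpoly.aeval]

/-- Kronecker's theorem, over a field not assumed to be a number field. -/
theorem isOfFinOrder_of_norm_eq_one {F : Type*} [Field F] [CharZero F] {x : F}
    (hx : IsIntegral ℤ x) (h : ∀ z : ℂ, Polynomial.aeval z (minpoly ℚ x) = 0 → ‖z‖ = 1) :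
    IsOfFinOrder x := by
  let E := IntermediateField.adjoin ℚ {x}
  let y : E := IntermediateField.AdjoinSimple.gen ℚ x
  have : FiniteDimensional ℚ E := IntermediateField.adjoin.finiteDimensional hx.tower_top
  have : NumberField E := ⟨⟩
  have hy : IsIntegral ℤ y := (isIntegral_algebraMap_iff (algebraMap E F).injective).1 hx
  have hnorm (φ : E →+* ℂ) : ‖φ y‖ = 1 := h _ <| by
    rw [← IntermediateField.minpoly_gen ℚ x]
    refine (Polynomial.aeval_algHom_apply φ.toRatAlgHom y _).trans ?_
    exact (congrArg φ (minpoly.aeval ℚ y)).trans (map_zero φ)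
  obtain ⟨n, hn, hyn⟩ := NumberField.Embeddings.pow_eq_one_of_norm_eq_one E ℂ hy hnorm
  exact isOfFinOrder_iff_pow_eq_one.2 ⟨n, hn, congrArg Subtype.val hyn⟩

theorem exists_transcendental_norm_ne_one : ∃ z : ℂ, Transcendental ℚ z ∧ ‖z‖ ≠ 1 := by
  let l : ℂ := algebraMap ℝ ℂ (liouvilleNumber (2 : ℕ))
  have hl : Transcendental ℚ l := by
    rw [transcendental_algebraMap_iff (algebraMap ℝ ℂ).injective]
    exact fun h =>
      transcendental_liouvilleNumber le_rfl ((IsFractionRing.isAlgebraic_iff ℤ ℚ ℝ).2 h)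
  by_cases h : ‖l‖ = 1
  · refine ⟨2 * l, fun h2 => hl ?_, by rw [norm_mul, h]; norm_num⟩
    simpa using (isAlgebraic_algebraMap (A := ℂ) (2⁻¹ : ℚ)).mul h2
  · exact ⟨l, hl, h⟩

variable {F : Type*} [Field F] [CharZero F] [Countable F] {x : F}

theorem exists_ringHom_norm_ne_one_of_isAlgebraic (halg : IsAlgebraic ℚ x)
    (hx : ¬IsOfFinOrder x) : ∃ (L : Type) (_ : NormedField L) (φ : F →+* L), ‖φ x‖ ≠ 1 := by
  by_cases hC : ∃ z : ℂ, Polynomial.aeval z (minpoly ℚ x) = 0 ∧ ‖z‖ ≠ 1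
  · obtain ⟨z, hz, hz1⟩ := hC
    have := uncountable_of_algebra (K := ℂ) (L := ℂ)
    obtain ⟨φ, rfl⟩ := exists_ringHom_of_aeval_minpoly_eq_zero halg hz
    exact ⟨ℂ, inferInstance, φ, hz1⟩
  push Not at hC
  obtain ⟨n, hn⟩ : ∃ n, ((minpoly ℚ x).coeff n).den ≠ 1 := by
    by_contra! h
    exact hx (isOfFinOrder_of_norm_eq_one
      (isIntegral_int_of_den_coeff_minpoly halg.isIntegral h) hC)
  obtain ⟨p, hp, hpn⟩ := exists_prime_one_lt_norm_padic hn
  have hcoeff : ‖((minpoly ℚ x).map (algebraMap ℚ (PadicAlgCl p))).coeff n‖ =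
      ‖(((minpoly ℚ x).coeff n : ℚ) : ℚ_[p])‖ := by
    rw [Polynomial.coeff_map, ← PadicAlgCl.norm_extends]
    simp
  obtain ⟨z, hz, hz1⟩ := exists_root_one_lt_norm
    ((minpoly.monic halg.isIntegral).map (algebraMap ℚ (PadicAlgCl p))) (hcoeff ▸ hpn)
  rw [Polynomial.IsRoot, Polynomial.eval_map_algebraMap] at hz
  have := uncountable_of_algebra (K := ℚ_[p]) (L := PadicAlgCl p)
  obtain ⟨φ, rfl⟩ := exists_ringHom_of_aeval_minpoly_eq_zero halg hz
  exact ⟨PadicAlgCl p, inferInstance, φ, hz1.ne'⟩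

theorem exists_ringHom_norm_ne_one (hx : ¬IsOfFinOrder x) :
    ∃ (L : Type) (_ : NormedField L) (φ : F →+* L), ‖φ x‖ ≠ 1 := by
  by_cases halg : IsAlgebraic ℚ x
  · exact exists_ringHom_norm_ne_one_of_isAlgebraic halg hx
  · obtain ⟨z, hz, hz1⟩ := exists_transcendental_norm_ne_one
    have := uncountable_of_algebra (K := ℂ) (L := ℂ)
    obtain ⟨φ, rfl⟩ := exists_ringHom_of_transcendental halg hz
    exact ⟨ℂ, inferInstance, φ, hz1⟩

end Embeddings

/-! ### Ping-pong in `SL₂` over a normed field -/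

section PingPong

open Matrix MatrixGroups

theorem ContainsNonabelianFree.of_pingPong_conj {G α : Type*} [Group G] [MulAction G α] (a b : G)
    {X Y : Set α} (hne : X.Nonempty) (hXY : Disjoint X Y) (hX : ∀ y ∉ Y, a • y ∈ X)
    (hY : ∀ y ∉ X, a⁻¹ • y ∈ Y) (hb : ∀ y ∈ X ∪ Y, b • y ∉ X ∪ Y) :
    ContainsNonabelianFree G := by
  let w : Fin 2 → G := ![1, b]
  let Z (Z₀ : Set α) (i : Fin 2) : Set α := {y | (w i)⁻¹ • y ∈ Z₀}
  have hdisj (i j) (hij : i ≠ j) (y) (hi : (w i)⁻¹ • y ∈ X ∪ Y) (hj : (w j)⁻¹ • y ∈ X ∪ Y) :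
      False := by
    fin_cases i <;> fin_cases j <;> try exact hij rfl
    · exact hb _ hj (by simpa [w] using hi)
    · exact hb _ hi (by simpa [w] using hj)
  refine .of_pingPong (fun i => w i * a * (w i)⁻¹) (Z X) (Z Y)
    (fun i => ⟨w i • hne.some, by simpa [Z] using hne.some_mem⟩)
    (fun i j hij => Set.disjoint_left.2 fun y h1 h2 => hdisj i j hij y (.inl h1) (.inl h2))
    (fun i j hij => Set.disjoint_left.2 fun y h1 h2 => hdisj i j hij y (.inr h1) (.inr h2))
    (fun i j => Set.disjoint_left.2 fun y h1 h2 => ?_)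
    (fun i y hy => by simpa [Z, mul_smul] using hX _ hy)
    (fun i y hy => by simpa [Z, mul_smul] using hY _ hy)
  obtain rfl | hij := eq_or_ne i j
  · exact Set.disjoint_left.1 hXY h1 h2
  · exact hdisj i j hij y (.inl h1) (.inr h2)

section CommRing

variable {R : Type*} [CommRing R]

theorem SL2_mul_apply (A B : SL(2, R)) (i j : Fin 2) :
    (A * B) i j = A i 0 * B 0 j + A i 1 * B 1 j := by
  rw [Matrix.SpecialLinearGroup.coe_mul, Matrix.mul_apply, Fin.sum_univ_two]

theorem SL2_inv_apply (A : SL(2, R)) :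
    A⁻¹ 0 0 = A 1 1 ∧ A⁻¹ 0 1 = -A 0 1 ∧ A⁻¹ 1 0 = -A 1 0 ∧ A⁻¹ 1 1 = A 0 0 := by
  rw [SpecialLinearGroup.SL2_inv_expl]
  exact ⟨rfl, rfl, rfl, rfl⟩

theorem SL2_det (A : SL(2, R)) : A 0 0 * A 1 1 - A 0 1 * A 1 0 = 1 := by
  rw [← Matrix.det_fin_two, A.det_coe]

theorem SL2_apply_mul_apply_eq_one {A : SL(2, R)} (h : A 1 0 = 0) : A 0 0 * A 1 1 = 1 := by
  simpa [h] using SL2_det A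

theorem SL2_pow_apply_of_diagonal {A : SL(2, R)} (h01 : A 0 1 = 0) (h10 : A 1 0 = 0) (n : ℕ) :
    (A ^ n) 0 0 = A 0 0 ^ n ∧ (A ^ n) 0 1 = 0 ∧ (A ^ n) 1 0 = 0 := by
  induction n with
  | zero => simp
  | succ n ih =>
    obtain ⟨h1, h2, h3⟩ := ih
    simp only [pow_succ _ n, SL2_mul_apply, h1, h2, h3, h01, h10]
    simp

end CommRing

section Norm

variable {L : Type*} [NormedField L] {R : ℝ}

theorem exists_one_le_forall_sum_norm_le {ι : Type*} [Fintype ι] {f : ι → L}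
    (hf : ∀ i, f i ≠ 0) : ∃ R : ℝ, 1 ≤ R ∧ ∀ i, ∑ j, ‖f j‖ ≤ R * ‖f i‖ := by
  have hev (i) : ∀ᶠ R : ℝ in Filter.atTop, ∑ j, ‖f j‖ ≤ R * ‖f i‖ :=
    (Filter.tendsto_id.atTop_mul_const (norm_pos_iff.2 (hf i))).eventually_ge_atTop _
  exact ((Filter.eventually_ge_atTop 1).and (Filter.eventually_all.2 hev)).exists

theorem norm_mul_add_mul_le_of_lt (hR : 1 ≤ R) {α β γ δ s t : L}
    (hγ : ‖α‖ + ‖β‖ + ‖δ‖ ≤ R * ‖γ‖) (h : R * ‖t‖ < ‖s‖) :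
    ‖α * s + β * t‖ ≤ R * ‖γ * s + δ * t‖ := by
  have hts : ‖t‖ ≤ ‖s‖ := by nlinarith [norm_nonneg t]
  have hupper : ‖α * s + β * t‖ ≤ ‖α‖ * ‖s‖ + ‖β‖ * ‖s‖ := by
    refine (norm_add_le _ _).trans ?_
    rw [norm_mul, norm_mul]
    gcongr
  have hlower : ‖γ‖ * ‖s‖ - ‖δ‖ * ‖t‖ ≤ ‖γ * s + δ * t‖ := by
    simpa [sub_neg_eq_add] using norm_sub_norm_le (γ * s) (-(δ * t))
  calc ‖α * s + β * t‖ ≤ ‖α‖ * ‖s‖ + ‖β‖ * ‖s‖ := hupper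
    _ = (‖α‖ + ‖β‖ + ‖δ‖) * ‖s‖ - ‖δ‖ * ‖s‖ := by ring
    _ ≤ R * ‖γ‖ * ‖s‖ - ‖δ‖ * (R * ‖t‖) := by gcongr
    _ = R * (‖γ‖ * ‖s‖ - ‖δ‖ * ‖t‖) := by ring
    _ ≤ R * ‖γ * s + δ * t‖ := by gcongr

theorem mul_norm_mul_lt_norm_mul {μ ν s t : L} (hR : 0 < R) (hμν : μ * ν = 1) (hμ : R < ‖μ‖)
    (hst : ‖t‖ ≤ R * ‖s‖) (h0 : s ≠ 0 ∨ t ≠ 0) : R * ‖ν * t‖ < ‖μ * s‖ := by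
  have hs : 0 < ‖s‖ := by
    refine norm_pos_iff.2 fun hs => ?_
    rw [hs, norm_zero, mul_zero, norm_le_zero_iff] at hst
    exact h0.elim (fun h => h hs) (fun h => h hst)
  have hμ0 : 0 < ‖μ‖ := hR.trans hμ
  have hμνn : ‖μ‖ * ‖ν‖ = 1 := by rw [← norm_mul, hμν, norm_one]
  rw [norm_mul, norm_mul]
  refine lt_of_mul_lt_mul_left (a := ‖μ‖) ?_ hμ0.le
  calc ‖μ‖ * (R * (‖ν‖ * ‖t‖)) = R * ‖t‖ := by linear_combination R * ‖t‖ * hμνn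
    _ ≤ R * (R * ‖s‖) := by gcongr
    _ < ‖μ‖ * (‖μ‖ * ‖s‖) := by gcongr

/-- The matrices whose first column lies in the cone of slope `1 / R` around the first axis: the
attracting set of a diagonal matrix with large first entry. -/
def attractingCone (L : Type*) [NormedField L] (R : ℝ) : Set SL(2, L) :=
  {A | R * ‖A 1 0‖ < ‖A 0 0‖}

/-- The matrices whose first column lies in the cone of slope `1 / R` around the second axis: the
attracting set of the inverse of a diagonal matrix with large first entry. -/
def repellingCone (L : Type*) [NormedField L] (R : ℝ) : Set SL(2, L) :=
  {A | R * ‖A 0 0‖ < ‖A 1 0‖}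

theorem disjoint_attractingCone_repellingCone (hR : 1 ≤ R) :
    Disjoint (attractingCone L R) (repellingCone L R) := by
  refine Set.disjoint_left.2 fun A h1 h2 => ?_
  have h1 : R * ‖A 1 0‖ < ‖A 0 0‖ := h1
  have h2 : R * ‖A 0 0‖ < ‖A 1 0‖ := h2
  nlinarith [norm_nonneg (A 0 0), norm_nonneg (A 1 0)]

theorem mul_notMem_cones (hR : 1 ≤ R) {A B : SL(2, L)}
    (hB : ∀ i j, ‖B 0 0‖ + ‖B 0 1‖ + ‖B 1 0‖ + ‖B 1 1‖ ≤ R * ‖B i j‖)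
    (hA : A ∈ attractingCone L R ∪ repellingCone L R) :
    B * A ∉ attractingCone L R ∪ repellingCone L R := by
  have hle : ‖(B * A) 0 0‖ ≤ R * ‖(B * A) 1 0‖ ∧ ‖(B * A) 1 0‖ ≤ R * ‖(B * A) 0 0‖ := by
    have := norm_nonneg (B 0 0)
    have := norm_nonneg (B 0 1)
    have := norm_nonneg (B 1 0)
    have := norm_nonneg (B 1 1)
    simp only [SL2_mul_apply]
    obtain hA | hA := hA
    · exact ⟨norm_mul_add_mul_le_of_lt hR (by linarith [hB 1 0]) hA,
        norm_mul_add_mul_le_of_lt hR (by linarith [hB 0 0]) hA⟩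
    · rw [add_comm (B 0 0 * _), add_comm (B 1 0 * _)]
      exact ⟨norm_mul_add_mul_le_of_lt hR (by linarith [hB 1 1]) hA,
        norm_mul_add_mul_le_of_lt hR (by linarith [hB 0 1]) hA⟩
  rintro (h | h)
  exacts [hle.1.not_gt h, hle.2.not_gt h]

theorem SL2_apply_zero_ne_zero {K : Type*} [Field K] (A : SL(2, K)) : A 0 0 ≠ 0 ∨ A 1 0 ≠ 0 := by
  by_contra! h
  simpa [h.1, h.2] using SL2_det A

theorem mul_mem_attractingCone (hR : 0 < R) {A B : SL(2, L)} (h01 : A 0 1 = 0) (h10 : A 1 0 = 0)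
    (hA : R < ‖A 0 0‖) (hB : B ∉ repellingCone L R) : A * B ∈ attractingCone L R := by
  simpa [attractingCone, SL2_mul_apply, h01, h10] using mul_norm_mul_lt_norm_mul hR
    (SL2_apply_mul_apply_eq_one h10) hA (not_lt.1 hB) (SL2_apply_zero_ne_zero B)

theorem inv_mul_mem_repellingCone (hR : 0 < R) {A B : SL(2, L)} (h01 : A 0 1 = 0)
    (h10 : A 1 0 = 0) (hA : R < ‖A 0 0‖) (hB : B ∉ attractingCone L R) :
    A⁻¹ * B ∈ repellingCone L R := by
  obtain ⟨i00, i01, i10, i11⟩ := SL2_inv_apply A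
  simpa [repellingCone, SL2_mul_apply, -SpecialLinearGroup.coe_inv, i00, i01, i10, i11, h01, h10]
    using mul_norm_mul_lt_norm_mul hR (SL2_apply_mul_apply_eq_one h10) hA (not_lt.1 hB)
      (SL2_apply_zero_ne_zero B).symm

variable {Γ : Subgroup SL(2, L)} {A B : SL(2, L)}

theorem containsNonabelianFree_of_one_lt_norm (hA : A ∈ Γ) (hB : B ∈ Γ) (h01 : A 0 1 = 0)
    (h10 : A 1 0 = 0) (h00 : 1 < ‖A 0 0‖) (hB0 : ∀ i j, B i j ≠ 0) : ContainsNonabelianFree Γ := by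
  obtain ⟨R, hR, hRB⟩ :=
    exists_one_le_forall_sum_norm_le (f := fun i : Fin 2 × Fin 2 => B i.1 i.2) fun i => hB0 i.1 i.2
  obtain ⟨N, hN⟩ := pow_unbounded_of_one_lt R h00
  obtain ⟨e00, e01, e10⟩ := SL2_pow_apply_of_diagonal h01 h10 N
  rw [← norm_pow, ← e00] at hN
  have hR0 : 0 < R := zero_lt_one.trans_le hR
  have hBsum (i j) : ‖B 0 0‖ + ‖B 0 1‖ + ‖B 1 0‖ + ‖B 1 1‖ ≤ R * ‖B i j‖ := by
    simpa [Fintype.sum_prod_type, ← add_assoc] using hRB (i, j)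
  exact .of_pingPong_conj (α := SL(2, L)) ⟨A ^ N, Γ.pow_mem hA N⟩ ⟨B, hB⟩
    ⟨1, by simp [attractingCone]⟩ (disjoint_attractingCone_repellingCone hR)
    (fun _ => mul_mem_attractingCone hR0 e01 e10 hN)
    (fun _ => inv_mul_mem_repellingCone hR0 e01 e10 hN) (fun _ => mul_notMem_cones hR hBsum)

theorem containsNonabelianFree_of_norm_ne_one (hA : A ∈ Γ) (hB : B ∈ Γ) (h01 : A 0 1 = 0)
    (h10 : A 1 0 = 0) (h00 : ‖A 0 0‖ ≠ 1) (hB0 : ∀ i j, B i j ≠ 0) : ContainsNonabelianFree Γ := by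
  obtain h00 | h00 := h00.lt_or_gt
  · obtain ⟨i00, i01, i10, -⟩ := SL2_inv_apply A
    have hnorm : ‖A 0 0‖ * ‖A 1 1‖ = 1 := by
      rw [← norm_mul, SL2_apply_mul_apply_eq_one h10, norm_one]
    refine containsNonabelianFree_of_one_lt_norm (Γ.inv_mem hA) hB (by rw [i01, h01, neg_zero])
      (by rw [i10, h10, neg_zero]) ?_ hB0
    rw [i00]
    nlinarith [norm_nonneg (A 0 0), norm_nonneg (A 1 1)]
  · exact containsNonabelianFree_of_one_lt_norm hA hB h01 h10 h00 hB0

end Norm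

theorem exists_map_subtype_eq_of_forall_mem {n R : Type*} [DecidableEq n] [Fintype n] [CommRing R]
    {S : Subring R} {A : SpecialLinearGroup n R} (hA : ∀ i j, A i j ∈ S) :
    ∃ A' : SpecialLinearGroup n S, SpecialLinearGroup.map S.subtype A' = A := by
  refine ⟨⟨Matrix.of fun i j => ⟨A i j, hA i j⟩, S.subtype_injective ?_⟩, rfl⟩
  rw [RingHom.map_det, map_one]
  exact A.det_coe

theorem countable_subfield_closure {K : Type*} [Field K] {s : Set K} (hs : s.Countable) :
    Countable (Subfield.closure s) :=
  Cardinal.mk_le_aleph0_iff.1 <| (Subfield.cardinalMk_closure_le_max s).trans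
    (max_le (Cardinal.mk_le_aleph0_iff.2 hs) le_rfl)

theorem containsNonabelianFree_of_not_isOfFinOrder {k : Type*} [Field k] [CharZero k]
    {Γ : Subgroup SL(2, k)} {A B : SL(2, k)} (hA : A ∈ Γ) (hB : B ∈ Γ) (h01 : A 0 1 = 0)
    (h10 : A 1 0 = 0) (h00 : ¬IsOfFinOrder (A 0 0)) (hB0 : ∀ i j, B i j ≠ 0) :
    ContainsNonabelianFree Γ := by
  obtain ⟨F, hF, hAF, hBF⟩ :
      ∃ F : Subfield k, Countable F ∧ (∀ i j, A i j ∈ F) ∧ ∀ i j, B i j ∈ F :=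
    ⟨_, countable_subfield_closure ((Set.countable_range fun i : Fin 2 × Fin 2 => A i.1 i.2).union
        (Set.countable_range fun i : Fin 2 × Fin 2 => B i.1 i.2)),
      fun i j => Subfield.subset_closure (.inl ⟨(i, j), rfl⟩),
      fun i j => Subfield.subset_closure (.inr ⟨(i, j), rfl⟩)⟩
  obtain ⟨A, rfl⟩ := exists_map_subtype_eq_of_forall_mem (S := F.toSubring) hAF
  obtain ⟨B, rfl⟩ := exists_map_subtype_eq_of_forall_mem (S := F.toSubring) hBF
  obtain ⟨L, _, φ, hφ⟩ := exists_ringHom_norm_ne_one (F := F) (x := A 0 0)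
    fun h => h00 (F.subtype.toMonoidHom.isOfFinOrder h)
  let Λ := Γ.comap (SpecialLinearGroup.map F.subtype)
  have hΛ : ContainsNonabelianFree (Λ.map (SpecialLinearGroup.map φ)) :=
    containsNonabelianFree_of_norm_ne_one (Subgroup.mem_map_of_mem _ hA)
      (Subgroup.mem_map_of_mem _ hB) ((congrArg φ (Subtype.ext h01)).trans (map_zero φ))
      ((congrArg φ (Subtype.ext h10)).trans (map_zero φ)) hφ
      fun i j h0 => hB0 i j (congrArg Subtype.val ((map_eq_zero φ).1 h0))
  have hinj : Function.Injective
      (SpecialLinearGroup.map (n := Fin 2) F.subtype : _ →* SpecialLinearGroup (Fin 2) k) :=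
    fun X Y h => Matrix.SpecialLinearGroup.ext _ _ fun i j =>
      Subtype.ext (congrArg (fun Z : SL(2, k) => Z i j) h)
  exact .of_injective ((SpecialLinearGroup.map F.subtype).subgroupComap Γ)
    (fun X Y h => Subtype.ext (hinj (congrArg Subtype.val h)))
    (.of_surjective _ ((SpecialLinearGroup.map φ).subgroupMap_surjective Λ) hΛ)

end PingPong

/-! ### Triangular matrices in `SL₂` -/

section Triangular

open Matrix MatrixGroups

theorem exists_finiteIndex_of_forall_inv_mul_mem {G ι : Type*} [Group G] [Finite ι]
    {P : ι → Set G} {U : ι → Subgroup G} (hcover : ∀ g, ∃ i, g ∈ P i)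
    (hP : ∀ i, ∀ g ∈ P i, ∀ h ∈ P i, g⁻¹ * h ∈ U i) : ∃ i, (U i).FiniteIndex := by
  have := Fintype.ofFinite ι
  have hrep (i) : ∃ g, ∀ h ∈ P i, g⁻¹ * h ∈ U i := by
    obtain hi | ⟨g, hg⟩ := (P i).eq_empty_or_nonempty
    · exact ⟨1, by simp [hi]⟩
    · exact ⟨g, hP i g hg⟩
  choose g hg using hrep
  obtain ⟨i, -, hi⟩ := Subgroup.exists_finiteIndex_of_leftCoset_cover (s := .univ) (g := g) (H := U)
    (Set.eq_univ_of_forall fun h =>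
      have ⟨i, hi⟩ := hcover h
      Set.mem_iUnion₂.2 ⟨i, Finset.mem_univ i, (mem_leftCoset_iff _).2 (hg i h hi)⟩)
  exact ⟨i, hi⟩

variable {k : Type*} [Field k]

/-- The stabilizer in `SL₂` of the `j`-th coordinate axis: the upper triangular matrices for
`j = 0`, the lower triangular ones for `j = 1`. -/
def axisStabilizer (k : Type*) [Field k] (j : Fin 2) : Subgroup SL(2, k) where
  carrier := {A | ∀ i ≠ j, A i j = 0}
  one_mem' i hi := by simp [hi]
  mul_mem' {A B} hA hB i hi := by
    have hsum : ∀ l ∈ Finset.univ, A i l * B l j = 0 := fun l _ => by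
      obtain rfl | hl := eq_or_ne l j
      · rw [hA i hi, zero_mul]
      · rw [hB l hl, mul_zero]
    exact (Matrix.mul_apply ..).trans (Finset.sum_eq_zero hsum)
  inv_mem' {A} hA i hi := by
    obtain ⟨-, h01, h10, -⟩ := SL2_inv_apply A
    fin_cases i <;> fin_cases j <;> try exact absurd rfl hi
    · exact h01.trans (neg_eq_zero.2 (hA 0 hi))
    · exact h10.trans (neg_eq_zero.2 (hA 1 hi))

/-- The eigenvalue on the `j`-th coordinate axis of the matrices stabilizing it. -/
def axisEigenvalue (k : Type*) [Field k] (j : Fin 2) : axisStabilizer k j →* k where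
  toFun A := A.1 j j
  map_one' := by simp
  map_mul' A B := by
    refine (Matrix.mul_apply ..).trans (Finset.sum_eq_single j (fun l _ hl => ?_) (by simp))
    rw [B.2 l hl, mul_zero]

theorem apply_zero_one_mul_apply_one_zero {j : Fin 2} {A B : SL(2, k)}
    (hA : A ∈ axisStabilizer k j) (hB : B ∈ axisStabilizer k j) : A 0 1 * B 1 0 = 0 := by
  fin_cases j
  · exact mul_eq_zero_of_right _ (hB 1 one_ne_zero)
  · exact mul_eq_zero_of_left (hA 0 zero_ne_one) _

theorem isSolvable_axisStabilizer (j : Fin 2) : Group.IsSolvable (axisStabilizer k j) := by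
  refine isSolvable_of_ker (axisEigenvalue k j).toHomUnits
    (Group.isSolvable_of_comm fun A B => Subtype.ext (Subtype.ext ?_)) inferInstance
  have hdiag (A : (axisEigenvalue k j).toHomUnits.ker) (i : Fin 2) : A.1.1 i i = 1 := by
    have hj : A.1.1 j j = 1 := congrArg Units.val (MonoidHom.mem_ker.1 A.2)
    have hdet := SL2_det A.1.1
    rw [apply_zero_one_mul_apply_one_zero A.1.2 A.1.2, sub_zero] at hdet
    obtain rfl | hij := eq_or_ne i j
    · exact hj
    · fin_cases i <;> fin_cases j <;> simp_all
  have hAB := apply_zero_one_mul_apply_one_zero A.1.2 B.1.2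
  have hBA := apply_zero_one_mul_apply_one_zero B.1.2 A.1.2
  change A.1.1 * B.1.1 = B.1.1 * A.1.1
  ext a b
  simp only [SL2_mul_apply]
  fin_cases a <;> fin_cases b <;> simp only [Fin.zero_eta, Fin.mk_one, hdiag]
  · linear_combination hAB - hBA
  · ring
  · ring
  · linear_combination hBA - hAB

theorem isSolvable_of_forall_apply_eq_zero {Γ : Subgroup SL(2, k)} (h : ∀ A ∈ Γ, A 1 0 = 0) :
    Group.IsSolvable Γ := by
  have := isSolvable_axisStabilizer (k := k) 0
  refine Group.isSolvable_of_isSolvable_injective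
    (Subgroup.inclusion_injective (K := axisStabilizer k 0) fun A hA i hi => ?_)
  rw [Fin.eq_one_of_ne_zero i hi]
  exact h A hA

theorem inv_mul_mem_axisStabilizer {A B : SL(2, k)} {i j : Fin 2} (hA : A i j = 0)
    (hB : B i j = 0) : A⁻¹ * B ∈ axisStabilizer k j := by
  obtain ⟨i00, i01, i10, i11⟩ := SL2_inv_apply A
  intro l hl
  fin_cases i <;> fin_cases j <;> fin_cases l <;> try exact absurd rfl hl
  all_goals
    simp only [Fin.zero_eta, Fin.mk_one, SL2_mul_apply, i00, i01, i10, i11] at hA hB ⊢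
    rw [hA, hB]
    ring

theorem isVirtuallySolvable_of_forall_exists_apply_eq_zero {Γ : Subgroup SL(2, k)}
    (h : ∀ A ∈ Γ, ∃ i j, A i j = 0) : IsVirtuallySolvable Γ := by
  obtain ⟨⟨i, j⟩, hfin⟩ := exists_finiteIndex_of_forall_inv_mul_mem
    (P := fun i : Fin 2 × Fin 2 => {A : Γ | A.1 i.1 i.2 = 0})
    (U := fun i => (axisStabilizer k i.2).subgroupOf Γ)
    (fun A => have ⟨i, j, hij⟩ := h A A.2; ⟨(i, j), hij⟩)
    fun i A hA B hB => inv_mul_mem_axisStabilizer hA hB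
  have := isSolvable_axisStabilizer (k := k) j
  exact ⟨_, hfin, Group.isSolvable_of_isSolvable_injective
    (f := Γ.subtype.subgroupComap (axisStabilizer k j))
    fun A B hAB => Subtype.ext (Subtype.ext (congrArg (fun C => C.1) hAB))⟩

theorem exists_conj_apply_one_zero_eq_zero [IsAlgClosed k] (A : SL(2, k)) :
    ∃ x, (MulAut.conj x A) 1 0 = 0 := by
  by_cases hc : A 1 0 = 0
  · exact ⟨1, by simpa using hc⟩
  obtain ⟨l, hl⟩ : ∃ l, l ^ 2 - (A 0 0 + A 1 1) * l + 1 = 0 := by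
    obtain ⟨l, hl⟩ := IsAlgClosed.exists_root
      (.X ^ 2 - .C (A 0 0 + A 1 1) * .X + .C 1 : Polynomial k)
      (ne_of_eq_of_ne (b := 2) (by compute_degree!) two_ne_zero)
    exact ⟨l, by simpa using hl⟩
  let x : SL(2, k) := ⟨!![0, (A 1 0)⁻¹; -A 1 0, l - A 1 1], by simp [hc]⟩
  obtain ⟨i00, -, i10, -⟩ := SL2_inv_apply x
  refine ⟨x, ?_⟩
  rw [MulAut.conj_apply]
  simp only [SL2_mul_apply, i00, i10]
  simp only [x, of_apply, cons_val', cons_val_zero, cons_val_one, cons_val_fin_one]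
  linear_combination A 1 0 * hl + A 1 0 * SL2_det A

theorem exists_conj_triangular [IsAlgClosed k] (A : SL(2, k)) :
    ∃ x, (MulAut.conj x A) 1 0 = 0 ∧
      ((MulAut.conj x A) 0 0 ≠ (MulAut.conj x A) 1 1 → (MulAut.conj x A) 0 1 = 0) := by
  obtain ⟨y, hy⟩ := exists_conj_apply_one_zero_eq_zero A
  generalize hB : MulAut.conj y A = B at hy
  by_cases hne : B 0 0 = B 1 1
  · exact ⟨y, by rw [hB]; exact ⟨hy, fun h => absurd hne h⟩⟩
  let z : SL(2, k) := ⟨!![1, B 0 1 / (B 0 0 - B 1 1); 0, 1], by simp⟩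
  obtain ⟨i00, i01, i10, i11⟩ := SL2_inv_apply z
  refine ⟨z * y, ?_⟩
  rw [map_mul, MulAut.mul_apply, hB, MulAut.conj_apply]
  simp only [SL2_mul_apply, i00, i01, i10, i11]
  simp only [z, of_apply, cons_val', cons_val_zero, cons_val_one, cons_val_fin_one, hy]
  refine ⟨by ring, fun _ => ?_⟩
  have := sub_ne_zero.2 hne
  field_simp
  ring

end Triangular

/-! ### Roots of unity with `|a - 1|² + |b - 1|² = |e - 1|²` -/

section RootsOfUnity

theorem pow_four_lt_two_pow {n : ℕ} (hn : 17 ≤ n) : n ^ 4 < 2 ^ n := by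
  induction n, hn using Nat.le_induction with
  | base => norm_num
  | succ n hn ih =>
    have h1 : 17 * n ^ 3 ≤ n ^ 4 := by nlinarith [pow_pos (show 0 < n by lia) 3]
    have h2 : 17 * n ^ 2 ≤ n ^ 3 := by nlinarith [pow_pos (show 0 < n by lia) 2]
    have h3 : 17 * n ≤ n ^ 2 := by nlinarith
    rw [pow_succ 2 n]
    nlinarith

theorem prime_pow_le_of_two_pow_totient_le {p m : ℕ} (hp : p.Prime)
    (h : 2 ^ (p ^ (m + 1)).totient ≤ p ^ 2) : p ^ (m + 1) ≤ 16 := by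
  rw [Nat.totient_prime_pow_succ hp] at h
  by_contra! h17
  have htotient : p ^ (m + 1) ≤ 2 * (p ^ m * (p - 1)) := by
    rw [pow_succ, mul_left_comm]
    exact Nat.mul_le_mul_left _ (by have := hp.two_le; lia)
  refine (pow_four_lt_two_pow h17).not_ge ?_
  calc
    2 ^ p ^ (m + 1) ≤ 2 ^ (2 * (p ^ m * (p - 1))) := Nat.pow_le_pow_right two_pos htotient
    _ = (2 ^ (p ^ m * (p - 1))) ^ 2 := by rw [mul_comm, pow_mul]
    _ ≤ (p ^ 2) ^ 2 := Nat.pow_le_pow_left h 2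
    _ = p ^ 4 := by ring
    _ ≤ (p ^ (m + 1)) ^ 4 := Nat.pow_le_pow_left (Nat.le_self_pow m.succ_ne_zero p) 4

theorem le_of_two_pow_totient_le {n : ℕ} (hn : 0 < n)
    (h : (2 : ℤ) ^ n.totient ≤ (Polynomial.cyclotomic n ℤ).eval 1 ^ 2) : n ≤ 16 := by
  by_cases hpp : ∃ p m : ℕ, p.Prime ∧ p ^ m = n
  · obtain ⟨p, _ | m, hp, rfl⟩ := hpp
    · simp
    have : Fact p.Prime := ⟨hp⟩
    rw [Polynomial.eval_one_cyclotomic_prime_pow] at h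
    exact prime_pow_le_of_two_pow_totient_le hp (by exact_mod_cast h)
  · rw [Polynomial.eval_one_cyclotomic_not_prime_pow (fun hp m hm => hpp ⟨_, m, hp, hm⟩)] at h
    have : 1 < (2 : ℤ) ^ n.totient := one_lt_pow₀ one_lt_two (Nat.totient_pos.2 hn).ne'
    linarith

theorem two_sub_sub_inv_eq_norm_sub_one_sq {z : ℂ} (hz : ‖z‖ = 1) :
    2 - z - z⁻¹ = (‖z - 1‖ ^ 2 : ℝ) := by
  rw [Complex.inv_eq_conj hz, Complex.ofReal_pow, ← Complex.mul_conj', map_sub, map_one]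
  have : z * (starRingEnd ℂ) z = 1 := by rw [Complex.mul_conj', hz]; simp
  linear_combination -this

theorem two_mul_norm_sub_one_mul_norm_sub_one_le {a b e : ℂ} (ha : ‖a‖ = 1) (hb : ‖b‖ = 1)
    (he : ‖e‖ = 1) (h : (2 - a - a⁻¹) + (2 - b - b⁻¹) = 2 - e - e⁻¹) :
    2 * ‖a - 1‖ * ‖b - 1‖ ≤ ‖e - 1‖ ^ 2 := by
  rw [two_sub_sub_inv_eq_norm_sub_one_sq ha, two_sub_sub_inv_eq_norm_sub_one_sq hb,
    two_sub_sub_inv_eq_norm_sub_one_sq he] at h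
  have h : ‖a - 1‖ ^ 2 + ‖b - 1‖ ^ 2 = ‖e - 1‖ ^ 2 := by exact_mod_cast h
  exact h ▸ two_mul_le_add_sq _ _

section NumberField

variable {F : Type*} [Field F] [NumberField F]

theorem norm_sub_one_eq_eval_cyclotomic_pow {η : F} {n : ℕ} (hη : IsPrimitiveRoot η n)
    (hn : 2 < n) : ∃ r ≠ 0, Module.finrank ℚ F = n.totient * r ∧
      Algebra.norm ℚ (η - 1) = (((Polynomial.cyclotomic n ℤ).eval 1 : ℤ) : ℚ) ^ r := by
  have : NeZero n := ⟨by lia⟩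
  let E := IntermediateField.adjoin ℚ {η}
  have : IsCyclotomicExtension {n} ℚ E := hη.intermediateField_adjoin_isCyclotomicExtension ℚ
  have hgen : IsPrimitiveRoot (IntermediateField.AdjoinSimple.gen ℚ η : E) n :=
    .of_map_of_injective (f := algebraMap E F) hη (algebraMap E F).injective
  have hirr := Polynomial.cyclotomic.irreducible_rat (n := n) (by lia)
  refine ⟨Module.finrank E F, Module.finrank_pos.ne', ?_, ?_⟩
  · rw [← IsCyclotomicExtension.finrank E hirr, Module.finrank_mul_finrank]
  · have hη : η - 1 = algebraMap E F (IntermediateField.AdjoinSimple.gen ℚ η - 1) := by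
      rw [map_sub, map_one]
      rfl
    rw [← Algebra.norm_norm (S := E), hη, Algebra.norm_algebraMap, map_pow,
      hgen.sub_one_norm_eq_eval_cyclotomic hn hirr]

theorem prod_norm_embeddings_eq_abs_norm (x : F) :
    ∏ φ : F →ₐ[ℚ] ℂ, ‖φ x‖ = |(Algebra.norm ℚ x : ℝ)| := by
  rw [← norm_prod, ← Algebra.norm_eq_prod_embeddings ℚ ℂ, eq_ratCast, Complex.norm_ratCast]

theorem one_le_abs_norm_of_isIntegral {x : F} (hx : IsIntegral ℤ x) (h0 : x ≠ 0) :
    1 ≤ |Algebra.norm ℚ x| := by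
  obtain ⟨m, hm⟩ := IsIntegrallyClosed.isIntegral_iff.1 (Algebra.isIntegral_norm ℚ hx)
  have hm0 : m ≠ 0 := by
    rintro rfl
    exact h0 (Algebra.norm_eq_zero_iff.1 (hm.symm.trans (map_zero _)))
  rw [← hm, eq_intCast]
  exact_mod_cast Int.one_le_abs hm0

theorem two_pow_finrank_le_norm_sub_one_sq {a b e : F} (ha : IsOfFinOrder a)
    (hb : IsOfFinOrder b) (he : IsOfFinOrder e) (ha1 : a ≠ 1) (hb1 : b ≠ 1)
    (h : (2 - a - a⁻¹) + (2 - b - b⁻¹) = 2 - e - e⁻¹) :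
    2 ^ Module.finrank ℚ F ≤ Algebra.norm ℚ (e - 1) ^ 2 := by
  have hφ (φ : F →ₐ[ℚ] ℂ) : 2 * ‖φ (a - 1)‖ * ‖φ (b - 1)‖ ≤ ‖φ (e - 1)‖ ^ 2 := by
    have hnorm {x : F} (hx : IsOfFinOrder x) : ‖φ x‖ = 1 :=
      ((φ : F →* ℂ).isOfFinOrder hx).norm_eq_one
    simp only [map_sub, map_one]
    refine two_mul_norm_sub_one_mul_norm_sub_one_le (hnorm ha) (hnorm hb) (hnorm he) ?_
    simpa only [map_add, map_sub, map_inv₀, map_ofNat] using congrArg φ h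
  have hprod := Finset.prod_le_prod (s := Finset.univ)
    (fun φ _ => by positivity) fun (φ : F →ₐ[ℚ] ℂ) _ => hφ φ
  simp only [Finset.prod_mul_distrib, Finset.prod_pow, prod_norm_embeddings_eq_abs_norm,
    Finset.prod_const, Finset.card_univ, AlgHom.card ℚ F ℂ, sq_abs] at hprod
  have hint {x : F} (hx : IsOfFinOrder x) (hx1 : x ≠ 1) : 1 ≤ |Algebra.norm ℚ (x - 1)| :=
    one_le_abs_norm_of_isIntegral ((isIntegral_of_isOfFinOrder hx).sub isIntegral_one)
      (sub_ne_zero.2 hx1)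
  calc (2 : ℚ) ^ Module.finrank ℚ F
      ≤ 2 ^ Module.finrank ℚ F * |Algebra.norm ℚ (a - 1)| * |Algebra.norm ℚ (b - 1)| := by
        rw [mul_assoc]
        exact le_mul_of_one_le_right (by positivity)
          (one_le_mul_of_one_le_of_one_le (hint ha ha1) (hint hb hb1))
    _ ≤ Algebra.norm ℚ (e - 1) ^ 2 := by exact_mod_cast hprod

theorem orderOf_le_of_numberField {a b e : F} (ha : IsOfFinOrder a) (hb : IsOfFinOrder b)
    (he : IsOfFinOrder e) (ha1 : a ≠ 1) (hb1 : b ≠ 1)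
    (h : (2 - a - a⁻¹) + (2 - b - b⁻¹) = 2 - e - e⁻¹) : orderOf e ≤ 16 := by
  by_contra! hn
  obtain ⟨r, hr, hdeg, hnorm⟩ :=
    norm_sub_one_eq_eval_cyclotomic_pow (IsPrimitiveRoot.orderOf e) (by lia)
  have hle := two_pow_finrank_le_norm_sub_one_sq ha hb he ha1 hb1 h
  rw [hdeg, hnorm, pow_mul, pow_right_comm _ r 2,
    pow_le_pow_iff_left₀ (by positivity) (by positivity) hr] at hle
  exact hn.not_ge (le_of_two_pow_totient_le (by lia) (by exact_mod_cast hle))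

end NumberField

theorem orderOf_le_of_add_eq {k : Type*} [Field k] [CharZero k] {a b e : k} (ha : IsOfFinOrder a)
    (hb : IsOfFinOrder b) (he : IsOfFinOrder e) (ha1 : a ≠ 1) (hb1 : b ≠ 1)
    (h : (2 - a - a⁻¹) + (2 - b - b⁻¹) = 2 - e - e⁻¹) : orderOf e ≤ 16 := by
  obtain ⟨F, hF, haF, hbF, heF⟩ : ∃ F : IntermediateField ℚ k,
      NumberField F ∧ a ∈ F ∧ b ∈ F ∧ e ∈ F := by
    have : FiniteDimensional ℚ (IntermediateField.adjoin ℚ {a, b, e}) :=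
      IntermediateField.finiteDimensional_adjoin (by
        rintro x (rfl | rfl | rfl)
        exacts [isIntegral_of_isOfFinOrder ha, isIntegral_of_isOfFinOrder hb,
          isIntegral_of_isOfFinOrder he])
    have hsub := IntermediateField.subset_adjoin ℚ ({a, b, e} : Set k)
    exact ⟨IntermediateField.adjoin ℚ {a, b, e}, ⟨⟩, hsub (by simp), hsub (by simp),
      hsub (by simp)⟩
  lift a to F using haF
  lift b to F using hbF
  lift e to F using heF
  have hinj : Function.Injective (F.val : F →* k) := F.val.injective
  refine (orderOf_injective _ hinj e).trans_le (orderOf_le_of_numberField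
    (hinj.isOfFinOrder_iff.1 ha) (hinj.isOfFinOrder_iff.1 hb) (hinj.isOfFinOrder_iff.1 he)
    ?_ ?_ ?_)
  · exact_mod_cast ha1
  · exact_mod_cast hb1
  · exact Subtype.ext h

end RootsOfUnity

/-! ### The Tits alternative for linear groups of rank two -/

section LinearGroups

open Matrix MatrixGroups

theorem SL2_trace_conj {R : Type*} [CommRing R] (x A : SL(2, R)) :
    (MulAut.conj x A).1.trace = A.1.trace := by
  rw [MulAut.conj_apply, mul_assoc, Matrix.SpecialLinearGroup.coe_mul, trace_mul_comm,
    ← Matrix.SpecialLinearGroup.coe_mul, inv_mul_cancel_right]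

variable {k : Type*} [Field k] {Γ : Subgroup SL(2, k)} {A B : SL(2, k)}

theorem SL2_apply_one_one_eq_inv (h : A 1 0 = 0) : A 1 1 = (A 0 0)⁻¹ :=
  eq_inv_of_mul_eq_one_right (SL2_apply_mul_apply_eq_one h)

theorem SL2_sq_eq_one_of_eq (h : A 1 0 = 0) (heq : A 0 0 = A 1 1) : A 0 0 ^ 2 = 1 := by
  rw [pow_two]
  nth_rw 2 [heq]
  exact SL2_apply_mul_apply_eq_one h

/-- All eigenvalues of the matrices in `Γ` are roots of unity. Since the determinant is `1`, the
eigenvalues of `A` are `z` and `z⁻¹` exactly when the trace of `A` is `z + z⁻¹`. -/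
def HasTorsionEigenvalues (Γ : Subgroup SL(2, k)) : Prop :=
  ∀ A ∈ Γ, ∃ z : k, IsOfFinOrder z ∧ A.1.trace = z + z⁻¹

theorem HasTorsionEigenvalues.map_conj (h : HasTorsionEigenvalues Γ) (x : SL(2, k)) :
    HasTorsionEigenvalues (Γ.map (MulAut.conj x).toMonoidHom) := by
  rintro _ ⟨A, hA, rfl⟩
  obtain ⟨z, hz, ht⟩ := h A hA
  exact ⟨z, hz, (SL2_trace_conj x A).trans ht⟩

theorem HasTorsionEigenvalues.isOfFinOrder (h : HasTorsionEigenvalues Γ) (hA : A ∈ Γ)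
    (h10 : A 1 0 = 0) : IsOfFinOrder (A 0 0) := by
  obtain ⟨z, hz, ht⟩ := h A hA
  have hdet := SL2_apply_mul_apply_eq_one h10
  have hroot : (A 0 0 - z) * (A 0 0 - z⁻¹) = 0 := by
    rw [trace_fin_two] at ht
    linear_combination A 0 0 * ht - hdet + mul_inv_cancel₀ hz.isUnit.ne_zero
  obtain h1 | h1 := mul_eq_zero.1 hroot
  · rwa [sub_eq_zero.1 h1]
  · rw [sub_eq_zero.1 h1]
    exact MonoidHom.isOfFinOrder (invMonoidWithZeroHom : k →*₀ k).toMonoidHom hz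

section TorsionOrUnbounded

variable [CharZero k]

theorem titsDichotomy_of_not_isOfFinOrder (hA : A ∈ Γ) (h01 : A 0 1 = 0) (h10 : A 1 0 = 0)
    (h00 : ¬IsOfFinOrder (A 0 0)) : TitsDichotomy Γ := by
  by_cases hB : ∃ B ∈ Γ, ∀ i j, B i j ≠ 0
  · obtain ⟨B, hB, hB0⟩ := hB
    exact .inl (containsNonabelianFree_of_not_isOfFinOrder hA hB h01 h10 h00 hB0)
  · push Not at hB
    exact .inr (isVirtuallySolvable_of_forall_exists_apply_eq_zero hB)

theorem titsDichotomy_or_hasTorsionEigenvalues [IsAlgClosed k] (Γ : Subgroup SL(2, k)) :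
    TitsDichotomy Γ ∨ HasTorsionEigenvalues Γ := by
  by_contra! h
  refine h.2 fun A hA => ?_
  obtain ⟨x, h10, h01⟩ := exists_conj_triangular A
  refine ⟨_, by_contra fun hfin => h.1 (.of_map_conj x ?_), by
    rw [← SL2_trace_conj x, trace_fin_two, SL2_apply_one_one_eq_inv h10]⟩
  have hne : (MulAut.conj x A) 0 0 ≠ (MulAut.conj x A) 1 1 := fun heq =>
    hfin (isOfFinOrder_iff_pow_eq_one.2 ⟨2, two_pos, SL2_sq_eq_one_of_eq h10 heq⟩)
  exact titsDichotomy_of_not_isOfFinOrder (Subgroup.mem_map_of_mem _ hA) (h01 hne) h10 hfin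

end TorsionOrUnbounded

section Unipotent

theorem eq_zero_of_forall_norm_add_nsmul_le {E : Type*} [NormedAddCommGroup E] [NormedSpace ℝ E]
    {t s : E} {C : ℝ} (h : ∀ n : ℕ, ‖t + n • s‖ ≤ C) : s = 0 := by
  have hbound (n : ℕ) : n • ‖s‖ ≤ C + ‖t‖ := by
    rw [← RCLike.norm_nsmul ℝ]
    calc ‖n • s‖ = ‖t + n • s - t‖ := by rw [add_sub_cancel_left]
      _ ≤ ‖t + n • s‖ + ‖t‖ := norm_sub_le _ _
      _ ≤ C + ‖t‖ := by gcongr; exact h n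
  by_contra hs
  obtain ⟨n, hn⟩ := Archimedean.arch (C + ‖t‖ + 1) (norm_pos_iff.2 hs)
  linarith [hbound n]

theorem eq_zero_of_forall_add_nsmul_eq_of_isAlgebraic {F : Type*} [Field F] [Algebra ℚ F]
    [Algebra.IsAlgebraic ℚ F] {t s : F}
    (h : ∀ n : ℕ, ∃ z : F, IsOfFinOrder z ∧ t + n • s = z + z⁻¹) : s = 0 := by
  let φ : F →ₐ[ℚ] ℂ := IsAlgClosed.lift
  refine (map_eq_zero φ).1 (eq_zero_of_forall_norm_add_nsmul_le (t := φ t) (C := 1 + 1) fun n => ?_)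
  obtain ⟨z, hz, hn⟩ := h n
  have hφz : ‖φ z‖ = 1 := (MonoidHom.isOfFinOrder (φ : F →* ℂ) hz).norm_eq_one
  calc ‖φ t + n • φ s‖ = ‖φ z + (φ z)⁻¹‖ := by rw [← map_nsmul, ← map_add, hn, map_add, map_inv₀]
    _ ≤ ‖φ z‖ + ‖(φ z)⁻¹‖ := norm_add_le _ _
    _ = 1 + 1 := by rw [norm_inv, hφz, inv_one]

theorem eq_zero_of_forall_add_nsmul_eq [CharZero k] {t s : k}
    (h : ∀ n : ℕ, ∃ z : k, IsOfFinOrder z ∧ t + n • s = z + z⁻¹) : s = 0 := by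
  have halg {z : k} (hz : IsOfFinOrder z) : z ∈ algebraicClosure ℚ k :=
    mem_algebraicClosure_iff.2 (isIntegral_of_isOfFinOrder hz).isAlgebraic
  have hmem (n : ℕ) : t + n • s ∈ algebraicClosure ℚ k := by
    obtain ⟨z, hz, hn⟩ := h n
    rw [hn]
    exact add_mem (halg hz) (inv_mem (halg hz))
  have ht : t ∈ algebraicClosure ℚ k := by simpa using hmem 0
  have hs : s ∈ algebraicClosure ℚ k := by simpa using sub_mem (hmem 1) ht
  have : Algebra.IsAlgebraic ℚ (algebraicClosure ℚ k) := algebraicClosure.isAlgebraic ℚ k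
  have hzero : (⟨s, hs⟩ : algebraicClosure ℚ k) = 0 := by
    refine eq_zero_of_forall_add_nsmul_eq_of_isAlgebraic (t := ⟨t, ht⟩) fun n => ?_
    obtain ⟨z, hz, hn⟩ := h n
    exact ⟨⟨z, halg hz⟩, Submonoid.isOfFinOrder_coe.1 hz, Subtype.ext hn⟩
  exact congrArg Subtype.val hzero

theorem SL2_pow_two_mul_apply_of_eq (h10 : A 1 0 = 0) (heq : A 0 0 = A 1 1) (n : ℕ) :
    (A ^ (2 * n)) 0 0 = 1 ∧ (A ^ (2 * n)) 0 1 = n • (2 * A 0 0 * A 0 1) ∧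
      (A ^ (2 * n)) 1 0 = 0 ∧ (A ^ (2 * n)) 1 1 = 1 := by
  have hsq := SL2_sq_eq_one_of_eq h10 heq
  induction n with
  | zero => simp
  | succ n ih =>
    obtain ⟨p00, p01, p10, p11⟩ := ih
    simp only [mul_add, mul_one, pow_add, pow_two, SL2_mul_apply, p00, p10, p11, p01, h10, ← heq,
      nsmul_eq_mul]
    refine ⟨?_, ?_, ?_, ?_⟩ <;> push_cast
    · linear_combination hsq
    · linear_combination n * (2 * A 0 0 * A 0 1) * hsq
    · ring
    · linear_combination hsq

theorem HasTorsionEigenvalues.isSolvable [CharZero k] (h : HasTorsionEigenvalues Γ) (hA : A ∈ Γ)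
    (h10 : A 1 0 = 0) (heq : A 0 0 = A 1 1) (h01 : A 0 1 ≠ 0) : Group.IsSolvable Γ := by
  refine isSolvable_of_forall_apply_eq_zero fun B hB => ?_
  have hs : 2 * A 0 0 * A 0 1 * B 1 0 = 0 := by
    refine eq_zero_of_forall_add_nsmul_eq (t := B 0 0 + B 1 1) fun n => ?_
    obtain ⟨z, hz, ht⟩ := h _ (mul_mem (pow_mem hA (2 * n)) hB)
    obtain ⟨p00, p01, p10, p11⟩ := SL2_pow_two_mul_apply_of_eq h10 heq n
    rw [trace_fin_two, SL2_mul_apply, SL2_mul_apply, p00, p10, p11, p01] at ht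
    exact ⟨z, hz, by rw [← ht, smul_mul_assoc]; ring⟩
  have h00 : A 0 0 ≠ 0 := left_ne_zero_of_mul_eq_one (SL2_apply_mul_apply_eq_one h10)
  simpa [h00, h01] using hs

end Unipotent

theorem two_sub_trace_mul_mul_inv_mul_inv (h01 : A 0 1 = 0) (h10 : A 1 0 = 0) :
    2 - (A * B * A⁻¹ * B⁻¹).1.trace = B 0 1 * B 1 0 * (A 0 0 - A 1 1) ^ 2 := by
  obtain ⟨a00, a01, a10, a11⟩ := SL2_inv_apply A
  obtain ⟨b00, b01, b10, b11⟩ := SL2_inv_apply B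
  simp only [trace_fin_two, SL2_mul_apply, a00, a01, a10, a11, b00, b01, b10, b11, h01, h10]
  linear_combination -2 * SL2_det B +
    (2 * B 0 1 * B 1 0 - 2 * B 0 0 * B 1 1) * SL2_apply_mul_apply_eq_one h10

theorem two_sub_trace_mul_mul_mul_inv (h01 : A 0 1 = 0) (h10 : A 1 0 = 0) :
    2 - (A * B * A * B⁻¹).1.trace = -(B 0 0 * B 1 1) * (A 0 0 - A 1 1) ^ 2 := by
  obtain ⟨b00, b01, b10, b11⟩ := SL2_inv_apply B
  simp only [trace_fin_two, SL2_mul_apply, b00, b01, b10, b11, h01, h10]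
  linear_combination -2 * SL2_det B +
    (2 * B 0 1 * B 1 0 - 2 * B 0 0 * B 1 1) * SL2_apply_mul_apply_eq_one h10

/-- The roots of unity which are eigenvalues of `A * B * A⁻¹ * B⁻¹`, of `A * B * A * B⁻¹` and of
`A ^ 2` satisfy the relation of `orderOf_le_of_add_eq`. -/
theorem HasTorsionEigenvalues.orderOf_le [CharZero k] (h : HasTorsionEigenvalues Γ) (hA : A ∈ Γ)
    (hB : B ∈ Γ) (h01 : A 0 1 = 0) (h10 : A 1 0 = 0) (hne : A 0 0 ≠ A 1 1)
    (hB0 : ∀ i j, B i j ≠ 0) : orderOf (A 0 0 ^ 2) ≤ 16 := by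
  obtain ⟨a, ha, hat⟩ := h _ (mul_mem (mul_mem (mul_mem hA hB) (inv_mem hA)) (inv_mem hB))
  obtain ⟨b, hb, hbt⟩ := h _ (mul_mem (mul_mem (mul_mem hA hB) hA) (inv_mem hB))
  have ha2 := two_sub_trace_mul_mul_inv_mul_inv (B := B) h01 h10
  have hb2 := two_sub_trace_mul_mul_mul_inv (B := B) h01 h10
  rw [hat, ← sub_sub] at ha2
  rw [hbt, ← sub_sub] at hb2
  have hsq : (A 0 0 - A 1 1) ^ 2 ≠ 0 := pow_ne_zero 2 (sub_ne_zero.2 hne)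
  have hone : (2 : k) - 1 - 1⁻¹ = 0 := by norm_num
  refine orderOf_le_of_add_eq ha hb ((h.isOfFinOrder hA h10).pow (n := 2)) ?_ ?_ ?_
  · rintro rfl
    exact mul_ne_zero (mul_ne_zero (hB0 0 1) (hB0 1 0)) hsq (ha2.symm.trans hone)
  · rintro rfl
    exact mul_ne_zero (neg_ne_zero.2 (mul_ne_zero (hB0 0 0) (hB0 1 1))) hsq (hb2.symm.trans hone)
  · rw [ha2, hb2, ← inv_pow, ← SL2_apply_one_one_eq_inv h10]
    linear_combination -(A 0 0 - A 1 1) ^ 2 * SL2_det B + 2 * SL2_apply_mul_apply_eq_one h10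

/-- The traces of `C`, `A * C`, `B * C` and `A * B * C` determine `C`. -/
theorem finite_of_finite_trace (hA : A ∈ Γ) (hB : B ∈ Γ) (h01 : A 0 1 = 0) (h10 : A 1 0 = 0)
    (hne : A 0 0 ≠ A 1 1) (hB0 : ∀ i j, B i j ≠ 0)
    (hfin : {t | ∃ C ∈ Γ, C.1.trace = t}.Finite) : Finite Γ := by
  have := hfin.to_subtype
  refine Finite.of_injective (fun (C : Γ) (i : Fin 2 × Fin 2) =>
    (⟨_, A ^ i.1.val * B ^ i.2.val * C,
      mul_mem (mul_mem (pow_mem hA _) (pow_mem hB _)) C.2, rfl⟩ :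
      {t | ∃ C ∈ Γ, C.1.trace = t})) fun C D hCD => Subtype.ext ?_
  have key := fun i => congrArg Subtype.val (congrFun hCD i)
  have e00 := key (0, 0)
  have e10 := key (1, 0)
  have e01 := key (0, 1)
  have e11 := key (1, 1)
  simp only [Fin.val_zero, Fin.val_one, pow_zero, pow_one, one_mul, mul_one, trace_fin_two,
    SL2_mul_apply, h01, h10] at e00 e10 e01 e11
  have hsub := sub_ne_zero.2 hne
  have x00 : C.1 0 0 = D.1 0 0 := mul_left_cancel₀ hsub (by
    linear_combination e10 - A 1 1 * e00)
  have x11 : C.1 1 1 = D.1 1 1 := by linear_combination e00 - x00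
  have x10 : C.1 1 0 = D.1 1 0 := mul_left_cancel₀ (mul_ne_zero hsub (hB0 0 1)) (by
    linear_combination e11 - A 1 1 * e01 - (A 0 0 - A 1 1) * B 0 0 * x00)
  have x01 : C.1 0 1 = D.1 0 1 := mul_left_cancel₀ (hB0 1 0) (by
    linear_combination e01 - B 0 0 * x00 - B 0 1 * x10 - B 1 1 * x11)
  ext i j
  fin_cases i <;> fin_cases j
  exacts [x00, x01, x10, x11]

theorem conj_apply_ne_of_apply_zero_one_ne_zero {x : SL(2, k)} (h10 : (MulAut.conj x A) 1 0 = 0)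
    (h01 : (MulAut.conj x A) 0 1 = 0) (hA : A 0 1 ≠ 0) :
    (MulAut.conj x A) 0 0 ≠ (MulAut.conj x A) 1 1 := by
  intro heq
  generalize hB : MulAut.conj x A = B at h10 h01 heq
  have hcomm : x⁻¹ * B = B * x⁻¹ := by
    ext i j
    simp only [SL2_mul_apply]
    fin_cases i <;> fin_cases j <;> simp [h10, h01, heq, mul_comm]
  have hAB : A = B := by
    rw [← MulAut.inv_apply_self _ (MulAut.conj x) A, hB, MulAut.conj_inv_apply, hcomm,
      inv_mul_cancel_right]
  exact hA (hAB ▸ h01)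

theorem exists_mem_map_conj_forall_apply_ne_zero (hΓ : ¬IsVirtuallySolvable Γ) (x : SL(2, k)) :
    ∃ B ∈ Γ.map (MulAut.conj x).toMonoidHom, ∀ i j, B i j ≠ 0 := by
  by_contra! hzero
  exact hΓ (.of_map_conj x (isVirtuallySolvable_of_forall_exists_apply_eq_zero hzero))

namespace HasTorsionEigenvalues

variable [CharZero k] [IsAlgClosed k]

theorem exists_conj_diagonal (h : HasTorsionEigenvalues Γ) (hΓ : ¬IsVirtuallySolvable Γ)
    (hA : A ∈ Γ) : ∃ x, (MulAut.conj x A) 0 1 = 0 ∧ (MulAut.conj x A) 1 0 = 0 := by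
  obtain ⟨x, h10, h01⟩ := exists_conj_triangular A
  refine ⟨x, by_contra fun h0 => hΓ (.of_map_conj x ?_), h10⟩
  have := (h.map_conj x).isSolvable (Subgroup.mem_map_of_mem _ hA) h10
    (by_contra fun hne => h0 (h01 hne)) h0
  exact .of_isSolvable

theorem exists_pow_eq_one (h : HasTorsionEigenvalues Γ) (hΓ : ¬IsVirtuallySolvable Γ)
    (hA : A ∈ Γ) : ∃ z : k, z ^ (2 * Nat.factorial 16) = 1 ∧ A.1.trace = z + z⁻¹ := by
  obtain ⟨x, h01, h10⟩ := h.exists_conj_diagonal hΓ hA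
  have hxA := Subgroup.mem_map_of_mem (MulAut.conj x).toMonoidHom hA
  refine ⟨(MulAut.conj x A) 0 0, ?_, by
    rw [← SL2_trace_conj x, trace_fin_two, SL2_apply_one_one_eq_inv h10]⟩
  rw [pow_mul]
  obtain heq | hne := eq_or_ne ((MulAut.conj x A) 0 0) ((MulAut.conj x A) 1 1)
  · rw [SL2_sq_eq_one_of_eq h10 heq, one_pow]
  · obtain ⟨B, hB, hB0⟩ := exists_mem_map_conj_forall_apply_ne_zero hΓ x
    have hle := (h.map_conj x).orderOf_le hxA hB h01 h10 hne hB0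
    have hfin := ((h.map_conj x).isOfFinOrder hxA h10).pow (n := 2)
    exact orderOf_dvd_iff_pow_eq_one.1 (Nat.dvd_factorial hfin.orderOf_pos hle)

theorem finite_trace (h : HasTorsionEigenvalues Γ) (hΓ : ¬IsVirtuallySolvable Γ) :
    {t | ∃ A ∈ Γ, A.1.trace = t}.Finite := by
  refine ((Polynomial.nthRootsFinset (2 * Nat.factorial 16) (1 : k)).finite_toSet.image
    fun z => z + z⁻¹).subset ?_
  rintro _ ⟨A, hA, rfl⟩
  obtain ⟨z, hz, ht⟩ := h.exists_pow_eq_one hΓ hA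
  exact ⟨z, (Polynomial.mem_nthRootsFinset (by positivity) 1).2 hz, ht.symm⟩

theorem isVirtuallySolvable (h : HasTorsionEigenvalues Γ) : IsVirtuallySolvable Γ := by
  by_contra hΓ
  obtain ⟨A, hA, hA01⟩ : ∃ A ∈ Γ, A 0 1 ≠ 0 := by
    by_contra! hzero
    exact hΓ (isVirtuallySolvable_of_forall_exists_apply_eq_zero fun A hA => ⟨0, 1, hzero A hA⟩)
  obtain ⟨x, h01, h10⟩ := h.exists_conj_diagonal hΓ hA
  have hΓx : ¬IsVirtuallySolvable (Γ.map (MulAut.conj x).toMonoidHom) := mt (.of_map_conj x) hΓ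
  obtain ⟨B, hB, hB0⟩ := exists_mem_map_conj_forall_apply_ne_zero hΓ x
  have := finite_of_finite_trace (Subgroup.mem_map_of_mem _ hA) hB h01 h10
    (conj_apply_ne_of_apply_zero_one_ne_zero h10 h01 hA01) hB0 ((h.map_conj x).finite_trace hΓx)
  exact hΓx .of_finite

end HasTorsionEigenvalues

theorem strongTitsAlternative_SL2 (k : Type*) [Field k] [CharZero k] [IsAlgClosed k] :
    StrongTitsAlternative SL(2, k) := fun Γ =>
  (titsDichotomy_or_hasTorsionEigenvalues Γ).elim id fun h => .inr h.isVirtuallySolvable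

section GeneralLinear

variable (n R : Type*) [Fintype n] [DecidableEq n] [CommRing R]

/-- The homomorphism sending `(A, c)` to `c • A`; over an algebraically closed field it reduces
the Tits alternative for `GLₙ` to that for `SLₙ`. -/
def scaleHom : SpecialLinearGroup n R × Rˣ →* GL n R :=
  Matrix.SpecialLinearGroup.toGL.noncommCoprod (Matrix.GeneralLinearGroup.scalar n) fun A _ =>
    Units.ext (scalar_commute _ (Commute.all _) A.1).symm.eq

variable {n R}

theorem coe_scaleHom (x : SpecialLinearGroup n R × Rˣ) :
    (scaleHom n R x : Matrix n n R) = (x.2 : R) • x.1.1 := by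
  rw [smul_eq_mul_diagonal]
  rfl

theorem isOfFinOrder_of_scaleHom_eq_one [Nonempty n] {x : SpecialLinearGroup n R × Rˣ}
    (hx : scaleHom n R x = 1) : IsOfFinOrder x := by
  have hsmul : (x.2 : R) • x.1.1 = 1 := by rw [← coe_scaleHom, hx, Units.val_one]
  have hc : (x.2 : R) ^ Fintype.card n = 1 := by
    simpa [det_smul] using congrArg det hsmul
  have hA : x.1.1 ^ Fintype.card n = 1 := by
    simpa [smul_pow, hc] using congrArg (· ^ Fintype.card n) hsmul
  exact isOfFinOrder_iff_pow_eq_one.2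
    ⟨Fintype.card n, Fintype.card_pos, Prod.ext (Subtype.ext hA) (Units.ext hc)⟩

theorem scaleHom_surjective [Nonempty n] {k : Type*} [Field k] [IsAlgClosed k] :
    Function.Surjective (scaleHom n k) := by
  intro B
  obtain ⟨c, hc⟩ := IsAlgClosed.exists_pow_nat_eq B.1.det (Fintype.card_pos (α := n))
  have hc0 : c ≠ 0 := by
    rintro rfl
    exact ((isUnit_iff_isUnit_det _).1 B.isUnit).ne_zero
      (hc.symm.trans (zero_pow Fintype.card_ne_zero))
  refine ⟨(⟨c⁻¹ • B.1, ?_⟩, Units.mk0 c hc0), Units.ext ?_⟩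
  · rw [det_smul, ← hc, ← mul_pow, inv_mul_cancel₀ hc0, one_pow]
  · rw [coe_scaleHom]
    exact smul_inv_smul₀ hc0 B.1

theorem strongTitsAlternative_units_matrix_of_isAlgClosed [Nonempty n] {k : Type*} [Field k]
    [IsAlgClosed k] (h : StrongTitsAlternative (SpecialLinearGroup n k)) :
    StrongTitsAlternative (Matrix n n k)ˣ := by
  refine .of_surjective_of_torsion_ker (scaleHom n k) scaleHom_surjective
    (fun _ => isOfFinOrder_of_scaleHom_eq_one) (h.of_ker (MonoidHom.fst _ _) ?_)
  refine Group.isSolvable_of_comm fun x y => Subtype.ext (Prod.ext ?_ (mul_comm _ _))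
  have hx : x.1.1 = 1 := x.2
  have hy : y.1.1 = 1 := y.2
  simp [hx, hy]

end GeneralLinear

theorem strongTitsAlternative_units_matrix (k : Type*) [Field k] [CharZero k] :
    StrongTitsAlternative (Matrix (Fin 2) (Fin 2) k)ˣ :=
  .of_injective (Units.map (algebraMap k (AlgebraicClosure k)).mapMatrix.toMonoidHom)
    (Units.map_injective (Matrix.map_injective (algebraMap k _).injective))
    (strongTitsAlternative_units_matrix_of_isAlgClosed (strongTitsAlternative_SL2 _))

end LinearGroups

/-- `C = ⟨K ∪ H⟩`, for `k` of characteristic zero, satisfies the strong Tits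
alternative. -/
theorem Cgroup_strongTitsAlternative (k : Type*) [Field k] [CharZero k] :
    StrongTitsAlternative ↥(Cgroup k) :=
  Cgroup_strongTitsAlternative_of_units_matrix k (strongTitsAlternative_units_matrix k)
end

section
/- Let k be a field. The set N of k-algebra automorphisms of k[x1,x2,x3] of the form (a x1 + P(x2,x3), x2, x3), with a ∈ k nonzero and P ∈ k[x2,x3], is a subgroup of the automorphism group of k[x1,x2,x3]; it is solvable of derived length at most 2, and it is a normal subgroup of B' = ⟨B ∪ H⟩. -/
open MvPolynomial

/-- Membership in the subgroup `B`: automorphisms of the form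
`(a x₁ + P(x₂,x₃), b x₂ + c x₃ + d, b' x₂ + c' x₃ + d')` with `a ≠ 0`, `bc' - b'c ≠ 0`. -/
def IsB (k : Type*) [Field k]
    (f : MvPolynomial (Fin 3) k ≃ₐ[k] MvPolynomial (Fin 3) k) : Prop :=
  ∃ (a b c d b' c' d' : k) (P : MvPolynomial (Fin 3) k),
    a ≠ 0 ∧ b * c' - b' * c ≠ 0 ∧ P ∈ supported k ({1, 2} : Set (Fin 3)) ∧
    f (X 0) = C a * X 0 + P ∧
    f (X 1) = C b * X 1 + C c * X 2 + C d ∧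
    f (X 2) = C b' * X 1 + C c' * X 2 + C d'

/-- The subgroup `B' = ⟨B ∪ H⟩`. -/
noncomputable def Bprime (k : Type*) [Field k] :
    Subgroup (MvPolynomial (Fin 3) k ≃ₐ[k] MvPolynomial (Fin 3) k) :=
  Subgroup.closure {f | IsB k f ∨ IsH k f}

/-- The set of automorphisms of the form `(a x₁ + P(x₂,x₃), x₂, x₃)` with `a ≠ 0`. -/
def NSet (k : Type*) [Field k] :
    Set (MvPolynomial (Fin 3) k ≃ₐ[k] MvPolynomial (Fin 3) k) :=
  {f | ∃ (a : k) (P : MvPolynomial (Fin 3) k),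
    a ≠ 0 ∧ P ∈ supported k ({1, 2} : Set (Fin 3)) ∧
    f (X 0) = C a * X 0 + P ∧ f (X 1) = X 1 ∧ f (X 2) = X 2}

/-!
Write `A = k[x₂,x₃]`. Every generator `f` of `B'` maps `A` into `A` and `x₁` to `a x₁ + P` with
`a ≠ 0` and `P ∈ A`. Then `f(A) = A`: a retraction onto `A` killing `f(x₁)` turns `f(p)` into
`f(p(0, x₂, x₃))`. The automorphisms of this kind form a group, and `N` consists of those among
them that fix `A` pointwise; pointwise stabilizers are normalized by setwise ones, so `N` is normal
in this group, hence in `B'`. Two elements of `N` commute modulo `A` when applied to `x₁`, because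
both products multiply `x₁` by the same scalar; hence commutators are translations
`x₁ ↦ x₁ + P`, and translations commute with each other.
-/

theorem derivedSeries_two_eq_bot_of_commutator_le {G : Type*} [Group G] {H T : Subgroup G}
    (hH : ⁅H, H⁆ ≤ T) (hT : T ≤ Subgroup.centralizer T) : derivedSeries H 2 = ⊥ := by
  rw [← Subgroup.map_eq_bot_iff_of_injective _ H.subtype_injective, eq_bot_iff,
    ← Subgroup.commutator_eq_bot_iff_le_centralizer.2 hT, derivedSeries_succ, derivedSeries_one,
    Subgroup.map_commutator, Subgroup.map_subtype_commutator]
  exact Subgroup.commutator_mono hH hH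

section RelativeAutomorphisms

open scoped Pointwise commutatorElement

variable {R S : Type*} [CommRing R] [Ring S] [Algebra R S] (A : Subalgebra R S) (x : S)

/-- The automorphisms `f` of the `R`-algebra `S` that preserve the subalgebra `A` and send `x` to
`a x + P` for some unit `a` of `R` and some `P ∈ A`. For `S = A[x]` these are the triangular
automorphisms relative to `A`. -/
def triangularSubgroup : Subgroup (S ≃ₐ[R] S) where
  carrier := {f | f ∈ MulAction.stabilizer (S ≃ₐ[R] S) (A : Set S) ∧
    ∃ a : Rˣ, f x - (a : R) • x ∈ A}
  one_mem' := ⟨one_mem _, 1, by simp⟩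
  mul_mem' := by
    rintro f g ⟨hf, a, hfx⟩ ⟨hg, b, hgx⟩
    refine ⟨mul_mem hf hg, b * a, ?_⟩
    have expand : (f * g) x - ((b * a : Rˣ) : R) • x =
        f (g x - (b : R) • x) + (b : R) • (f x - (a : R) • x) := by
      simp [mul_smul, smul_sub]
    rw [expand]
    exact add_mem ((MulAction.mem_stabilizer_set.1 hf _).2 hgx) (A.smul_mem hfx _)
  inv_mem' := by
    rintro f ⟨hf, a, hfx⟩
    refine ⟨inv_mem hf, a⁻¹, ?_⟩
    have expand : f⁻¹ x - ((a⁻¹ : Rˣ) : R) • x = -((a⁻¹ : Rˣ) : R) • f⁻¹ (f x - (a : R) • x) := by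
      simp [smul_sub, smul_smul, neg_add_eq_sub]
    rw [expand]
    exact A.smul_mem ((MulAction.mem_stabilizer_set.1 (inv_mem hf) _).2 hfx) _

/-- The automorphisms `f` that fix the subalgebra `A` pointwise and send `x` to `a x + P` for some
unit `a` of `R` and some `P ∈ A`. -/
def affineSubgroup : Subgroup (S ≃ₐ[R] S) :=
  fixingSubgroup (S ≃ₐ[R] S) (A : Set S) ⊓ triangularSubgroup A x

/-- The automorphisms `f` that fix the subalgebra `A` pointwise and send `x` to `x + P` for some
`P ∈ A`. -/
def translationSubgroup : Subgroup (S ≃ₐ[R] S) where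
  carrier := {f | f ∈ fixingSubgroup (S ≃ₐ[R] S) (A : Set S) ∧ f x - x ∈ A}
  one_mem' := ⟨one_mem _, by simp⟩
  mul_mem' := by
    rintro f g ⟨hf, hfx⟩ ⟨hg, hgx⟩
    have hfg : f (g x - x) = g x - x := (mem_fixingSubgroup_iff _).1 hf _ hgx
    refine ⟨mul_mem hf hg, ?_⟩
    rw [AlgEquiv.mul_apply, ← sub_add_sub_cancel _ (f x), ← map_sub, hfg]
    exact add_mem hgx hfx
  inv_mem' := by
    rintro f ⟨hf, hfx⟩
    have hfA := inv_mem hf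
    have hinv : f⁻¹ (f x - x) = f x - x := (mem_fixingSubgroup_iff _).1 hfA _ hfx
    have hx : f⁻¹ (f x) = x := f.symm_apply_apply x
    rw [map_sub, hx] at hinv
    refine ⟨hfA, ?_⟩
    rw [← neg_sub, hinv]
    exact neg_mem hfx

variable {A x}

theorem conj_mem_affineSubgroup {g n : S ≃ₐ[R] S} (hg : g ∈ triangularSubgroup A x)
    (hn : n ∈ affineSubgroup A x) : g * n * g⁻¹ ∈ affineSubgroup A x :=
  Subgroup.mem_inf.2 ⟨Set.conj_mem_fixingSubgroup hg.1 hn.1, mul_mem (mul_mem hg hn.2) (inv_mem hg)⟩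

theorem mul_apply_sub_mul_apply_mem {f g : S ≃ₐ[R] S} (hf : f ∈ affineSubgroup A x)
    (hg : g ∈ affineSubgroup A x) : (f * g) x - (g * f) x ∈ A := by
  obtain ⟨hfA, -, a, hfx⟩ := hf
  obtain ⟨hgA, -, b, hgx⟩ := hg
  have hfP : f (g x - (b : R) • x) = g x - (b : R) • x := (mem_fixingSubgroup_iff _).1 hfA _ hgx
  have hgP : g (f x - (a : R) • x) = f x - (a : R) • x := (mem_fixingSubgroup_iff _).1 hgA _ hfx
  have expand : (f * g) x - (g * f) x =
      (b : R) • (f x - (a : R) • x) - (a : R) • (g x - (b : R) • x)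
        + (f (g x - (b : R) • x) - g (f x - (a : R) • x)) := by
    simp only [AlgEquiv.mul_apply, map_sub, map_smul, smul_sub, smul_comm (a : R) (b : R) x]
    abel
  rw [expand, hfP, hgP]
  exact add_mem (sub_mem (A.smul_mem hfx _) (A.smul_mem hgx _)) (sub_mem hgx hfx)

theorem inv_mul_mem_translationSubgroup {f g : S ≃ₐ[R] S}
    (hf : f ∈ fixingSubgroup (S ≃ₐ[R] S) (A : Set S))
    (hg : g ∈ fixingSubgroup (S ≃ₐ[R] S) (A : Set S)) (hgf : g x - f x ∈ A) :
    f⁻¹ * g ∈ translationSubgroup A x := by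
  have hfA := inv_mem hf
  have hfix : f⁻¹ (g x - f x) = g x - f x := (mem_fixingSubgroup_iff _).1 hfA _ hgf
  have hx : f⁻¹ (f x) = x := f.symm_apply_apply x
  rw [map_sub, hx] at hfix
  refine ⟨mul_mem hfA hg, ?_⟩
  rwa [AlgEquiv.mul_apply, hfix]

theorem commutator_affineSubgroup_le :
    ⁅affineSubgroup A x, affineSubgroup A x⁆ ≤ translationSubgroup A x := by
  rw [Subgroup.commutator_le]
  intro f hf g hg
  have hf' := inv_mem hf
  have hg' := inv_mem hg
  have hcomm : ⁅f, g⁆ = (g⁻¹ * f⁻¹)⁻¹ * (f⁻¹ * g⁻¹) := by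
    rw [commutatorElement_def]
    group
  rw [hcomm]
  exact inv_mul_mem_translationSubgroup (mul_mem hg' hf').1 (mul_mem hf' hg').1
    (mul_apply_sub_mul_apply_mem hf' hg')

theorem translationSubgroup_le_centralizer (hA : Algebra.adjoin R (insert x (A : Set S)) = ⊤) :
    translationSubgroup A x ≤ Subgroup.centralizer (translationSubgroup A x) := by
  rintro f ⟨hf, hfx⟩ g ⟨hg, hgx⟩
  rw [mem_fixingSubgroup_iff] at hf hg
  have hfP : f (g x - x) = g x - x := hf _ hgx
  have hgP : g (f x - x) = f x - x := hg _ hfx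
  refine AlgEquiv.coe_toAlgHom_injective (AlgHom.ext_of_adjoin_eq_top hA ?_)
  rintro y (rfl | hy)
  · change g (f y) = f (g y)
    rw [map_sub, sub_eq_iff_eq_add] at hfP hgP
    rw [hfP, hgP]
    abel
  · change g (f y) = f (g y)
    have hfy : f y = y := hf y hy
    have hgy : g y = y := hg y hy
    rw [hfy, hgy, hfy]

theorem derivedSeries_two_affineSubgroup_eq_bot (hA : Algebra.adjoin R (insert x (A : Set S)) = ⊤) :
    derivedSeries (affineSubgroup A x) 2 = ⊥ :=
  derivedSeries_two_eq_bot_of_commutator_le commutator_affineSubgroup_le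
    (translationSubgroup_le_centralizer hA)

end RelativeAutomorphisms

section SupportedPolynomials

variable {σ R : Type*} [CommSemiring R] {i : σ} {s : Set σ}

theorem X_mem_supported_of_mem {j : σ} (hj : j ∈ s) : (X j : MvPolynomial σ R) ∈ supported R s :=
  Algebra.subset_adjoin ⟨j, hj, rfl⟩

theorem C_mul_X_mem_supported {j : σ} (hj : j ∈ s) (c : R) : C c * X j ∈ supported R s :=
  mul_mem (Subalgebra.algebraMap_mem _ c) (X_mem_supported_of_mem hj)

theorem eqOn_supported {S : Type*} [Semiring S] [Algebra R S] {φ ψ : MvPolynomial σ R →ₐ[R] S}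
    (h : ∀ j ∈ s, φ (X j) = ψ (X j)) : Set.EqOn φ ψ (supported R s) :=
  AlgHom.eqOn_adjoin_iff.2 (by rintro _ ⟨j, hj, rfl⟩; exact h j hj)

theorem adjoin_insert_X_supported_compl :
    Algebra.adjoin R (insert (X i) (supported R ({i}ᶜ : Set σ) : Set (MvPolynomial σ R))) = ⊤ := by
  rw [← top_le_iff, ← adjoin_range_X]
  refine Algebra.adjoin_mono (Set.range_subset_iff.2 fun j => ?_)
  obtain rfl | hj := eq_or_ne j i
  exacts [Or.inl rfl, Or.inr (X_mem_supported_of_mem hj)]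

theorem aeval_mem_of_forall_mem {S : Type*} [CommSemiring S] [Algebra R S] {A : Subalgebra R S}
    {g : σ → S} (hg : ∀ j, g j ∈ A) (p : MvPolynomial σ R) : aeval g p ∈ A := by
  have hrange : (aeval g).range ≤ A := by
    rw [aeval_range]
    exact Algebra.adjoin_le (Set.range_subset_iff.2 hg)
  exact hrange ⟨p, rfl⟩

theorem aeval_update_X_eq_self [DecidableEq σ] (q : MvPolynomial σ R) {p : MvPolynomial σ R}
    (hp : p ∈ supported R ({i}ᶜ : Set σ)) : aeval (Function.update X i q) p = p :=
  eqOn_supported (ψ := AlgHom.id R _)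
    (fun j hj => by rw [aeval_X, Function.update_of_ne hj, AlgHom.id_apply]) hp

theorem aeval_update_X_mem_supported_compl [DecidableEq σ] {q : MvPolynomial σ R}
    (hq : q ∈ supported R ({i}ᶜ : Set σ)) (p : MvPolynomial σ R) :
    aeval (Function.update X i q) p ∈ supported R ({i}ᶜ : Set σ) := by
  refine aeval_mem_of_forall_mem (fun j => ?_) p
  obtain rfl | hj := eq_or_ne j i
  · rwa [Function.update_self]
  · rw [Function.update_of_ne hj]
    exact X_mem_supported_of_mem hj

end SupportedPolynomials

section PolynomialAutomorphisms

variable {σ R : Type*} [CommRing R] {i : σ}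

/- The substitution on the left is the retraction onto `R[xⱼ : j ≠ i]` that kills `f xᵢ`. -/
theorem aeval_update_X_apply [DecidableEq σ] {f : MvPolynomial σ R →ₐ[R] MvPolynomial σ R}
    {a : Rˣ} {P : MvPolynomial σ R} (hP : P ∈ supported R ({i}ᶜ : Set σ))
    (hi : f (X i) = C (a : R) * X i + P)
    (hj : ∀ j ≠ i, f (X j) ∈ supported R ({i}ᶜ : Set σ)) (p : MvPolynomial σ R) :
    aeval (Function.update X i (-(C ((a⁻¹ : Rˣ) : R) * P))) (f p) =
      f (aeval (Function.update X i 0) p) := by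
  set ε := aeval (R := R) (Function.update X i (-(C ((a⁻¹ : Rˣ) : R) * P)))
  have on_X : ε.comp f = f.comp (aeval (Function.update X i 0)) := by
    refine algHom_ext fun j => ?_
    obtain rfl | hji := eq_or_ne j i
    · have hεP : ε P = P := aeval_update_X_eq_self _ hP
      have hεC : ε (C (a : R)) = C (a : R) := ε.commutes _
      have hεX : ε (X j) = -(C ((a⁻¹ : Rˣ) : R) * P) := by simp [ε]
      simp [hi, hεP, hεC, hεX, ← mul_assoc, ← C_mul, -algHom_C]
    · simp only [AlgHom.comp_apply, aeval_X, Function.update_of_ne hji]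
      exact aeval_update_X_eq_self _ (hj j hji)
  exact DFunLike.congr_fun on_X p

theorem apply_mem_supported_compl_iff {f : MvPolynomial σ R →ₐ[R] MvPolynomial σ R}
    (hf : Function.Injective f) {a : Rˣ} {P : MvPolynomial σ R}
    (hP : P ∈ supported R ({i}ᶜ : Set σ)) (hi : f (X i) = C (a : R) * X i + P)
    (hj : ∀ j ≠ i, f (X j) ∈ supported R ({i}ᶜ : Set σ)) (p : MvPolynomial σ R) :
    f p ∈ supported R ({i}ᶜ : Set σ) ↔ p ∈ supported R ({i}ᶜ : Set σ) := by
  classical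
  have intertwine := aeval_update_X_apply hP hi hj p
  constructor <;> intro hp
  · rw [aeval_update_X_eq_self _ hp] at intertwine
    rw [hf intertwine]
    exact aeval_update_X_mem_supported_compl (zero_mem _) p
  · rw [aeval_update_X_eq_self 0 hp] at intertwine
    rw [← intertwine]
    exact aeval_update_X_mem_supported_compl
      (neg_mem (mul_mem (Subalgebra.algebraMap_mem _ _) hP)) (f p)

theorem mem_triangularSubgroup_of_apply_X {f : MvPolynomial σ R ≃ₐ[R] MvPolynomial σ R}
    {a : R} {P : MvPolynomial σ R} (ha : IsUnit a) (hP : P ∈ supported R ({i}ᶜ : Set σ))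
    (hi : f (X i) = C a * X i + P) (hj : ∀ j ≠ i, f (X j) ∈ supported R ({i}ᶜ : Set σ)) :
    f ∈ triangularSubgroup (supported R ({i}ᶜ : Set σ)) (X i) := by
  obtain ⟨a, rfl⟩ := ha
  refine ⟨MulAction.mem_stabilizer_set.2 <|
    apply_mem_supported_compl_iff (f := f) f.injective hP hi hj, a, ?_⟩
  rwa [hi, smul_eq_C_mul, add_sub_cancel_left]

theorem mem_affineSubgroup_supported_compl_iff {f : MvPolynomial σ R ≃ₐ[R] MvPolynomial σ R} :
    f ∈ affineSubgroup (supported R ({i}ᶜ : Set σ)) (X i) ↔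
      ∃ (a : R) (P : MvPolynomial σ R), IsUnit a ∧ P ∈ supported R ({i}ᶜ : Set σ) ∧
        f (X i) = C a * X i + P ∧ ∀ j ≠ i, f (X j) = X j := by
  constructor
  · rintro ⟨hfix, -, a, hfx⟩
    refine ⟨a, _, a.isUnit, hfx, by rw [smul_eq_C_mul, add_sub_cancel], fun j hj => ?_⟩
    exact (mem_fixingSubgroup_iff _).1 hfix _ (X_mem_supported_of_mem hj)
  · rintro ⟨a, P, ha, hP, hi, hj⟩
    refine ⟨(mem_fixingSubgroup_iff _).2 fun p hp => ?_,
      mem_triangularSubgroup_of_apply_X ha hP hi fun j hji => ?_⟩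
    · exact eqOn_supported (φ := f) (ψ := AlgHom.id R _) hj hp
    · exact (hj j hji).symm ▸ X_mem_supported_of_mem hji

end PolynomialAutomorphisms

section ThreeVariables

variable {k : Type*} [Field k] {f : MvPolynomial (Fin 3) k ≃ₐ[k] MvPolynomial (Fin 3) k}

theorem one_two_eq_compl_zero : ({1, 2} : Set (Fin 3)) = {0}ᶜ := by
  ext j
  fin_cases j <;> simp

theorem forall_ne_zero_fin_three {p : Fin 3 → Prop} : (∀ j ≠ 0, p j) ↔ p 1 ∧ p 2 := by
  simp [Fin.forall_fin_succ]

theorem IsB.mem_triangularSubgroup (hf : IsB k f) :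
    f ∈ triangularSubgroup (supported k {0}ᶜ) (X 0) := by
  obtain ⟨a, b, c, d, b', c', d', P, ha, -, hP, h0, h1, h2⟩ := hf
  have linear_mem (r s t : k) :
      C r * X 1 + C s * X 2 + C t ∈ supported k ({0}ᶜ : Set (Fin 3)) :=
    add_mem (add_mem (C_mul_X_mem_supported (by simp) r) (C_mul_X_mem_supported (by simp) s))
      (Subalgebra.algebraMap_mem _ t)
  rw [one_two_eq_compl_zero] at hP
  exact mem_triangularSubgroup_of_apply_X ha.isUnit hP h0 <|
    forall_ne_zero_fin_three.2 ⟨h1 ▸ linear_mem b c d, h2 ▸ linear_mem b' c' d'⟩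

theorem IsH.mem_triangularSubgroup (hf : IsH k f) :
    f ∈ triangularSubgroup (supported k {0}ᶜ) (X 0) := by
  obtain ⟨a, b, c, d, P₁, P₂, ha, -, -, hP₁, hP₂, h0, h1, h2⟩ := hf
  rw [one_two_eq_compl_zero] at hP₁
  refine mem_triangularSubgroup_of_apply_X ha.isUnit hP₁ h0 (forall_ne_zero_fin_three.2 ⟨?_, ?_⟩)
  · rw [h1]
    exact add_mem (C_mul_X_mem_supported (by simp) b) (supported_mono (by simp) hP₂)
  · rw [h2]
    exact add_mem (C_mul_X_mem_supported (by simp) c) (Subalgebra.algebraMap_mem _ d)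

theorem Bprime_le_triangularSubgroup :
    Bprime k ≤ triangularSubgroup (supported k {0}ᶜ) (X 0) :=
  (Subgroup.closure_le _).2 fun _ hf =>
    hf.elim IsB.mem_triangularSubgroup IsH.mem_triangularSubgroup

theorem coe_affineSubgroup_eq_NSet :
    (affineSubgroup (supported k ({0}ᶜ : Set (Fin 3))) (X 0) : Set (_ ≃ₐ[k] _)) = NSet k := by
  ext f
  simp only [SetLike.mem_coe, mem_affineSubgroup_supported_compl_iff, NSet, Set.mem_ofPred_eq,
    isUnit_iff_ne_zero, one_two_eq_compl_zero, forall_ne_zero_fin_three]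

theorem NSet_subset_Bprime : NSet k ⊆ Bprime k := by
  rintro f ⟨a, P, ha, hP, h0, h1, h2⟩
  exact Subgroup.subset_closure
    (Or.inl ⟨a, 1, 0, 0, 0, 1, 0, P, ha, by simp, hP, h0, by simp [h1], by simp [h2]⟩)

end ThreeVariables

/-- The set `N` of automorphisms `(a x₁ + P(x₂,x₃), x₂, x₃)` is a subgroup of the
automorphism group of `k[x₁,x₂,x₃]`; it is solvable of derived length at most `2`, and
it is a normal subgroup of `B' = ⟨B ∪ H⟩`. -/
theorem NSet_subgroup_solvable_normal (k : Type*) [Field k] :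
    ∃ N : Subgroup (MvPolynomial (Fin 3) k ≃ₐ[k] MvPolynomial (Fin 3) k),
      (N : Set (MvPolynomial (Fin 3) k ≃ₐ[k] MvPolynomial (Fin 3) k)) = NSet k ∧
      derivedSeries ↥N 2 = ⊥ ∧
      N ≤ Bprime k ∧
      ∀ g ∈ Bprime k, ∀ n ∈ N, g * n * g⁻¹ ∈ N := by
  refine ⟨affineSubgroup (supported k {0}ᶜ) (X 0), coe_affineSubgroup_eq_NSet,
    derivedSeries_two_affineSubgroup_eq_bot adjoin_insert_X_supported_compl, ?_,
    fun g hg n hn => conj_mem_affineSubgroup (Bprime_le_triangularSubgroup hg) hn⟩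
  rw [← SetLike.coe_subset_coe, coe_affineSubgroup_eq_NSet]
  exact NSet_subset_Bprime
end
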